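/- arXiv:1802.03534 — 8 statements merged into one kernel-verified Lean document; each statement's English description precedes it below -/
import Mathlib

section
/- Let q > 2 be a prime power. Every linear code over GF(q) with parameters [q²+1, 4, q²−q] has exactly two nonzero weights, namely q²−q and q², and its weight enumerator is 1 + (q²−q)(q²+1)·z^{q²−q} + (q−1)(q²+1)·z^{q²}; that is, it has exactly (q²−q)(q²+1) codewords of Hamming weight q²−q, exactly (q−1)(q²+1) codewords of Hamming weight q², and no other nonzero codewords. -/
open Classical in
/-- The finite set of elements of a subspace. -/
noncomputable def fsub {F : Type} [Field F] [Fintype F] {n : ℕ}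
    (U : Submodule F (Fin n → F)) : Finset (Fin n → F) :=
  Finset.univ.filter (fun c => c ∈ U)

/-- The subspace of words vanishing at coordinate `i`. -/
def vanish {F : Type} [Field F] {n : ℕ}
    (U : Submodule F (Fin n → F)) (i : Fin n) : Submodule F (Fin n → F) :=
  U ⊓ LinearMap.ker (LinearMap.proj (R := F) (φ := fun _ : Fin n => F) i)

/-- Number of zero coordinates, as an integer. -/
def zeros {F : Type} [Field F] [DecidableEq F] {n : ℕ} (c : Fin n → F) : ℤ :=
  ∑ i, if c i = 0 then 1 else 0

section
set_option linter.unusedSectionVars false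
variable {F : Type} [Field F] [Fintype F] [DecidableEq F] {n : ℕ}

lemma mem_fsub (U : Submodule F (Fin n → F)) (c : Fin n → F) : c ∈ fsub U ↔ c ∈ U := by
  simp [fsub]

lemma mem_vanish (U : Submodule F (Fin n → F)) (i : Fin n) (c : Fin n → F) :
    c ∈ vanish U i ↔ c ∈ U ∧ c i = 0 := by
  simp [vanish, Submodule.mem_inf]

lemma vanish_vanish (U : Submodule F (Fin n → F)) (i j : Fin n) (h : vanish U i = U) :
    vanish (vanish U j) i = vanish U j := by
  ext c
  have := mem_vanish U i c
  rw [h] at this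
  simp only [mem_vanish]
  tauto

lemma vanish_self (U : Submodule F (Fin n → F)) (i : Fin n) :
    vanish (vanish U i) i = vanish U i := by
  ext c; simp only [mem_vanish]; tauto

lemma fsub_vanish (U : Submodule F (Fin n → F)) (i : Fin n) :
    fsub (vanish U i) = (fsub U).filter (fun c => c i = 0) := by
  ext c; simp [mem_fsub, mem_vanish]

lemma card_fsub (U : Submodule F (Fin n → F)) :
    (fsub U).card = Fintype.card F ^ Module.finrank F U := by
  classical
  rw [← Module.card_eq_pow_finrank (K := F) (V := U)]
  rw [Fintype.card_subtype]
  rfl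

lemma finrank_vanish (U : Submodule F (Fin n → F)) (i : Fin n) :
    Module.finrank F U ≤ Module.finrank F (vanish U i) + 1 := by
  let f : U →ₗ[F] F := (LinearMap.proj (R := F) (φ := fun _ : Fin n => F) i).comp U.subtype
  have h1 := LinearMap.finrank_range_add_finrank_ker f
  have h2 : Module.finrank F (LinearMap.range f) ≤ 1 := by
    have := Submodule.finrank_le (LinearMap.range f)
    simpa using this
  have h3 : Module.finrank F (LinearMap.ker f) ≤ Module.finrank F (vanish U i) := by
    have : (LinearMap.ker f).map U.subtype ≤ vanish U i := by
      rintro _ ⟨x, hx, rfl⟩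
      rw [mem_vanish]
      exact ⟨x.2, hx⟩
    have h4 := Submodule.finrank_mono this
    rwa [Submodule.finrank_map_subtype_eq] at h4
  omega

lemma sum_zeros (U : Submodule F (Fin n → F)) (g : (Fin n → F) → ℤ) :
    ∑ c ∈ fsub U, g c * zeros c = ∑ k, ∑ c ∈ fsub (vanish U k), g c := by
  simp only [zeros, Finset.mul_sum, fsub_vanish]
  rw [Finset.sum_comm]
  refine Finset.sum_congr rfl fun k _ => ?_
  rw [Finset.sum_filter]
  exact Finset.sum_congr rfl fun c _ => by split_ifs <;> simp

lemma zeros_add (c : Fin n → F) : zeros c + (hammingNorm c : ℤ) = n := by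
  have h : zeros c = ((Finset.univ.filter (fun i => c i = 0)).card : ℤ) := by
    simp [zeros]
  rw [h, hammingNorm, ← Nat.cast_add, Finset.card_filter_add_card_filter_not]
  simp

lemma zeros_nonneg (c : Fin n → F) : 0 ≤ zeros c :=
  Finset.sum_nonneg fun i _ => by split_ifs <;> simp

lemma zeros_zero : zeros (0 : Fin n → F) = n := by
  simp [zeros]

/-- Three distinct coordinates cannot vanish on a subspace of dimension at least two. -/
lemma no_three {q : ℕ} (hF : Fintype.card F = q) (hq : 2 < q) (hn : n = q ^ 2 + 1)
    (U : Submodule F (Fin n → F))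
    (hU : ∀ c ∈ U, c ≠ 0 → zeros c ≤ q + 1)
    (s : Finset (Fin n)) (hs : s.card = 3) (hv : ∀ i ∈ s, vanish U i = U) :
    Module.finrank F U ≤ 1 := by
  by_contra hcon
  obtain ⟨d, hd⟩ : ∃ d, Module.finrank F U = d + 2 := ⟨Module.finrank F U - 2, by omega⟩
  obtain ⟨Q, hQ⟩ : ∃ Q : ℤ, Q = (q : ℤ) ^ (d + 1) := ⟨_, rfl⟩
  have hq' : (3 : ℤ) ≤ q := by exact_mod_cast hq
  have hQq : (q : ℤ) ≤ Q := by
    rw [hQ]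
    exact le_self_pow₀ (by linarith) (by omega)
  have hcU : ((fsub U).card : ℤ) = q * Q := by
    rw [card_fsub, hF, hd, hQ]; push_cast; ring
  have hk : ∀ k, Q ≤ ((fsub (vanish U k)).card : ℤ) := by
    intro k
    rw [card_fsub, hF, hQ]
    have := finrank_vanish U k
    push_cast
    exact pow_le_pow_right₀ (by linarith) (by omega)
  have h1 := sum_zeros U (fun _ => 1)
  simp only [one_mul, Finset.sum_const, nsmul_eq_mul, mul_one] at h1
  have hlow : 3 * (q * Q) + ((q : ℤ) ^ 2 - 2) * Q ≤ ∑ k, ((fsub (vanish U k)).card : ℤ) := by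
    rw [← Finset.sum_add_sum_compl s]
    have a1 : ∑ k ∈ s, ((fsub (vanish U k)).card : ℤ) = 3 * (q * Q) := by
      rw [Finset.sum_congr rfl (fun i hi => by rw [hv i hi, hcU])]
      simp [hs]
    have a2 : ((sᶜ).card : ℤ) * Q ≤ ∑ k ∈ sᶜ, ((fsub (vanish U k)).card : ℤ) := by
      rw [← nsmul_eq_mul]
      exact Finset.card_nsmul_le_sum _ _ _ fun k _ => hk k
    have a3 : ((sᶜ).card : ℤ) = (q : ℤ) ^ 2 - 2 := by
      have := Finset.card_add_card_compl s
      rw [hs, Fintype.card_fin] at this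
      replace this := this.trans hn
      have : (3 : ℤ) + (sᶜ).card = q ^ 2 + 1 := by exact_mod_cast this
      linarith
    rw [a3] at a2
    linarith
  have h0 : (0 : Fin n → F) ∈ fsub U := by rw [mem_fsub]; exact U.zero_mem
  have hup : ∑ c ∈ fsub U, zeros c ≤ (q ^ 2 + 1) + (q * Q - 1) * (q + 1) := by
    rw [← Finset.add_sum_erase _ _ h0, zeros_zero]
    have b1 : ∑ c ∈ (fsub U).erase 0, zeros c ≤ ((fsub U).erase 0).card • ((q : ℤ) + 1) :=
      Finset.sum_le_card_nsmul _ _ _ fun c hc => by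
        rw [Finset.mem_erase, mem_fsub] at hc
        exact hU c hc.2 hc.1
    have b2 : (((fsub U).erase 0).card : ℤ) = q * Q - 1 := by
      have := Finset.card_erase_add_one h0
      rw [← hcU, ← this]; push_cast; ring
    rw [nsmul_eq_mul, b2] at b1
    have b3 : (n : ℤ) = q ^ 2 + 1 := by exact_mod_cast hn
    linarith
  nlinarith
end

/-- Any linear code over GF(q), q > 2 a prime power, with parameters
[q²+1, 4, q²−q] has exactly (q²−q)(q²+1) codewords of weight q²−q,
exactly (q−1)(q²+1) codewords of weight q², and no other nonzero codewords. -/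
theorem ovoid_code_weight_enumerator {q : ℕ} (F : Type) [Field F] [Fintype F] [DecidableEq F]
    (hF : Fintype.card F = q) (hq : 2 < q)
    (C : Submodule F (Fin (q ^ 2 + 1) → F))
    (hdim : Module.finrank F C = 4)
    (hlb : ∀ c ∈ C, c ≠ 0 → q ^ 2 - q ≤ hammingNorm c)
    (hex : ∃ c ∈ C, c ≠ 0 ∧ hammingNorm c = q ^ 2 - q) :
    {c : Fin (q ^ 2 + 1) → F | c ∈ C ∧ hammingNorm c = q ^ 2 - q}.ncard
        = (q ^ 2 - q) * (q ^ 2 + 1) ∧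
    {c : Fin (q ^ 2 + 1) → F | c ∈ C ∧ hammingNorm c = q ^ 2}.ncard
        = (q - 1) * (q ^ 2 + 1) ∧
    ∀ c ∈ C, c ≠ 0 → hammingNorm c = q ^ 2 - q ∨ hammingNorm c = q ^ 2 := by
  have hqq : q ≤ q ^ 2 := by nlinarith
  have hq' : (3 : ℤ) ≤ q := by exact_mod_cast hq
  have hsub : ((q ^ 2 - q : ℕ) : ℤ) = (q : ℤ) ^ 2 - q := by push_cast [Nat.cast_sub hqq]; ring
  have hz : ∀ c : Fin (q ^ 2 + 1) → F, zeros c + (hammingNorm c : ℤ) = (q : ℤ) ^ 2 + 1 := by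
    intro c; rw [zeros_add]; push_cast; ring
  have hle : ∀ c ∈ C, c ≠ 0 → zeros c ≤ q + 1 := by
    intro c hc h0
    have h1 : ((q ^ 2 - q : ℕ) : ℤ) ≤ hammingNorm c := by exact_mod_cast hlb c hc h0
    have := hz c
    rw [hsub] at h1
    linarith
  -- dimensions
  have hsubs : ∀ i, vanish C i ≤ C := fun i => inf_le_left
  have dims : ∀ i j k : Fin (q ^ 2 + 1), i ≠ j → i ≠ k → j ≠ k →
      Module.finrank F (vanish C i) = 3 ∧ Module.finrank F (vanish (vanish C i) j) = 2 ∧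
      Module.finrank F (vanish (vanish (vanish C i) j) k) = 1 := by
    intro i j k hij hik hjk
    have e1 := finrank_vanish C i
    have e2 := finrank_vanish (vanish C i) j
    have e3 := finrank_vanish (vanish (vanish C i) j) k
    have e4 : Module.finrank F (vanish (vanish (vanish C i) j) k) ≤ 1 := by
      refine no_three hF hq rfl _ ?_ {i, j, k} (by simp [hij, hik, hjk]) ?_
      · intro c hc
        simp only [mem_vanish] at hc
        exact hle c hc.1.1.1
      · intro l hl
        simp only [Finset.mem_insert, Finset.mem_singleton] at hl
        ext c
        simp only [mem_vanish]
        rcases hl with rfl | rfl | rfl <;> tauto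
    omega
  have third : ∀ i j : Fin (q ^ 2 + 1), ∃ k, i ≠ k ∧ j ≠ k := by
    intro i j
    have hc : ({i, j} : Finset (Fin (q ^ 2 + 1))).card < Fintype.card (Fin (q ^ 2 + 1)) := by
      have := Finset.card_le_two (a := i) (b := j)
      rw [Fintype.card_fin]
      nlinarith
    obtain ⟨k, -, hk⟩ := Finset.exists_mem_notMem_of_card_lt_card (t := Finset.univ) hc
    simp only [Finset.mem_insert, Finset.mem_singleton, not_or] at hk
    exact ⟨k, fun h => hk.1 h.symm, fun h => hk.2 h.symm⟩
  have cardC : ((fsub C).card : ℤ) = q ^ 4 := by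
    rw [card_fsub, hF, hdim]; push_cast; ring
  have card1 : ∀ i, ((fsub (vanish C i)).card : ℤ) = q ^ 3 := by
    intro i
    obtain ⟨j, hj, -⟩ := third i i
    obtain ⟨k, hk1, hk2⟩ := third i j
    rw [card_fsub, hF, (dims i j k hj hk1 hk2).1]; push_cast; ring
  have card2 : ∀ i j, i ≠ j → ((fsub (vanish (vanish C i) j)).card : ℤ) = q ^ 2 := by
    intro i j hj
    obtain ⟨k, hk1, hk2⟩ := third i j
    rw [card_fsub, hF, (dims i j k hj hk1 hk2).2.1]; push_cast; ring
  have card3 : ∀ i j k, i ≠ j → i ≠ k → j ≠ k →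
      ((fsub (vanish (vanish (vanish C i) j) k)).card : ℤ) = q := by
    intro i j k hj hk1 hk2
    rw [card_fsub, hF, (dims i j k hj hk1 hk2).2.2]; push_cast; ring
  -- summation helper: a function equal to `a` on `s` and to `b` off `s`
  have split : ∀ (s : Finset (Fin (q ^ 2 + 1))) (f : Fin (q ^ 2 + 1) → ℤ) (a b : ℤ),
      (∀ k ∈ s, f k = a) → (∀ k, k ∉ s → f k = b) →
      ∑ k, f k = s.card * a + ((q : ℤ) ^ 2 + 1 - s.card) * b := by
    intro s f a b ha hb
    rw [← Finset.sum_add_sum_compl s, Finset.sum_congr rfl ha,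
      Finset.sum_congr rfl (fun k hk => hb k (Finset.mem_compl.mp hk))]
    have := Finset.card_add_card_compl s
    rw [Fintype.card_fin] at this
    have h2 : (s.card : ℤ) + (sᶜ).card = q ^ 2 + 1 := by exact_mod_cast this
    simp only [Finset.sum_const, nsmul_eq_mul]
    rw [← h2]; ring
  have sumz : ∀ U : Submodule F (Fin (q ^ 2 + 1) → F),
      ∑ c ∈ fsub U, zeros c = ∑ k, ((fsub (vanish U k)).card : ℤ) := by
    intro U
    have h1 := sum_zeros U (fun _ => 1)
    simpa only [one_mul, Finset.sum_const, nsmul_eq_mul, mul_one] using h1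
  have m12 : ∀ i j, i ≠ j → ∑ c ∈ fsub (vanish (vanish C i) j), zeros c
      = 2 * (q : ℤ) ^ 2 + ((q : ℤ) ^ 2 + 1 - 2) * q := by
    intro i j hij
    rw [sumz, split {i, j} _ ((q : ℤ) ^ 2) (q : ℤ), Finset.card_pair hij]
    · push_cast; ring
    · intro k hk
      simp only [Finset.mem_insert, Finset.mem_singleton] at hk
      rcases hk with rfl | rfl
      · rw [vanish_vanish _ _ _ (vanish_self _ _), card2 _ _ hij]
      · rw [vanish_self, card2 _ _ hij]
    · intro k hk
      simp only [Finset.mem_insert, Finset.mem_singleton, not_or] at hk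
      exact card3 _ _ _ hij (Ne.symm hk.1) (Ne.symm hk.2)
  have m11 : ∀ i, ∑ c ∈ fsub (vanish C i), zeros c = (q : ℤ) ^ 3 + (q : ℤ) ^ 2 * q ^ 2 := by
    intro i
    rw [sumz, split {i} _ ((q : ℤ) ^ 3) ((q : ℤ) ^ 2), Finset.card_singleton]
    · push_cast; ring
    · intro k hk
      rw [Finset.mem_singleton] at hk
      rw [hk, vanish_self, card1]
    · intro k hk
      rw [Finset.mem_singleton] at hk
      exact card2 _ _ (Ne.symm hk)
  have m21 : ∀ i, ∑ c ∈ fsub (vanish C i), zeros c * zeros c = ((q : ℤ) ^ 3 + (q : ℤ) ^ 2 * q ^ 2)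
      + q ^ 2 * (2 * (q : ℤ) ^ 2 + ((q : ℤ) ^ 2 + 1 - 2) * q) := by
    intro i
    rw [sum_zeros, split {i} _ _ _ _ (fun k hk => m12 i k ?_), Finset.card_singleton]
    rotate_left 2
    · intro k hk
      rw [Finset.mem_singleton] at hk
      rw [hk, vanish_self, m11]
    · rw [Finset.mem_singleton] at hk
      exact Ne.symm hk
    · push_cast; ring
  have m10 : ∑ c ∈ fsub C, zeros c = ((q : ℤ) ^ 2 + 1) * q ^ 3 := by
    rw [sumz, Finset.sum_congr rfl (fun i _ => card1 i)]
    simp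
  have m20 : ∑ c ∈ fsub C, zeros c * zeros c
      = ((q : ℤ) ^ 2 + 1) * ((q : ℤ) ^ 3 + (q : ℤ) ^ 2 * q ^ 2) := by
    rw [sum_zeros, Finset.sum_congr rfl (fun i _ => m11 i)]
    simp
  have m30 : ∑ c ∈ fsub C, (zeros c * zeros c) * zeros c
      = ((q : ℤ) ^ 2 + 1) * (((q : ℤ) ^ 3 + (q : ℤ) ^ 2 * q ^ 2)
      + q ^ 2 * (2 * (q : ℤ) ^ 2 + ((q : ℤ) ^ 2 + 1 - 2) * q)) := by
    rw [sum_zeros C (fun c => zeros c * zeros c), Finset.sum_congr rfl (fun i _ => m21 i)]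
    simp
  have h0 : (0 : Fin (q ^ 2 + 1) → F) ∈ fsub C := by rw [mem_fsub]; exact C.zero_mem
  have hz0 : zeros (0 : Fin (q ^ 2 + 1) → F) = (q : ℤ) ^ 2 + 1 := by
    rw [zeros_zero]; push_cast; ring
  have hmem : ∀ c, c ∈ (fsub C).erase 0 ↔ c ≠ 0 ∧ c ∈ C := by
    intro c; rw [Finset.mem_erase, mem_fsub]
  -- moments of the nonzero words
  rw [← Finset.add_sum_erase _ _ h0, hz0] at m10 m20 m30
  have m00 : (((fsub C).erase 0).card : ℤ) = q ^ 4 - 1 := by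
    have := Finset.card_erase_add_one h0
    rw [← cardC, ← this]; push_cast; ring
  have hcub : ∑ c ∈ (fsub C).erase 0, zeros c * (zeros c - 1) * (q + 1 - zeros c) = 0 := by
    have e : ∀ c : Fin (q ^ 2 + 1) → F, zeros c * (zeros c - 1) * (q + 1 - zeros c)
        = (q + 2) * (zeros c * zeros c) - (zeros c * zeros c) * zeros c
          - (q + 1) * zeros c := by intro c; ring
    simp only [e, Finset.sum_sub_distrib, ← Finset.mul_sum]
    linear_combination ((q : ℤ) + 2) * m20 - m30 - (q + 1) * m10
  rw [Finset.sum_eq_zero_iff_of_nonneg] at hcub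
  rotate_left
  · intro c hc
    rw [hmem] at hc
    have a := hle c hc.2 hc.1
    have b := zeros_nonneg c
    refine mul_nonneg ?_ (by linarith)
    rcases b.eq_or_lt with b | b
    · rw [← b]; simp
    · exact mul_nonneg b.le (by linarith [Int.add_one_le_iff.mpr b])
  have hcases : ∀ c ∈ (fsub C).erase 0, zeros c = 0 ∨ zeros c = 1 ∨ zeros c = q + 1 := by
    intro c hc
    have := hcub c hc
    rcases mul_eq_zero.mp this with h | h
    · rcases mul_eq_zero.mp h with h | h
      · exact Or.inl h
      · exact Or.inr (Or.inl (by linarith))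
    · exact Or.inr (Or.inr (by linarith))
  set E := (fsub C).erase 0 with hE
  obtain ⟨A0, hA0⟩ : ∃ A : ℤ, A = ∑ c ∈ E, if zeros c = 0 then 1 else 0 := ⟨_, rfl⟩
  obtain ⟨A1, hA1⟩ : ∃ A : ℤ, A = ∑ c ∈ E, if zeros c = 1 then 1 else 0 := ⟨_, rfl⟩
  obtain ⟨A2, hA2⟩ : ∃ A : ℤ, A = ∑ c ∈ E, if zeros c = q + 1 then 1 else 0 := ⟨_, rfl⟩
  have lin : ∀ g : ℤ → ℤ, ∑ c ∈ E, g (zeros c) = g 0 * A0 + g 1 * A1 + g (q + 1) * A2 := by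
    intro g
    rw [hA0, hA1, hA2, Finset.mul_sum, Finset.mul_sum, Finset.mul_sum,
      ← Finset.sum_add_distrib, ← Finset.sum_add_distrib]
    refine Finset.sum_congr rfl fun c hc => ?_
    have n1 : (q : ℤ) + 1 ≠ 0 := by linarith
    have n2 : q ≠ 0 := by omega
    rcases hcases c hc with h | h | h <;> rw [h] <;> simp [n1, n1.symm, n2]
  have l0 := lin (fun _ => 1)
  have l1 := lin (fun z => z)
  have l2 := lin (fun z => z * z)
  simp only [Finset.sum_const, nsmul_eq_mul, mul_one, m00] at l0
  have qpos : (q : ℤ) * (q + 1) ≠ 0 := by positivity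
  have v2 : A2 = (q ^ 2 - q) * (q ^ 2 + 1) := by
    apply mul_left_cancel₀ qpos
    linear_combination m20 - m10 - l2 + l1
  have v1 : A1 = (q - 1) * (q ^ 2 + 1) := by
    linear_combination m10 - l1 - (q + 1) * v2
  have v0 : A0 = 0 := by
    linear_combination -l0 - v1 - v2
  have no0 : ∀ c ∈ E, zeros c ≠ 0 := by
    intro c hc h
    rw [v0, eq_comm, Finset.sum_eq_zero_iff_of_nonneg (fun c _ => by split_ifs <;> simp)] at hA0
    have := hA0 c hc
    simp [h] at this
  have key : ∀ (w : ℕ) (t : ℤ), w ≠ 0 → t + w = (q : ℤ) ^ 2 + 1 →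
      (({c : Fin (q ^ 2 + 1) → F | c ∈ C ∧ hammingNorm c = w}.ncard : ℕ) : ℤ)
        = ∑ c ∈ E, if zeros c = t then 1 else 0 := by
    intro w t hw ht
    have : {c : Fin (q ^ 2 + 1) → F | c ∈ C ∧ hammingNorm c = w}
        = ((E.filter (fun c => zeros c = t) : Finset _) : Set _) := by
      ext c
      simp only [Set.mem_setOf_eq, Finset.coe_filter, hmem]
      have hzc := hz c
      constructor
      · rintro ⟨h1, h2⟩
        refine ⟨⟨?_, h1⟩, ?_⟩
        · rintro rfl
          exact hw (by rw [← h2, hammingNorm_zero])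
        · rw [h2] at hzc; linarith
      · rintro ⟨⟨h1, h2⟩, h3⟩
        refine ⟨h2, ?_⟩
        have : (hammingNorm c : ℤ) = w := by linarith
        exact_mod_cast this
    rw [this, Set.ncard_coe_finset]
    simp
  have hw1 : q ^ 2 - q ≠ 0 := by
    have : q < q ^ 2 := by nlinarith
    omega
  have hw2 : q ^ 2 ≠ 0 := by positivity
  refine ⟨?_, ?_, ?_⟩
  · have h := key (q ^ 2 - q) (q + 1) hw1 (by rw [hsub]; ring)
    rw [← hA2, v2, ← hsub] at h
    exact_mod_cast h
  · have h := key (q ^ 2) 1 hw2 (by push_cast; ring)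
    have h1 : ((q - 1 : ℕ) : ℤ) = (q : ℤ) - 1 := by rw [Nat.cast_sub (by omega)]; simp
    rw [← hA1, v1, ← h1] at h
    exact_mod_cast h
  · intro c hc hc0
    have hcE := (hmem c).mpr ⟨hc0, hc⟩
    have hzc := hz c
    rcases hcases c hcE with h | h | h
    · exact absurd h (no0 c hcE)
    · right
      have : (hammingNorm c : ℤ) = (q : ℤ) ^ 2 := by linarith
      exact_mod_cast this
    · left
      have : (hammingNorm c : ℤ) = ((q ^ 2 - q : ℕ) : ℤ) := by rw [hsub]; linarith
      exact_mod_cast this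
end

section
/- Let q > 2 be a prime power. The dual of any linear code over GF(q) with parameters [q²+1, 4, q²−q] is a linear code with parameters [q²+1, q²−3, 4]; that is, the dual has dimension q²−3 and minimum distance exactly 4. -/
/-- The dual code of a linear code `C ⊆ GF(q)ⁿ`:
all vectors `x` with `∑ i, x i * c i = 0` for every `c ∈ C`. -/
def dualCode {n : ℕ} {F : Type} [Field F] (C : Submodule F (Fin n → F)) :
    Submodule F (Fin n → F) where
  carrier := {x | ∀ c ∈ C, ∑ i, x i * c i = 0}
  zero_mem' := by intro c hc; simp
  add_mem' := by
    intro a b ha hb c hc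
    simp only [Set.mem_setOf_eq] at ha hb ⊢
    simp [Pi.add_apply, add_mul, Finset.sum_add_distrib, ha c hc, hb c hc]
  smul_mem' := by
    intro r x hx c hc
    simp only [Set.mem_setOf_eq] at hx ⊢
    simp [Pi.smul_apply, smul_eq_mul, mul_assoc, ← Finset.mul_sum, hx c hc]


/-- The restriction of the words of a code to a set of coordinates. -/
def restrictCode {n : ℕ} {F : Type} [Field F] (C : Submodule F (Fin n → F)) (S : Finset (Fin n)) :
    C →ₗ[F] (S → F) :=
  (LinearMap.funLeft F F (Subtype.val : S → Fin n)).comp C.subtype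

theorem restrictCode_apply {n : ℕ} {F : Type} [Field F] (C : Submodule F (Fin n → F))
    (S : Finset (Fin n)) (c : C) (i : S) : restrictCode C S c i = c.1 i.1 := rfl

theorem finrank_dualCode {n : ℕ} {F : Type} [Field F] (C : Submodule F (Fin n → F)) :
    Module.finrank F C + Module.finrank F (dualCode C) = n := by
  have h : dualCode C = C.dualAnnihilator.comap (dotProductEquiv F (Fin n)).toLinearMap := by
    ext x
    simp only [Submodule.mem_comap, Submodule.mem_dualAnnihilator]
    rfl
  have h2 := Subspace.finrank_add_finrank_dualAnnihilator_eq C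
  rw [Module.finrank_fin_fun] at h2
  rw [h]
  have h3 := ((dotProductEquiv F (Fin n)).submoduleMap
    (C.dualAnnihilator.comap (dotProductEquiv F (Fin n)).toLinearMap)).finrank_eq
  rw [h3]
  rw [Submodule.map_comap_eq_of_surjective (dotProductEquiv F (Fin n)).surjective]
  exact h2

theorem zeros_add_norm {n : ℕ} {F : Type} [Field F] [DecidableEq F] (c : Fin n → F) :
    (Finset.univ.filter (fun i => c i = 0)).card + hammingNorm c = n := by
  have := Finset.card_filter_add_card_filter_not (s := (Finset.univ : Finset (Fin n)))
    (fun i => c i = 0)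
  simpa [hammingNorm] using this

/-- Pencil counting: a pair of independent words cannot vanish on three common coordinates. -/
theorem pencil_count {q : ℕ} (F : Type) [Field F] [Fintype F] [DecidableEq F]
    (hF : Fintype.card F = q) (hq : 2 < q)
    (C : Submodule F (Fin (q ^ 2 + 1) → F))
    (hz : ∀ c ∈ C, c ≠ 0 → (Finset.univ.filter (fun i => c i = 0)).card ≤ q + 1)
    (S : Finset (Fin (q ^ 2 + 1))) (hS : S.card = 3)
    (a b : Fin (q ^ 2 + 1) → F) (ha : a ∈ C) (hb : b ∈ C)
    (hab : ∀ s t : F, s • a + t • b = 0 → s = 0 ∧ t = 0)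
    (haS : ∀ i ∈ S, a i = 0) (hbS : ∀ i ∈ S, b i = 0) : False := by
  let w : Option F → (Fin (q ^ 2 + 1) → F) := fun o => o.elim b (fun t => a + t • b)
  have hwC : ∀ o, w o ∈ C := by
    rintro (_ | t)
    · exact hb
    · exact C.add_mem ha (C.smul_mem t hb)
  have hw0 : ∀ o, w o ≠ 0 := by
    rintro (_ | t) h
    · have := hab 0 1 (by simpa [w] using h)
      simp at this
    · have := hab 1 t (by simpa [w] using h)
      simp at this
  have h1 : ∑ o, (Finset.univ.filter (fun i => w o i = 0)).card ≤ (q + 1) * (q + 1) := by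
    calc _ ≤ ∑ _o : Option F, (q + 1) := Finset.sum_le_sum (fun o _ => hz _ (hwC o) (hw0 o))
      _ = _ := by simp [hF]
  have h2 : ∑ o, (Finset.univ.filter (fun i => w o i = 0)).card
      = ∑ i, (Finset.univ.filter (fun o => w o i = 0)).card := by
    simp only [Finset.card_filter]
    exact Finset.sum_comm
  have h3 : ∀ i, (if i ∈ S then q else 0) + 1 ≤ (Finset.univ.filter (fun o => w o i = 0)).card := by
    intro i
    split_ifs with hi
    · have : (Finset.univ.filter (fun o => w o i = 0)) = Finset.univ := by
        ext o
        rcases o with _ | t <;> simp [w, haS i hi, hbS i hi]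
      rw [this]
      simp [hF]
    · rw [zero_add, Nat.one_le_iff_ne_zero, Finset.card_ne_zero]
      by_cases hbi : b i = 0
      · exact ⟨none, by simp [w, hbi]⟩
      · refine ⟨some (- a i / b i), ?_⟩
        simp [w]
        field_simp
        simp
  have h4 : ∑ i, ((if i ∈ S then q else 0) + 1) ≤ (q + 1) * (q + 1) := by
    refine le_trans (Finset.sum_le_sum (fun i _ => h3 i)) ?_
    rw [← h2]
    exact h1
  rw [Finset.sum_add_distrib] at h4
  simp [hS] at h4
  nlinarith

/-- The dual of any linear code over GF(q), q > 2 a prime power, with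
parameters [q²+1, 4, q²−q] is a [q²+1, q²−3, 4] code: it has dimension q²−3 and
minimum distance exactly 4. -/
theorem dual_of_ovoid_code {q : ℕ} (F : Type) [Field F] [Fintype F] [DecidableEq F]
    (hF : Fintype.card F = q) (hq : 2 < q)
    (C : Submodule F (Fin (q ^ 2 + 1) → F))
    (hdim : Module.finrank F C = 4)
    (hlb : ∀ c ∈ C, c ≠ 0 → q ^ 2 - q ≤ hammingNorm c)
    (hex : ∃ c ∈ C, c ≠ 0 ∧ hammingNorm c = q ^ 2 - q) :
    Module.finrank F (dualCode C) = q ^ 2 - 3 ∧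
    (∀ x ∈ dualCode C, x ≠ 0 → 4 ≤ hammingNorm x) ∧
    (∃ x ∈ dualCode C, x ≠ 0 ∧ hammingNorm x = 4) := by
  have hq9 : 3 * q ≤ q ^ 2 := by nlinarith
  have hz : ∀ c ∈ C, c ≠ 0 → (Finset.univ.filter (fun i => c i = 0)).card ≤ q + 1 := by
    intro c hc h0
    have h1 := hlb c hc h0
    have h2 := zeros_add_norm c
    omega
  have hmin : ∀ x ∈ dualCode C, x ≠ 0 → 4 ≤ hammingNorm x := by
    intro x hx hx0
    by_contra hlt
    have hle : (Finset.univ.filter (fun i => x i ≠ 0)).card ≤ 3 := by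
      have : (Finset.univ.filter (fun i => x i ≠ 0)).card = hammingNorm x := rfl
      omega
    obtain ⟨S, hsub, hS⟩ := Finset.exists_superset_card_eq hle (by simp; omega)
    have hout : ∀ i, i ∉ S → x i = 0 := by
      intro i hi
      by_contra h
      exact hi (hsub (by simp [h]))
    let g : (S → F) →ₗ[F] F := dotProductEquiv F S (fun i => x i.1)
    have hg0 : g ≠ 0 := by
      intro h
      have h' : (fun i : S => x i.1) = 0 := (dotProductEquiv F S).map_eq_zero_iff.mp h
      apply hx0
      funext i
      by_cases hi : i ∈ S
      · exact congrFun h' ⟨i, hi⟩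
      · exact hout i hi
    have hrg : LinearMap.range (restrictCode C S) ≤ LinearMap.ker g := by
      rintro _ ⟨c, rfl⟩
      rw [LinearMap.mem_ker]
      have h1 : g (restrictCode C S c) = ∑ i : S, x i.1 * c.1 i.1 := rfl
      rw [h1, Finset.sum_coe_sort S (fun i => x i * c.1 i), ← hx c.1 c.2]
      apply Finset.sum_subset (Finset.subset_univ S)
      intro i _ hi
      simp [hout i hi]
    have hlt3 : Module.finrank F (LinearMap.range (restrictCode C S)) < 3 := by
      have h1 : LinearMap.range (restrictCode C S) < ⊤ := by
        refine lt_of_le_of_lt hrg (lt_top_iff_ne_top.mpr ?_)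
        intro h
        exact hg0 (LinearMap.ker_eq_top.mp h)
      have h2 := Submodule.finrank_lt h1.ne
      simpa [hS] using h2
    have hrn := LinearMap.finrank_range_add_finrank_ker (restrictCode C S)
    rw [hdim] at hrn
    have hk : 1 < Module.finrank F (LinearMap.ker (restrictCode C S)) := by omega
    have : Nontrivial (LinearMap.ker (restrictCode C S)) :=
      Module.nontrivial_of_finrank_pos (R := F) (by omega)
    obtain ⟨a, ha0⟩ := exists_ne (0 : LinearMap.ker (restrictCode C S))
    obtain ⟨b, hab⟩ := exists_linearIndependent_pair_of_one_lt_finrank (R := F)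
      (M := LinearMap.ker (restrictCode C S)) hk ha0
    have hab := (LinearIndependent.pair_iff (R := F)
      (M := LinearMap.ker (restrictCode C S))).mp hab
    have hv : ∀ a : LinearMap.ker (restrictCode C S), ∀ i ∈ S, a.1.1 i = 0 := by
      intro a i hi
      have := congrFun (LinearMap.mem_ker.mp a.2) ⟨i, hi⟩
      exact this
    refine pencil_count F hF hq C hz S hS a.1.1 b.1.1 a.1.2 b.1.2 ?_ (hv a) (hv b)
    intro s t h
    apply hab s t
    apply Subtype.ext
    apply Subtype.ext
    exact h
  refine ⟨?_, hmin, ?_⟩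
  · have := finrank_dualCode C
    omega
  · obtain ⟨c, hc, hc0, hcn⟩ := hex
    have h2 := zeros_add_norm c
    obtain ⟨S, hsub, hS⟩ := Finset.exists_subset_card_eq
      (s := Finset.univ.filter (fun i => c i = 0)) (n := 4) (by omega)
    have hrn := LinearMap.finrank_range_add_finrank_ker (restrictCode C S)
    rw [hdim] at hrn
    have hcker : (⟨c, hc⟩ : C) ∈ LinearMap.ker (restrictCode C S) := by
      rw [LinearMap.mem_ker]
      funext i
      have := hsub i.2
      rw [restrictCode_apply]
      simpa using this
    have hk : 0 < Module.finrank F (LinearMap.ker (restrictCode C S)) := by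
      refine (Module.finrank_pos_iff_exists_ne_zero (R := F)
        (M := LinearMap.ker (restrictCode C S))).mpr ⟨⟨⟨c, hc⟩, hcker⟩, ?_⟩
      intro h
      exact hc0 (congrArg (fun z => z.1.1) h)
    have hlt : LinearMap.range (restrictCode C S) < ⊤ := by
      rw [lt_top_iff_ne_top]
      intro h
      rw [h, finrank_top] at hrn
      simp [hS] at hrn
      have : Module.finrank F (LinearMap.ker (restrictCode C S)) = 0 := by
        rw [hrn, finrank_bot]
      omega
    obtain ⟨f, hf0, hf⟩ := Submodule.exists_le_ker_of_lt_top _ hlt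
    obtain ⟨y, rfl⟩ := (dotProductEquiv F S).surjective f
    have hy0 : y ≠ 0 := by
      rintro rfl
      simp at hf0
    let x : Fin (q ^ 2 + 1) → F := fun i => if h : i ∈ S then y ⟨i, h⟩ else 0
    have hxS : ∀ i : S, x i.1 = y i := by
      intro i
      simp [x]
    have hx : x ∈ dualCode C := by
      intro d hd
      have h1 : dotProductEquiv F S y (restrictCode C S ⟨d, hd⟩) = 0 := hf ⟨_, rfl⟩
      have h3 : ∑ i : S, y i * d i.1 = 0 := h1
      simp only [← hxS] at h3
      rw [Finset.sum_coe_sort S (fun i => x i * d i)] at h3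
      rw [← h3]
      symm
      apply Finset.sum_subset (Finset.subset_univ S)
      intro i _ hi
      simp [x, hi]
    have hx0 : x ≠ 0 := by
      intro h
      apply hy0
      funext i
      rw [← hxS, h]
      rfl
    refine ⟨x, hx, hx0, le_antisymm ?_ (hmin x hx hx0)⟩
    rw [← hS]
    apply Finset.card_le_card
    intro i hi
    by_contra h
    simp [x, h] at hi
end

section
/- Let q > 2 be a prime power, let C be a linear code over GF(q) with parameters [q²+1, 4, q²−q], and let G be a 4 × (q²+1) generator matrix of C (a matrix whose rows form a basis of C). Then the q²+1 column vectors of G are nonzero, pairwise non-proportional over GF(q) (so they span q²+1 distinct points of PG(3,q)), and any three distinct columns are linearly independent over GF(q); hence the columns of G form an ovoid in PG(3,q). -/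
open Matrix

/-- For two field elements, at most `q² - q` linear combinations are nonzero. -/
lemma card_comb_ne_zero_le {F : Type} [Field F] [Fintype F] [DecidableEq F] (a b : F) :
    (Finset.univ.filter fun p : F × F => p.1 * a + p.2 * b ≠ 0).card
      ≤ Fintype.card F ^ 2 - Fintype.card F := by
  by_cases h : a = 0 ∧ b = 0
  · simp [h.1, h.2]
  · have hz : Fintype.card F ≤
        (Finset.univ.filter fun p : F × F => p.1 * a + p.2 * b = 0).card := by
      rw [← Finset.card_univ]
      refine Finset.card_le_card_of_injOn (fun t => (t * b, -(t * a))) ?_ ?_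
      · intro t _
        simp
        ring
      · intro s _ t _ hst
        simp only [Prod.mk.injEq, neg_inj] at hst
        by_cases ha : a = 0
        · have hb : b ≠ 0 := fun hb => h ⟨ha, hb⟩
          exact mul_right_cancel₀ hb hst.1
        · exact mul_right_cancel₀ ha hst.2
    have htot := Finset.card_filter_add_card_filter_not (s := (Finset.univ : Finset (F × F)))
      (fun p : F × F => p.1 * a + p.2 * b = 0)
    rw [Finset.card_univ, Fintype.card_prod, ← sq] at htot
    simp only [ne_eq]
    omega

/-- Two independent words vanishing at three positions have a combination of small weight. -/
lemma three_zeros_false {F : Type} [Field F] [Fintype F] [DecidableEq F] {q : ℕ}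
    (hF : Fintype.card F = q) (hq : 2 < q) (u v : Fin (q ^ 2 + 1) → F)
    (huv : ∀ p : F × F, p ≠ 0 → q ^ 2 - q ≤ hammingNorm (p.1 • u + p.2 • v))
    (S : Finset (Fin (q ^ 2 + 1))) (hS : S.card = 3)
    (hu : ∀ j ∈ S, u j = 0) (hv : ∀ j ∈ S, v j = 0) : False := by
  have hlow : (q ^ 2 - 1) * (q ^ 2 - q) ≤
      ∑ p : F × F, hammingNorm (p.1 • u + p.2 • v) := by
    calc (q ^ 2 - 1) * (q ^ 2 - q)
        = ∑ p ∈ Finset.univ.erase (0 : F × F), (q ^ 2 - q) := by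
          rw [Finset.sum_const, Finset.card_erase_of_mem (Finset.mem_univ _), Finset.card_univ,
            Fintype.card_prod, hF, smul_eq_mul, sq]
      _ ≤ ∑ p ∈ Finset.univ.erase (0 : F × F), hammingNorm (p.1 • u + p.2 • v) :=
          Finset.sum_le_sum fun p hp => huv p (Finset.ne_of_mem_erase hp)
      _ ≤ _ := Finset.sum_le_sum_of_subset (Finset.subset_univ _)
  have hup : ∑ p : F × F, hammingNorm (p.1 • u + p.2 • v) ≤ (q ^ 2 - 2) * (q ^ 2 - q) := by
    calc ∑ p : F × F, hammingNorm (p.1 • u + p.2 • v)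
        = ∑ j, (Finset.univ.filter fun p : F × F => p.1 * u j + p.2 * v j ≠ 0).card := by
          simp only [hammingNorm, Finset.card_filter, Pi.add_apply, Pi.smul_apply, smul_eq_mul]
          exact Finset.sum_comm
      _ = ∑ j ∈ Sᶜ, (Finset.univ.filter fun p : F × F => p.1 * u j + p.2 * v j ≠ 0).card := by
          symm
          apply Finset.sum_subset (Finset.subset_univ _)
          intro j _ hj
          have hj' : j ∈ S := by simpa using hj
          simp [hu j hj', hv j hj']
      _ ≤ ∑ j ∈ Sᶜ, (q ^ 2 - q) := by
          refine Finset.sum_le_sum fun j _ => ?_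
          rw [← hF]
          exact card_comb_ne_zero_le _ _
      _ = (q ^ 2 - 2) * (q ^ 2 - q) := by
          rw [Finset.sum_const, Finset.card_compl, hS, Fintype.card_fin, smul_eq_mul]
          rfl
  have h1 : 0 < q ^ 2 - q := by
    have : q * 2 < q * q := Nat.mul_lt_mul_of_pos_left hq (by omega)
    rw [sq]; omega
  have h2 : 4 < q ^ 2 := by nlinarith
  have h3 := Nat.le_of_mul_le_mul_right (hlow.trans hup) h1
  omega

/-- If `G` is a generator matrix of a `[q²+1, 4, q²−q]` code over GF(q)
(q > 2 a prime power), then the columns of `G` are nonzero, pairwise non-proportional,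
and any three distinct columns are linearly independent; i.e. they form an ovoid in
PG(3,q). -/
theorem columns_of_ovoid_code_generator_matrix_form_ovoid {q : ℕ}
    (F : Type) [Field F] [Fintype F] [DecidableEq F]
    (hF : Fintype.card F = q) (hq : 2 < q)
    (C : Submodule F (Fin (q ^ 2 + 1) → F))
    (hdim : Module.finrank F C = 4)
    (hlb : ∀ c ∈ C, c ≠ 0 → q ^ 2 - q ≤ hammingNorm c)
    (hex : ∃ c ∈ C, c ≠ 0 ∧ hammingNorm c = q ^ 2 - q)
    (G : Matrix (Fin 4) (Fin (q ^ 2 + 1)) F)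
    (hrows_indep : LinearIndependent F (fun k : Fin 4 => G k))
    (hrows_span : Submodule.span F (Set.range fun k : Fin 4 => G k) = C) :
    (∀ j, Gᵀ j ≠ 0) ∧
    (∀ j₁ j₂, j₁ ≠ j₂ → ∀ c : F, Gᵀ j₂ ≠ c • Gᵀ j₁) ∧
    (∀ j₁ j₂ j₃, j₁ ≠ j₂ → j₁ ≠ j₃ → j₂ ≠ j₃ →
      LinearIndependent F ![Gᵀ j₁, Gᵀ j₂, Gᵀ j₃]) := by
  have key : ∀ j₁ j₂ j₃, j₁ ≠ j₂ → j₁ ≠ j₃ → j₂ ≠ j₃ →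
      LinearIndependent F ![Gᵀ j₁, Gᵀ j₂, Gᵀ j₃] := by
    intro j₁ j₂ j₃ h12 h13 h23
    by_contra hdep
    let M : Matrix (Fin 3) (Fin 4) F := ![Gᵀ j₁, Gᵀ j₂, Gᵀ j₃]
    have hrank : M.rank ≤ 2 := by
      have hne : M.rank ≠ 3 := by
        intro h
        apply hdep
        rw [linearIndependent_iff_card_eq_finrank_span, Fintype.card_fin]
        rw [Matrix.rank_eq_finrank_span_row] at h
        exact h.symm
      have := M.rank_le_height
      omega
    have hker : 1 < Module.finrank F (LinearMap.ker M.mulVecLin) := by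
      have := M.mulVecLin.finrank_range_add_finrank_ker
      rw [Module.finrank_fin_fun] at this
      unfold Matrix.rank at hrank
      omega
    haveI : Nontrivial (LinearMap.ker M.mulVecLin) :=
      Module.nontrivial_of_finrank_pos (R := F) (by omega)
    obtain ⟨x, hx⟩ := exists_ne (0 : LinearMap.ker M.mulVecLin)
    obtain ⟨y, hxy⟩ := exists_linearIndependent_pair_of_one_lt_finrank hker hx
    rw [LinearIndependent.pair_iff] at hxy
    have hinj : Function.Injective G.vecMul :=
      Matrix.vecMul_injective_iff.2 hrows_indep
    have hzero : ∀ z : LinearMap.ker M.mulVecLin,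
        ∀ j ∈ ({j₁, j₂, j₃} : Finset (Fin (q ^ 2 + 1))), ((z : Fin 4 → F) ᵥ* G) j = 0 := by
      intro z j hj
      have hz : M *ᵥ (z : Fin 4 → F) = 0 := z.2
      have e : ((z : Fin 4 → F) ᵥ* G) j = Gᵀ j ⬝ᵥ (z : Fin 4 → F) := by
        rw [dotProduct_comm]; rfl
      rw [e]
      simp only [Finset.mem_insert, Finset.mem_singleton] at hj
      rcases hj with rfl | rfl | rfl
      · exact congrFun hz 0
      · exact congrFun hz 1
      · exact congrFun hz 2
    refine three_zeros_false hF hq ((x : Fin 4 → F) ᵥ* G) ((y : Fin 4 → F) ᵥ* G) ?_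
      {j₁, j₂, j₃} (Finset.card_eq_three.2 ⟨j₁, j₂, j₃, h12, h13, h23, rfl⟩)
      (hzero x) (hzero y)
    intro p hp
    have e : p.1 • ((x : Fin 4 → F) ᵥ* G) + p.2 • ((y : Fin 4 → F) ᵥ* G)
        = ((p.1 • x + p.2 • y : LinearMap.ker M.mulVecLin) : Fin 4 → F) ᵥ* G := by
      simp [Matrix.add_vecMul, Matrix.smul_vecMul]
    rw [e]
    apply hlb
    · rw [← hrows_span, Matrix.vecMul_eq_sum]
      exact Submodule.sum_mem _ fun k _ =>
        Submodule.smul_mem _ _ (Submodule.subset_span ⟨k, rfl⟩)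
    · intro h0
      have h1 : ((p.1 • x + p.2 • y : LinearMap.ker M.mulVecLin) : Fin 4 → F) = 0 :=
        hinj (h0.trans (Matrix.zero_vecMul G).symm)
      have h2 := hxy p.1 p.2 (Subtype.ext h1)
      exact hp (Prod.ext h2.1 h2.2)
  have hcard : 3 ≤ q ^ 2 + 1 := by nlinarith
  have third : ∀ a b : Fin (q ^ 2 + 1), ∃ c, c ≠ a ∧ c ≠ b := by
    intro a b
    have hlt : ({a, b} : Finset (Fin (q ^ 2 + 1))).card < Fintype.card (Fin (q ^ 2 + 1)) := by
      have := Finset.card_le_two (a := a) (b := b)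
      rw [Fintype.card_fin]
      omega
    obtain ⟨c, hc⟩ := Finset.exists_mem_notMem_of_card_lt_card
      (s := {a, b}) (t := Finset.univ) (by simpa using hlt)
    simp at hc
    exact ⟨c, hc⟩
  refine ⟨?_, ?_, key⟩
  · intro j
    obtain ⟨k, hk, -⟩ := third j j
    obtain ⟨l, hl, hl'⟩ := third j k
    exact (key j k l hk.symm hl.symm hl'.symm).ne_zero 0
  · intro j₁ j₂ h c hc
    obtain ⟨l, hl, hl'⟩ := third j₁ j₂
    have := Fintype.linearIndependent_iff.1 (key j₁ j₂ l h hl.symm hl'.symm) ![c, -1, 0]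
      (by simp [Fin.sum_univ_three, hc]) 1
    simp at this
end

section
/- Let q > 2 be a prime power and let v₁, …, v_{q²+1} ∈ GF(q)^4 be nonzero vectors spanning the q²+1 points of an ovoid V in PG(3,q) (one spanning vector per point). Then the linear code C_V = { (u·v₁, u·v₂, …, u·v_{q²+1}) : u ∈ GF(q)^4 } over GF(q), where u·v denotes the standard dot product, is a linear code with parameters [q²+1, 4, q²−q], and its only nonzero weights are q²−q and q². -/
set_option linter.unusedSectionVars false

namespace OvoidAux
open Module Finset
open scoped Classical

section geom
variable {F V : Type} [Field F] [Fintype F] [AddCommGroup V] [Module F V] [Finite V]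

noncomputable instance instFT : Fintype (Submodule F V) := Fintype.ofFinite _

/-- number of members of `X` inside `W` -/
noncomputable def nn (X : Finset (Submodule F V)) (W : Submodule F V) : ℕ :=
  (X.filter (fun x => x ≤ W)).card

/-- number of members of `X` inside `W` but not inside `A` -/
noncomputable def nd (X : Finset (Submodule F V)) (A W : Submodule F V) : ℕ :=
  (X.filter (fun x => x ≤ W ∧ ¬ x ≤ A)).card

/-- covers of `A` inside `B` -/
noncomputable def cov (A B : Submodule F V) : Finset (Submodule F V) :=
  univ.filter (fun W => A ≤ W ∧ W ≤ B ∧ finrank F W = finrank F A + 1)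

lemma mem_cov {A B W : Submodule F V} :
    W ∈ cov A B ↔ A ≤ W ∧ W ≤ B ∧ finrank F W = finrank F A + 1 := by simp [cov]

lemma nn_add {X : Finset (Submodule F V)} {A W : Submodule F V} (h : A ≤ W) :
    nn X W = nn X A + nd X A W := by
  unfold nn nd
  rw [← Finset.card_filter_add_card_filter_not (s := X.filter (fun x => x ≤ W)) (fun x => x ≤ A),
    Finset.filter_filter, Finset.filter_filter]
  congr 2
  ext x
  simp only [mem_filter]
  constructor
  · rintro ⟨a, b, c⟩; exact ⟨a, c⟩
  · rintro ⟨a, b⟩; exact ⟨a, b.trans h, b⟩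

lemma nn_mono {X : Finset (Submodule F V)} {A W : Submodule F V} (h : A ≤ W) :
    nn X A ≤ nn X W := by rw [nn_add h]; omega

lemma rk_sup {A x : Submodule F V} (hx : finrank F x = 1) (h : ¬ x ≤ A) :
    finrank F ↥(A ⊔ x) = finrank F A + 1 := by
  have h1 := Submodule.finrank_sup_add_finrank_inf_eq A x
  have h2 : finrank F ↥(A ⊓ x) < finrank F x := by
    apply Submodule.finrank_lt_finrank_of_lt
    exact lt_of_le_of_ne inf_le_right (fun e => h (e ▸ inf_le_left))
  omega

lemma eq_of_le_rk {A B : Submodule F V} (h : A ≤ B) (hr : finrank F A = finrank F B) : A = B :=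
  Submodule.eq_of_le_of_finrank_eq h hr

lemma sup_eq_cov {A B W x : Submodule F V} (hW : W ∈ cov A B) (hx : finrank F x = 1)
    (h : ¬ x ≤ A) (hxW : x ≤ W) : A ⊔ x = W := by
  rw [mem_cov] at hW
  exact eq_of_le_rk (sup_le hW.1 hxW) (by rw [rk_sup hx h, hW.2.2])

lemma sup_mem_cov {A B x : Submodule F V} (hA : A ≤ B) (hx : finrank F x = 1)
    (h : ¬ x ≤ A) (hxB : x ≤ B) : A ⊔ x ∈ cov A B :=
  mem_cov.2 ⟨le_sup_left, sup_le hA hxB, rk_sup hx h⟩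

lemma sum_nd {X : Finset (Submodule F V)} (hX : ∀ x ∈ X, finrank F x = 1) {A B : Submodule F V}
    (h : A ≤ B) : nd X A B = ∑ W ∈ cov A B, nd X A W := by
  unfold nd
  rw [Finset.card_eq_sum_card_fiberwise (f := fun x => A ⊔ x) (t := cov A B)]
  · apply Finset.sum_congr rfl
    intro W hW
    rw [Finset.filter_filter]
    congr 1
    apply Finset.filter_congr
    intro x hx
    constructor
    · rintro ⟨⟨a, b⟩, rfl⟩; exact ⟨le_sup_right, b⟩
    · rintro ⟨a, b⟩
      exact ⟨⟨a.trans (mem_cov.1 hW).2.1, b⟩, sup_eq_cov hW (hX x hx) b a⟩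
  · intro x hx
    simp only [coe_filter, Set.mem_ofPred_eq] at hx
    exact sup_mem_cov h (hX x hx.1) hx.2.2 hx.2.1

lemma cov_count {A B : Submodule F V} (h : A ≤ B) :
    (cov A B).card * (Fintype.card F ^ (finrank F A + 1) - Fintype.card F ^ finrank F A)
      = Fintype.card F ^ finrank F B - Fintype.card F ^ finrank F A := by
  have := Fintype.ofFinite V
  have hc : ∀ W : Submodule F V, (univ.filter (fun v : V => v ∈ W)).card
      = Fintype.card F ^ finrank F W := by
    intro W
    rw [← Module.card_eq_pow_finrank (K := F) (V := W), Fintype.card_subtype]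
  have hd : ∀ W : Submodule F V, A ≤ W → (univ.filter (fun v : V => v ∈ W ∧ v ∉ A)).card
      = Fintype.card F ^ finrank F W - Fintype.card F ^ finrank F A := by
    intro W hW
    rw [← hc W, ← hc A, ← Finset.card_sdiff_of_subset]
    · congr 1; ext v; simp
    · intro v; simpa using fun hv => hW hv
  rw [← hd B h, Finset.card_eq_sum_card_fiberwise (f := fun v => A ⊔ Submodule.span F {v})
    (t := cov A B), ← smul_eq_mul, ← Finset.sum_const]
  · apply Finset.sum_congr rfl
    intro W hW
    rw [← (mem_cov.1 hW).2.2, ← hd W (mem_cov.1 hW).1, Finset.filter_filter]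
    congr 1
    apply Finset.filter_congr
    intro v _
    constructor
    · rintro ⟨a, b⟩
      refine ⟨⟨(mem_cov.1 hW).2.1 a, b⟩, sup_eq_cov hW ?_ ?_ ?_⟩
      · exact finrank_span_singleton (by rintro rfl; exact b A.zero_mem)
      · simpa using b
      · simpa using a
    · rintro ⟨⟨a, b⟩, rfl⟩
      exact ⟨(le_sup_right : _ ≤ A ⊔ Submodule.span F {v}) (Submodule.mem_span_singleton_self v), b⟩
  · intro v hv
    simp only [coe_filter, Set.mem_ofPred_eq, mem_univ, true_and] at hv
    refine sup_mem_cov h ?_ ?_ ?_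
    · exact finrank_span_singleton (by rintro rfl; exact hv.2 A.zero_mem)
    · simpa using hv.2
    · simpa using hv.1

lemma cov_two {A B : Submodule F V} (h : A ≤ B) (hr : finrank F B = finrank F A + 2) :
    (cov A B).card = Fintype.card F + 1 := by
  have h1 := cov_count h
  have hq : 1 < Fintype.card F := Fintype.one_lt_card
  rw [hr] at h1
  generalize Fintype.card F = q at *
  generalize (cov A B).card = c at *
  generalize finrank F A = a at *
  obtain ⟨p, rfl⟩ : ∃ p, q = p + 1 := ⟨q - 1, by omega⟩
  have e1 : (p+1)^(a+1) - (p+1)^a = p * (p+1)^a := by rw [pow_succ]; apply Nat.sub_eq_of_eq_add; ring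
  have e2 : (p+1)^(a+2) - (p+1)^a = (p + 1 + 1) * (p * (p+1)^a) := by
    apply Nat.sub_eq_of_eq_add; ring
  rw [e1, e2] at h1
  exact Nat.eq_of_mul_eq_mul_right (by have : 0 < p := by omega
                                       positivity) h1

lemma cov_three {A B : Submodule F V} (h : A ≤ B) (hr : finrank F B = finrank F A + 3) :
    (cov A B).card = Fintype.card F ^ 2 + Fintype.card F + 1 := by
  have h1 := cov_count h
  have hq : 1 < Fintype.card F := Fintype.one_lt_card
  rw [hr] at h1
  generalize Fintype.card F = q at *
  generalize (cov A B).card = c at *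
  generalize finrank F A = a at *
  obtain ⟨p, rfl⟩ : ∃ p, q = p + 1 := ⟨q - 1, by omega⟩
  have e1 : (p+1)^(a+1) - (p+1)^a = p * (p+1)^a := by rw [pow_succ]; apply Nat.sub_eq_of_eq_add; ring
  have e2 : (p+1)^(a+3) - (p+1)^a = ((p + 1)^2 + (p+1) + 1) * (p * (p+1)^a) := by
    apply Nat.sub_eq_of_eq_add; ring
  rw [e1, e2] at h1
  exact Nat.eq_of_mul_eq_mul_right (by have : 0 < p := by omega
                                       positivity) h1


lemma pt_eq {p r : Submodule F V} (hp : finrank F p = 1) (hr : finrank F r = 1) (h : p ≤ r) :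
    p = r := eq_of_le_rk h (by rw [hp, hr])

lemma pt_nle {p r : Submodule F V} (hp : finrank F p = 1) (hr : finrank F r = 1) (h : p ≠ r) :
    ¬ p ≤ r := fun e => h (pt_eq hp hr e)

lemma rk_line {p r : Submodule F V} (hp : finrank F p = 1) (hr : finrank F r = 1) (h : p ≠ r) :
    finrank F ↥(p ⊔ r) = 2 := by
  rw [rk_sup hr (pt_nle hr hp h.symm), hp]

lemma line_eq {p r L : Submodule F V} (hp : finrank F p = 1) (hr : finrank F r = 1) (h : p ≠ r)
    (hL : finrank F L = 2) (h1 : p ≤ L) (h2 : r ≤ L) : p ⊔ r = L :=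
  eq_of_le_rk (sup_le h1 h2) (by rw [rk_line hp hr h, hL])

lemma rk_inf {A B C : Submodule F V} {k : ℕ} (hA : A ≤ C) (hB : B ≤ C) (h : A ≠ B)
    (rA : finrank F A = k + 1) (rB : finrank F B = k + 1) (rC : finrank F C = k + 2) :
    finrank F ↥(A ⊓ B) = k := by
  have h1 := Submodule.finrank_sup_add_finrank_inf_eq A B
  have h2 : finrank F ↥(A ⊔ B) ≤ finrank F C := Submodule.finrank_mono (sup_le hA hB)
  have h3 : finrank F A < finrank F ↥(A ⊔ B) := by
    apply Submodule.finrank_lt_finrank_of_lt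
    refine lt_of_le_of_ne le_sup_left fun e => h ?_
    have : B ≤ A := e ▸ le_sup_right
    exact (eq_of_le_rk this (by omega)).symm
  omega

lemma nn_pos {X : Finset (Submodule F V)} {W : Submodule F V} :
    0 < nn X W ↔ ∃ x ∈ X, x ≤ W := by
  simp [nn, Finset.card_pos, Finset.Nonempty]

lemma nn_two {X : Finset (Submodule F V)} {W : Submodule F V} (h : 2 ≤ nn X W)
    (x : Submodule F V) : ∃ y ∈ X, y ≤ W ∧ y ≠ x := by
  obtain ⟨y, hy, hne⟩ := Finset.exists_mem_ne (s := X.filter (fun x => x ≤ W)) h x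
  simp only [mem_filter] at hy
  exact ⟨y, hy.1, hy.2, hne⟩

lemma two_le_nn {X : Finset (Submodule F V)} {W x y : Submodule F V} (hx : x ∈ X) (hy : y ∈ X)
    (hne : x ≠ y) (h1 : x ≤ W) (h2 : y ≤ W) : 2 ≤ nn X W := by
  unfold nn
  exact Finset.one_lt_card.2 ⟨x, by simp [hx, h1], y, by simp [hy, h2], hne⟩

lemma nn_pt {X : Finset (Submodule F V)} (hX : ∀ x ∈ X, finrank F x = 1) {x : Submodule F V}
    (hx : x ∈ X) : nn X x = 1 := by
  unfold nn
  rw [Finset.card_eq_one]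
  refine ⟨x, ?_⟩
  ext y
  simp only [mem_filter, mem_singleton]
  constructor
  · rintro ⟨a, b⟩; exact pt_eq (hX _ a) (hX _ hx) b
  · rintro rfl; exact ⟨hx, le_rfl⟩

lemma nn_npt {X : Finset (Submodule F V)} (hX : ∀ x ∈ X, finrank F x = 1) {r : Submodule F V}
    (hr : finrank F r = 1) (hx : r ∉ X) : nn X r = 0 := by
  by_contra h
  obtain ⟨x, hx', h2⟩ := nn_pos.1 (Nat.pos_of_ne_zero h)
  exact hx (pt_eq (hX _ hx') hr h2 ▸ hx')

lemma nn_top (X : Finset (Submodule F V)) : nn X ⊤ = X.card := by simp [nn]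

/-- caps of size q^2+1 -/
structure IsCap (q : ℕ) (X : Finset (Submodule F V)) : Prop where
  cardF : Fintype.card F = q
  two_lt : 2 < q
  rkV : finrank F V = 4
  pt : ∀ x ∈ X, finrank F x = 1
  cardX : X.card = q ^ 2 + 1
  line : ∀ L : Submodule F V, finrank F L = 2 → nn X L ≤ 2

/-- lines through `P` in `W` meeting `X` once -/
noncomputable def tg (X : Finset (Submodule F V)) (P W : Submodule F V) :
    Finset (Submodule F V) := (cov P W).filter (fun L => nn X L = 1)

variable {q : ℕ} {X : Finset (Submodule F V)}

lemma mem_tg {P W L : Submodule F V} (hP : finrank F P = 1) :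
    L ∈ tg X P W ↔ P ≤ L ∧ L ≤ W ∧ finrank F L = 2 ∧ nn X L = 1 := by
  simp [tg, mem_cov, hP, and_assoc]

lemma IsCap.rkT (h : IsCap q X) : finrank F (⊤ : Submodule F V) = 4 := by
  rw [finrank_top, h.rkV]

lemma IsCap.tg_card (h : IsCap q X) {P W : Submodule F V} (hP : P ∈ X) (hW : P ≤ W) :
    (tg X P W).card + nd X P W = (cov P W).card := by
  rw [sum_nd h.pt hW, tg, Finset.card_filter, ← Finset.sum_add_distrib, Finset.card_eq_sum_ones]
  apply Finset.sum_congr rfl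
  intro L hL
  rw [mem_cov, h.pt P hP] at hL
  have h1 := h.line L hL.2.2
  have h2 := nn_add (X := X) hL.1
  rw [nn_pt h.pt hP] at h2
  split_ifs <;> omega

lemma IsCap.tg_plane (h : IsCap q X) {P W : Submodule F V} (hP : P ∈ X) (hW : P ≤ W)
    (rW : finrank F W = 3) : (tg X P W).card + nn X W = q + 2 := by
  have h1 := h.tg_card hP hW
  have h2 := nn_add (X := X) hW
  rw [nn_pt h.pt hP] at h2
  rw [cov_two hW (by rw [rW, h.pt P hP]), h.cardF] at h1
  omega

lemma IsCap.tg_top (h : IsCap q X) {P : Submodule F V} (hP : P ∈ X) :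
    (tg X P ⊤).card = q + 1 := by
  have h1 := h.tg_card hP le_top
  have h2 := nn_add (X := X) (le_top : P ≤ ⊤)
  rw [nn_pt h.pt hP, nn_top, h.cardX] at h2
  rw [cov_three le_top (by rw [h.rkT, h.pt P hP]), h.cardF] at h1
  omega

lemma IsCap.sum_lines (h : IsCap q X) {R W : Submodule F V} (rR : finrank F R = 1) (hR : R ∉ X)
    (hW : R ≤ W) : nn X W = ∑ L ∈ cov R W, nn X L := by
  rw [nn_add hW, nn_npt h.pt rR hR, zero_add, sum_nd h.pt hW]
  apply Finset.sum_congr rfl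
  intro L hL
  rw [nn_add (mem_cov.1 hL).1, nn_npt h.pt rR hR, zero_add]

lemma IsCap.parity (h : IsCap q X) {R W : Submodule F V} (rR : finrank F R = 1) (hR : R ∉ X)
    (hW : R ≤ W) : nn X W % 2 = (tg X R W).card % 2 := by
  rw [h.sum_lines rR hR hW, tg, Finset.card_filter, Finset.sum_nat_mod, Finset.sum_nat_mod (cov R W) 2 
    (fun L => if nn X L = 1 then 1 else 0)]
  congr 1
  apply Finset.sum_congr rfl
  intro L hL
  rw [mem_cov, rR] at hL
  have h1 := h.line L hL.2.2
  split_ifs <;> omega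

/-- there is a point of `W` outside any small set -/
lemma IsCap.exists_off (h : IsCap q X) {W : Submodule F V} (rW : finrank F W = 3)
    (hn : nn X W < q ^ 2 + q + 1) : ∃ R ≤ W, finrank F R = 1 ∧ R ∉ X := by
  by_contra hc
  push Not at hc
  have h1 : (cov ⊥ W).card = q ^ 2 + q + 1 := by
    rw [cov_three bot_le (by rw [rW]; simp), h.cardF]
  have h2 : cov ⊥ W ⊆ X.filter (fun x => x ≤ W) := by
    intro R hR
    rw [mem_cov] at hR
    simp only [finrank_bot, zero_add] at hR
    simp only [mem_filter]
    exact ⟨hc R hR.2.1 hR.2.2, hR.2.1⟩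
  have := Finset.card_le_card h2
  unfold nn at hn
  omega

lemma IsCap.le_q2 (h : IsCap q X) {W : Submodule F V} (rW : finrank F W = 3) :
    nn X W ≤ q + 2 := by
  rcases Nat.eq_zero_or_pos (nn X W) with h0 | h0
  · omega
  obtain ⟨x, hx, hxW⟩ := nn_pos.1 h0
  have := h.tg_plane hx hxW rW
  omega

lemma IsCap.tg_le (h : IsCap q X) {W L : Submodule F V} (rW : finrank F W = 3)
    (rL : finrank F L = 2) (hL : nn X L = 1) (hLW : L ≤ W) : nn X W ≤ q + 1 := by
  obtain ⟨x, hx, hxL⟩ := nn_pos.1 (by omega : 0 < nn X L)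
  have h1 := h.tg_plane hx (hxL.trans hLW) rW
  have : 0 < (tg X x W).card := Finset.card_pos.2 ⟨L, (mem_tg (h.pt x hx)).2 ⟨hxL, hLW, rL, hL⟩⟩
  omega

lemma IsCap.hyper_line (h : IsCap q X) {W L : Submodule F V} (rW : finrank F W = 3)
    (hW : nn X W = q + 2) (rL : finrank F L = 2) (hLW : L ≤ W) : nn X L = 0 ∨ nn X L = 2 := by
  have h1 := h.line L rL
  have : nn X L ≠ 1 := fun e => by
    have := h.tg_le rW rL e hLW
    omega
  omega

lemma IsCap.hyper_even (h : IsCap q X) {W : Submodule F V} (rW : finrank F W = 3)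
    (hW : nn X W = q + 2) : q % 2 = 0 := by
  obtain ⟨R, hRW, rR, hR⟩ := h.exists_off rW (by have := h.two_lt; nlinarith)
  have h1 := h.parity rR hR hRW
  have : tg X R W = ∅ := by
    apply Finset.eq_empty_of_forall_notMem
    intro L hL
    rw [mem_tg rR] at hL
    have := h.hyper_line rW hW hL.2.2.1 hL.2.1
    omega
  rw [this] at h1
  simp at h1
  omega

/-- planes through a line: total count -/
lemma IsCap.sum_planes (h : IsCap q X) (L : Submodule F V) :
    q ^ 2 + 1 = nn X L + ∑ W ∈ cov L ⊤, nd X L W := by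
  rw [← sum_nd h.pt le_top, ← nn_add le_top, nn_top, h.cardX]

lemma IsCap.planes_card (h : IsCap q X) {L : Submodule F V} (rL : finrank F L = 2) :
    (cov L ⊤).card = q + 1 := by
  rw [cov_two le_top (by rw [h.rkT, rL]), h.cardF]

/-- final trichotomy, if there are no hyperoval planes through the secant -/
lemma IsCap.secant_planes (h : IsCap q X) {L : Submodule F V} (rL : finrank F L = 2)
    (hL : nn X L = 2) (hle : ∀ W : Submodule F V, finrank F W = 3 → L ≤ W → nn X W ≤ q + 1)
    {W : Submodule F V} (rW : finrank F W = 3) (hW : L ≤ W) : nn X W = q + 1 := by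
  have h1 := h.sum_planes L
  have h2 : ∀ W ∈ cov L ⊤, nd X L W ≤ q - 1 := by
    intro U hU
    rw [mem_cov, rL] at hU
    have := hle U hU.2.2 hU.1
    rw [nn_add hU.1] at this
    omega
  by_contra hne
  have hWm : W ∈ cov L ⊤ := mem_cov.2 ⟨hW, le_top, by rw [rW, rL]⟩
  have h3 : nd X L W < q - 1 := by
    have a := hle W rW hW
    rw [nn_add hW] at a hne
    omega
  have h4 := Finset.sum_lt_sum h2 ⟨W, hWm, h3⟩
  rw [Finset.sum_const, h.planes_card rL, smul_eq_mul] at h4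
  have := h.two_lt
  obtain ⟨p, rfl⟩ : ∃ p, q = p + 1 := ⟨q - 1, by omega⟩
  simp only [Nat.add_sub_cancel] at h4
  nlinarith

lemma IsCap.sec_line (h : IsCap q X) {x y : Submodule F V} (hx : x ∈ X) (hy : y ∈ X)
    (hne : x ≠ y) : nn X (x ⊔ y) = 2 :=
  le_antisymm (h.line _ (rk_line (h.pt x hx) (h.pt y hy) hne))
    (two_le_nn hx hy hne le_sup_left le_sup_right)

/-- main conclusion when there are no hyperoval planes -/
lemma IsCap.concl (h : IsCap q X) (hle : ∀ W : Submodule F V, finrank F W = 3 → nn X W ≤ q + 1)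
    {W : Submodule F V} (rW : finrank F W = 3) : nn X W = 1 ∨ nn X W = q + 1 := by
  have key : ∀ W : Submodule F V, finrank F W = 3 → nn X W = 0 ∨ nn X W = 1 ∨ nn X W = q + 1 := by
    intro W rW
    by_cases h2 : 2 ≤ nn X W
    · right; right
      obtain ⟨x, hx, hxW⟩ := nn_pos.1 (by omega : 0 < nn X W)
      obtain ⟨y, hy, hyW, hne⟩ := nn_two h2 x
      exact h.secant_planes (rk_line (h.pt x hx) (h.pt y hy) hne.symm) (h.sec_line hx hy hne.symm)
        (fun W r _ => hle W r) rW (sup_le hxW hyW)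
    · omega
  rcases key W rW with h0 | h0
  swap
  · exact h0
  exfalso
  obtain ⟨R, hRW, rR, hR⟩ := h.exists_off rW (by omega)
  obtain ⟨L, hL⟩ : (cov R W).Nonempty := by
    rw [← Finset.card_pos, cov_two hRW (by rw [rW, rR])]; omega
  rw [mem_cov, rR] at hL
  have rL := hL.2.2
  have hL0 : nn X L = 0 := by have := nn_mono (X := X) hL.2.1; omega
  have h1 := h.sum_planes L
  have e : ∀ U ∈ cov L ⊤, nd X L U = (if nn X U = 1 then 1 else 0)
      + (if nn X U = q + 1 then 1 else 0) * (q + 1) := by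
    intro U hU
    rw [mem_cov, rL] at hU
    have := key U hU.2.2
    have := nn_add (X := X) hU.1
    have := h.two_lt
    split_ifs <;> simp only [one_mul, zero_mul] <;> omega
  rw [Finset.sum_congr rfl e, Finset.sum_add_distrib, ← Finset.sum_mul, ← Finset.card_filter,
    ← Finset.card_filter, hL0, zero_add] at h1
  have hWm : W ∈ cov L ⊤ := mem_cov.2 ⟨hL.2.1, le_top, by rw [rW, rL]⟩
  have h5 : ((cov L ⊤).filter (fun U => nn X U = 1)).card
      + ((cov L ⊤).filter (fun U => nn X U = q + 1)).card < q + 1 := by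
    rw [← Finset.card_union_of_disjoint]
    · refine lt_of_lt_of_eq (Finset.card_lt_card (t := cov L ⊤) ?_) (h.planes_card rL)
      refine ⟨by intro U; simp; tauto, fun hs => ?_⟩
      have := hs hWm
      simp [h0] at this
    · rw [Finset.disjoint_filter]
      intro U _ a b
      have := h.two_lt
      omega
  have := h.two_lt
  set b := ((cov L ⊤).filter (fun U => nn X U = 1)).card
  set a := ((cov L ⊤).filter (fun U => nn X U = q + 1)).card
  have h6 : (b + (a + 1) * (q + 1)) = (q + 1) * q + 2 := by nlinarith
  have h7 : a + 1 ≤ q := by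
    by_contra hcc
    have : q ≤ a := by omega
    nlinarith
  have h8 : a + 1 ≥ q := by
    by_contra hcc
    have : a + 2 ≤ q := by omega
    nlinarith
  have h9 : a + 1 = q := by omega
  rw [h9] at h6
  have : b = 2 := by nlinarith
  omega

lemma uniq_one {L x y : Submodule F V} (hL : nn X L = 1) (hx : x ∈ X) (hy : y ∈ X) (h1 : x ≤ L)
    (h2 : y ≤ L) : x = y := by
  by_contra hne
  have := two_le_nn hx hy hne h1 h2
  omega

lemma IsCap.join (h : IsCap q X) {N x : Submodule F V} (rN : finrank F N = 1) (hN : N ∉ X)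
    (hx : x ∈ X) : finrank F ↥(N ⊔ x) = 2 :=
  rk_line rN (h.pt x hx) (fun e => hN (e ▸ hx))

lemma IsCap.join_eq (h : IsCap q X) {N x L : Submodule F V} (rN : finrank F N = 1) (hN : N ∉ X)
    (hx : x ∈ X) (rL : finrank F L = 2) (h1 : N ≤ L) (h2 : x ≤ L) : N ⊔ x = L :=
  line_eq rN (h.pt x hx) (fun e => hN (e ▸ hx)) rL h1 h2

lemma IsCap.exists_oval (h : IsCap q X) {L : Submodule F V} (rL : finrank F L = 2)
    (hL : nn X L = 1) : ∃ B : Submodule F V, finrank F B = 3 ∧ L ≤ B ∧ nn X B = q + 1 := by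
  by_contra hc
  push Not at hc
  have h1 := h.sum_planes L
  have h2 : ∀ W ∈ cov L ⊤, nd X L W ≤ q - 1 := by
    intro U hU
    rw [mem_cov, rL] at hU
    have a := h.tg_le hU.2.2 rL hL hU.1
    have b := hc U hU.2.2 hU.1
    rw [nn_add hU.1] at a b
    omega
  have h4 := Finset.sum_le_sum h2
  rw [Finset.sum_const, h.planes_card rL, smul_eq_mul] at h4
  have := h.two_lt
  obtain ⟨p, rfl⟩ : ∃ p, q = p + 1 := ⟨q - 1, by omega⟩
  simp only [Nat.add_sub_cancel] at h4
  nlinarith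

lemma IsCap.oval_tg_card (h : IsCap q X) {B x : Submodule F V} (rB : finrank F B = 3)
    (hB : nn X B = q + 1) (hx : x ∈ X) (hxB : x ≤ B) : (tg X x B).card = 1 := by
  have := h.tg_plane hx hxB rB
  omega

lemma IsCap.oval_tg_uniq (h : IsCap q X) {B x L M : Submodule F V} (rB : finrank F B = 3)
    (hB : nn X B = q + 1) (hx : x ∈ X) (hL : L ∈ tg X x B) (hM : M ∈ tg X x B) : L = M := by
  have hxB : x ≤ B := by
    rw [mem_tg (h.pt x hx)] at hL
    exact hL.1.trans hL.2.1
  obtain ⟨a, ha⟩ := Finset.card_eq_one.1 (h.oval_tg_card rB hB hx hxB)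
  rw [ha, mem_singleton] at hL hM
  rw [hL, hM]

lemma IsCap.oval_secant (h : IsCap q X) (hq : q % 2 = 0) {B g R L1 L2 : Submodule F V}
    (rB : finrank F B = 3) (hB : nn X B = q + 1) (rg : finrank F g = 2) (hg : nn X g = 2)
    (hgB : g ≤ B) (rR : finrank F R = 1) (hR : R ∉ X) (hRg : R ≤ g)
    (h1 : L1 ∈ tg X R B) (h2 : L2 ∈ tg X R B) : L1 = L2 := by
  have ex : ∀ x : Submodule F V, ∃ t, x ∈ X → x ≤ B → tg X x B = {t} := by
    intro x
    by_cases hx : x ∈ X ∧ x ≤ B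
    · obtain ⟨t, ht⟩ := Finset.card_eq_one.1 (h.oval_tg_card rB hB hx.1 hx.2)
      exact ⟨t, fun _ _ => ht⟩
    · exact ⟨⊥, fun a b => absurd ⟨a, b⟩ hx⟩
  choose t ht using ex
  have htm : ∀ x ∈ X, x ≤ B → x ≤ t x ∧ t x ≤ B ∧ finrank F (t x) = 2 ∧ nn X (t x) = 1 := by
    intro x hx hxB
    have : t x ∈ tg X x B := by rw [ht x hx hxB]; simp
    exact (mem_tg (h.pt x hx)).1 this
  have rki : ∀ x ∈ X, x ≤ B → finrank F ↥(t x ⊓ g) = 1 := by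
    intro x hx hxB
    obtain ⟨a, b, c, d⟩ := htm x hx hxB
    exact rk_inf b hgB (fun e => by rw [e] at d; omega) c rg rB
  have hpt : ∀ r : Submodule F V, finrank F r = 1 → r ∉ X → r ≤ g → ∀ L ∈ tg X r B,
      ∃ x ∈ X, x ≤ B ∧ L = t x ∧ t x ⊓ g = r := by
    intro r rr hr hrg L hL
    rw [mem_tg rr] at hL
    obtain ⟨x, hx, hxL⟩ := nn_pos.1 (by omega : 0 < nn X L)
    have hxB := hxL.trans hL.2.1
    have e : L = t x := by
      have : L ∈ tg X x B := (mem_tg (h.pt x hx)).2 ⟨hxL, hL.2⟩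
      rwa [ht x hx hxB, mem_singleton] at this
    refine ⟨x, hx, hxB, e, ?_⟩
    exact (pt_eq rr (rki x hx hxB) (le_inf (e ▸ hL.1) hrg)).symm
  have inj : Set.InjOn (fun x => t x ⊓ g) (X.filter (fun x => x ≤ B) : Finset _) := by
    refine Finset.injOn_of_surjOn_of_card_le (t := cov ⊥ g) _ ?_ ?_ ?_
    · intro x hx
      simp only [coe_filter, Set.mem_ofPred_eq] at hx
      refine mem_cov.2 ⟨bot_le, inf_le_right, ?_⟩
      rw [rki x hx.1 hx.2]; simp
    · intro r hr
      have hr := mem_cov.1 (Finset.mem_coe.1 hr)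
      simp only [finrank_bot, zero_add] at hr
      by_cases hrX : r ∈ X
      · refine ⟨r, by simp [hrX, hr.2.1.trans hgB], ?_⟩
        have hrB := hr.2.1.trans hgB
        exact (pt_eq hr.2.2 (rki r hrX hrB) (le_inf (htm r hrX hrB).1 hr.2.1)).symm
      · have hp := h.parity hr.2.2 hrX (hr.2.1.trans hgB)
        obtain ⟨L, hL⟩ : (tg X r B).Nonempty := by
          rw [← Finset.card_pos]; omega
        obtain ⟨x, hx, hxB, -, e⟩ := hpt r hr.2.2 hrX hr.2.1 L hL
        exact ⟨x, by simp [hx, hxB], e⟩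
    · rw [cov_two bot_le (by rw [rg]; simp), h.cardF]
      exact hB.le
  obtain ⟨x, hx, hxB, e1, e2⟩ := hpt R rR hR hRg L1 h1
  obtain ⟨y, hy, hyB, f1, f2⟩ := hpt R rR hR hRg L2 h2
  have := inj (by simp [hx, hxB]) (by simp [hy, hyB]) (e2.trans f2.symm)
  rw [e1, f1, this]

lemma IsCap.nucleus (h : IsCap q X) (hq : q % 2 = 0) {B L : Submodule F V}
    (rB : finrank F B = 3) (hB : nn X B = q + 1) (rL : finrank F L = 2) (hL : nn X L = 1)
    (hLB : L ≤ B) : ∃ N ≤ L, finrank F N = 1 ∧ N ∉ X ∧ ∀ x ∈ X, x ≤ B → nn X (N ⊔ x) = 1 := by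
  have hq2 := h.two_lt
  obtain ⟨P, hP, hPL⟩ := nn_pos.1 (by omega : 0 < nn X L)
  obtain ⟨x, hx, hxB, hne⟩ := nn_two (by omega : 2 ≤ nn X B) P
  obtain ⟨t, ht⟩ : (tg X x B).Nonempty := by
    rw [← Finset.card_pos, h.oval_tg_card rB hB hx hxB]; omega
  rw [mem_tg (h.pt x hx)] at ht
  obtain ⟨hxt, htB, rt, hnt⟩ := ht
  have hLt : L ≠ t := by
    rintro rfl
    exact hne (uniq_one hL hx hP hxt hPL)
  have rN : finrank F ↥(L ⊓ t) = 1 := rk_inf hLB htB hLt rL rt rB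
  have hN : L ⊓ t ∉ X := fun hN =>
    hne ((uniq_one hnt hx hN hxt inf_le_right).trans (uniq_one hL hP hN hPL inf_le_left).symm)
  refine ⟨L ⊓ t, inf_le_left, rN, hN, ?_⟩
  intro y hy hyB
  have r2 := h.join rN hN hy
  have a := h.line _ r2
  have b : 0 < nn X (L ⊓ t ⊔ y) := nn_pos.2 ⟨y, hy, le_sup_right⟩
  by_contra hc
  exact hLt (h.oval_secant hq rB hB r2 (by omega) (sup_le (inf_le_left.trans hLB) hyB) rN hN
    le_sup_left ((mem_tg rN).2 ⟨inf_le_left, hLB, rL, hL⟩)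
    ((mem_tg rN).2 ⟨inf_le_right, htB, rt, hnt⟩))

lemma IsCap.nucleus_lines (h : IsCap q X) {B N M : Submodule F V}
    (rB : finrank F B = 3) (hB : nn X B = q + 1) (rN : finrank F N = 1) (hN : N ∉ X)
    (hNB : N ≤ B) (hnuc : ∀ x ∈ X, x ≤ B → nn X (N ⊔ x) = 1)
    (rM : finrank F M = 2) (hNM : N ≤ M) (hMB : M ≤ B) : nn X M = 1 := by
  have h1 := h.sum_lines rN hN hNB
  have h2 : ∀ L ∈ cov N B, nn X L ≤ 1 := by
    intro L hL
    rw [mem_cov, rN] at hL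
    by_contra hc
    obtain ⟨x, hx, hxL⟩ := nn_pos.1 (by omega : 0 < nn X L)
    have := hnuc x hx (hxL.trans hL.2.1)
    rw [h.join_eq rN hN hx hL.2.2 hL.1 hxL] at this
    omega
  have h3 : ∑ L ∈ cov N B, nn X L = ∑ L ∈ cov N B, 1 := by
    rw [← h1, hB, Finset.sum_const, cov_two hNB (by rw [rB, rN]), h.cardF, smul_eq_mul, mul_one]
  exact (Finset.sum_eq_sum_iff_of_le h2).1 h3 M (mem_cov.2 ⟨hNM, hMB, by rw [rM, rN]⟩)

lemma IsCap.nucleus_secant (h : IsCap q X) (hq : q % 2 = 0) {B N g P : Submodule F V}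
    (rB : finrank F B = 3) (hB : nn X B = q + 1) (rN : finrank F N = 1) (hN : N ∉ X)
    (hNB : N ≤ B) (hnuc : ∀ x ∈ X, x ≤ B → nn X (N ⊔ x) = 1)
    (rg : finrank F g = 2) (hNg : N ≤ g) (hg : nn X g = 2) (hP : P ∈ X) (hPB : P ≤ B) :
    ∃ A : Submodule F V, finrank F A = 3 ∧ P ≤ A ∧ nn X A = 1 := by
  have hlines := fun M => h.nucleus_lines (M := M) rB hB rN hN hNB hnuc
  have hT := h.rkT
  -- secants through N are not in B
  have sec_nle : ∀ k : Submodule F V, finrank F k = 2 → N ≤ k → nn X k = 2 → ¬ k ≤ B := by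
    intro k rk hk h2 hkB
    have := hlines k rk hk hkB
    omega
  -- planes through N different from B meet B in a tangent
  have meet : ∀ W : Submodule F V, finrank F W = 3 → N ≤ W → W ≠ B →
      finrank F ↥(W ⊓ B) = 2 ∧ nn X (W ⊓ B) = 1 := by
    intro W rW hNW hne
    have r := rk_inf le_top le_top hne rW rB hT
    exact ⟨r, hlines _ r (le_inf hNW hNB) inf_le_right⟩
  have secpl : ∀ k : Submodule F V, finrank F k = 2 → N ≤ k → nn X k = 2 →
      ∀ W : Submodule F V, finrank F W = 3 → k ≤ W → nn X W = q + 1 := by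
    intro k rk hk h2 W rW hkW
    refine h.secant_planes rk h2 ?_ rW hkW
    intro U rU hkU
    have hne : U ≠ B := by
      rintro rfl
      exact sec_nle k rk hk h2 hkU
    obtain ⟨r, e⟩ := meet U rU (hk.trans hkU) hne
    exact h.tg_le rU r e inf_le_left
  -- tangents through N lie in B
  have tgB : ∀ x ∈ X, nn X (N ⊔ x) = 1 → x ≤ B := by
    intro x hx hxt
    by_contra hxB
    have hxg : ¬ x ≤ g := fun e => by
      rw [h.join_eq rN hN hx rg hNg e] at hxt
      omega
    have rW : finrank F ↥(g ⊔ x) = 3 := by rw [rk_sup (h.pt x hx) hxg, rg]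
    have hne : g ⊔ x ≠ B := fun e => hxB (e ▸ le_sup_right)
    have hNW : N ≤ g ⊔ x := hNg.trans le_sup_left
    obtain ⟨r, e⟩ := meet _ rW hNW hne
    have := h.oval_secant hq rW (secpl g rg hNg hg _ rW le_sup_left) rg hg le_sup_left rN hN hNg
      ((mem_tg rN).2 ⟨le_inf hNW hNB, inf_le_left, r, e⟩)
      ((mem_tg rN).2 ⟨le_sup_left, sup_le hNW le_sup_right, h.join rN hN hx, hxt⟩)
    apply hxB
    have h3 : x ≤ (g ⊔ x) ⊓ B := this ▸ le_sup_right
    exact h3.trans inf_le_right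
  have rl := h.join rN hN hP
  have hl := hnuc P hP hPB
  by_contra hc
  push Not at hc
  have all : ∀ W ∈ cov (N ⊔ P) ⊤, nd X (N ⊔ P) W = q := by
    intro W hW
    rw [mem_cov, rl] at hW
    obtain ⟨hlW, -, rW⟩ := hW
    have hNW : N ≤ W := le_sup_left.trans hlW
    have hPW : P ≤ W := le_sup_right.trans hlW
    have h1 := hc W rW hPW
    have h2 : 0 < nn X W := nn_pos.2 ⟨P, hP, hPW⟩
    have h4 : nn X W = q + 1 := by
      by_cases hWB : W = B
      · rw [hWB, hB]
      obtain ⟨y, hy, hyW, hne⟩ := nn_two (by omega : 2 ≤ nn X W) P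
      have ry := h.join rN hN hy
      have hyt : nn X (N ⊔ y) ≠ 1 := by
        intro e
        have hyB := tgB y hy e
        obtain ⟨r, e⟩ := meet W rW hNW hWB
        exact hne (uniq_one e hy hP (le_inf hyW hyB) (le_inf hPW hPB))
      have a := h.line _ ry
      have b : 0 < nn X (N ⊔ y) := nn_pos.2 ⟨y, hy, le_sup_right⟩
      exact secpl _ ry le_sup_left (by omega) W rW (sup_le hNW hyW)
    rw [nn_add hlW] at h4
    omega
  have h1 := h.sum_planes (N ⊔ P)
  rw [Finset.sum_congr rfl all, Finset.sum_const, h.planes_card rl, hl, smul_eq_mul] at h1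
  have := h.two_lt
  nlinarith

lemma IsCap.tangent_plane (h : IsCap q X) {A P W : Submodule F V} (rA : finrank F A = 3)
    (hA : nn X A = 1) (hP : P ∈ X) (hPA : P ≤ A) (rW : finrank F W = 3) (hPW : P ≤ W) :
    nn X W ≤ q + 1 := by
  by_cases e : W = A
  · rw [e, hA]; omega
  have r := rk_inf le_top le_top e rW rA h.rkT
  refine h.tg_le rW r ?_ inf_le_left
  have a := nn_mono (X := X) (inf_le_right : W ⊓ A ≤ A)
  have b : 0 < nn X (W ⊓ A) := nn_pos.2 ⟨P, hP, le_inf hPW hPA⟩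
  omega

/-- points all of whose joins with `X` are tangents -/
def Full (X : Finset (Submodule F V)) (N : Submodule F V) : Prop :=
  finrank F N = 1 ∧ N ∉ X ∧ ∀ x ∈ X, nn X (N ⊔ x) = 1

lemma IsCap.exists_full (h : IsCap q X) {H P L : Submodule F V} (rH : finrank F H = 3)
    (hH : nn X H = q + 2) (hP : P ∈ X) (hPH : P ≤ H) (rL : finrank F L = 2) (hL : nn X L = 1)
    (hPL : P ≤ L) : ∃ N ≤ L, Full X N := by
  have hq := h.hyper_even rH hH
  obtain ⟨B, rB, hLB, hB⟩ := h.exists_oval rL hL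
  obtain ⟨N, hNL, rN, hN, hnuc⟩ := h.nucleus hq rB hB rL hL hLB
  refine ⟨N, hNL, rN, hN, ?_⟩
  intro x hx
  by_contra hc
  have ry := h.join rN hN hx
  have a := h.line _ ry
  have b : 0 < nn X (N ⊔ x) := nn_pos.2 ⟨x, hx, le_sup_right⟩
  obtain ⟨A, rA, hPA, hA⟩ := h.nucleus_secant hq rB hB rN hN (hNL.trans hLB) hnuc ry le_sup_left
    (by omega) hP (hPL.trans hLB)
  have := h.tangent_plane rA hA hP hPA rH hPH
  omega

lemma IsCap.full_uniq (h : IsCap q X) {L N M : Submodule F V} (rL : finrank F L = 2)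
    (hL : nn X L = 1) (hN : Full X N) (hM : Full X M) (hNL : N ≤ L) (hML : M ≤ L) : N = M := by
  by_contra hne
  have hq2 := h.two_lt
  obtain ⟨B, rB, hLB, hB⟩ := h.exists_oval rL hL
  obtain ⟨P, hP, hPL⟩ := nn_pos.1 (by omega : 0 < nn X L)
  obtain ⟨x, hx, hxB, hxP⟩ := nn_two (by omega : 2 ≤ nn X B) P
  have e := h.oval_tg_uniq rB hB hx
    ((mem_tg (h.pt x hx)).2 ⟨le_sup_right, sup_le (hNL.trans hLB) hxB, h.join hN.1 hN.2.1 hx,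
      hN.2.2 x hx⟩)
    ((mem_tg (h.pt x hx)).2 ⟨le_sup_right, sup_le (hML.trans hLB) hxB, h.join hM.1 hM.2.1 hx,
      hM.2.2 x hx⟩)
  have e1 := line_eq hN.1 hM.1 hne (h.join hN.1 hN.2.1 hx) le_sup_left (e ▸ le_sup_left)
  have e2 := line_eq hN.1 hM.1 hne rL hNL hML
  have hxL : x ≤ L := by rw [← e2, e1]; exact le_sup_right
  exact hxP (uniq_one hL hx hP hxL hPL)

/-- the set of full points -/
noncomputable def FS (X : Finset (Submodule F V)) : Finset (Submodule F V) :=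
  univ.filter (fun N => Full X N)

lemma mem_FS {N : Submodule F V} : N ∈ FS X ↔ Full X N := by simp [FS]

lemma IsCap.full_inj (h : IsCap q X) {x : Submodule F V} (hx : x ∈ X) :
    Set.InjOn (fun N => N ⊔ x) (FS X : Set (Submodule F V)) := by
  intro N hN M hM e
  have hN := mem_FS.1 (Finset.mem_coe.1 hN)
  have hM := mem_FS.1 (Finset.mem_coe.1 hM)
  simp only at e
  exact h.full_uniq (h.join hN.1 hN.2.1 hx) (hN.2.2 x hx) hN hM le_sup_left (e ▸ le_sup_left)

lemma IsCap.full_maps (h : IsCap q X) {x : Submodule F V} (hx : x ∈ X) :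
    (FS X).image (fun N => N ⊔ x) ⊆ tg X x ⊤ := by
  intro L hL
  obtain ⟨N, hN, rfl⟩ := Finset.mem_image.1 hL
  have hN := mem_FS.1 hN
  exact (mem_tg (h.pt x hx)).2 ⟨le_sup_right, le_top, h.join hN.1 hN.2.1 hx, hN.2.2 x hx⟩

lemma IsCap.full_card (h : IsCap q X) {H : Submodule F V} (rH : finrank F H = 3)
    (hH : nn X H = q + 2) : (FS X).card = q + 1 := by
  obtain ⟨P, hP, hPH⟩ := nn_pos.1 (by omega : 0 < nn X H)
  rw [← h.tg_top hP, ← Finset.card_image_of_injOn (h.full_inj hP)]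
  congr 1
  refine Finset.Subset.antisymm (h.full_maps hP) ?_
  intro L hL
  rw [mem_tg (h.pt P hP)] at hL
  obtain ⟨N, hNL, hN⟩ := h.exists_full rH hH hP hPH hL.2.2.1 hL.2.2.2 hL.1
  exact Finset.mem_image.2 ⟨N, mem_FS.2 hN, h.join_eq hN.1 hN.2.1 hP hL.2.2.1 hNL hL.1⟩

/-- planes meeting `X` contain exactly `q+2` points of `X ∪ FS X` -/
lemma IsCap.full_plane (h : IsCap q X) (hF : (FS X).card = q + 1) {W : Submodule F V}
    (rW : finrank F W = 3) (hW : 0 < nn X W) : nn X W + nn (FS X) W = q + 2 := by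
  obtain ⟨x, hx, hxW⟩ := nn_pos.1 hW
  have h1 := h.tg_plane hx hxW rW
  have him : (FS X).image (fun N => N ⊔ x) = tg X x ⊤ :=
    Finset.eq_of_subset_of_card_le (h.full_maps hx)
      (by rw [h.tg_top hx, Finset.card_image_of_injOn (h.full_inj hx), hF])
  have h2 : ((FS X).filter (fun N => N ≤ W)).image (fun N => N ⊔ x) = tg X x W := by
    ext L
    rw [mem_tg (h.pt x hx)]
    constructor
    · intro hL
      obtain ⟨N, hN, rfl⟩ := Finset.mem_image.1 hL
      rw [mem_filter, mem_FS] at hN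
      exact ⟨le_sup_right, sup_le hN.2 hxW, h.join hN.1.1 hN.1.2.1 hx, hN.1.2.2 x hx⟩
    · rintro ⟨a, b, c, d⟩
      have : L ∈ (FS X).image (fun N => N ⊔ x) := by
        rw [him]; exact (mem_tg (h.pt x hx)).2 ⟨a, le_top, c, d⟩
      obtain ⟨N, hN, rfl⟩ := Finset.mem_image.1 this
      exact Finset.mem_image.2 ⟨N, mem_filter.2 ⟨hN, le_sup_left.trans b⟩, rfl⟩
  have h3 : nn (FS X) W = (tg X x W).card := by
    rw [← h2, Finset.card_image_of_injOn]
    · rfl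
    · exact (h.full_inj hx).mono (Finset.coe_subset.2 (Finset.filter_subset _ _))
  omega

lemma IsCap.full_line (h : IsCap q X) {N M : Submodule F V} (hN : Full X N) (hM : Full X M)
    (hne : N ≠ M) : nn X (N ⊔ M) = 0 := by
  by_contra hc
  obtain ⟨x, hx, hxL⟩ := nn_pos.1 (Nat.pos_of_ne_zero hc)
  have rL := rk_line hN.1 hM.1 hne
  have e := h.join_eq hN.1 hN.2.1 hx rL le_sup_left hxL
  exact hne (h.full_uniq rL (e ▸ hN.2.2 x hx) hN hM le_sup_left le_sup_right)

lemma IsCap.full_line_plane (h : IsCap q X) (hF : (FS X).card = q + 1) {N M W : Submodule F V}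
    (hN : Full X N) (hM : Full X M) (hne : N ≠ M) (rW : finrank F W = 3) (hW : N ⊔ M ≤ W) :
    0 < nn X W := by
  by_contra hc
  have rL := rk_line hN.1 hM.1 hne
  have h0 := h.full_line hN hM hne
  have h1 := h.sum_planes (N ⊔ M)
  have h2 : ∀ U ∈ cov (N ⊔ M) ⊤, nd X (N ⊔ M) U ≤ if U = W then 0 else q := by
    intro U hU
    rw [mem_cov, rL] at hU
    have a := nn_add (X := X) hU.1
    split_ifs with e
    · subst e; omega
    · rcases Nat.eq_zero_or_pos (nn X U) with h0 | h0
      · omega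
      have b := h.full_plane hF hU.2.2 h0
      have c := two_le_nn (mem_FS.2 hN) (mem_FS.2 hM) hne (le_sup_left.trans hU.1)
        (le_sup_right.trans hU.1)
      omega
  have hWm : W ∈ cov (N ⊔ M) ⊤ := mem_cov.2 ⟨hW, le_top, by rw [rW, rL]⟩
  have h4 := Finset.sum_le_sum h2
  rw [← Finset.add_sum_erase _ (fun U => if U = W then 0 else q) hWm, Finset.sum_congr rfl (g := fun _ => q)
    (fun U hU => if_neg (Finset.ne_of_mem_erase hU)), Finset.sum_const,
    Finset.card_erase_of_mem hWm, h.planes_card rL] at h4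
  simp only [if_true, zero_add, Nat.add_sub_cancel, smul_eq_mul] at h4
  nlinarith

lemma IsCap.full_three (h : IsCap q X) (hF : (FS X).card = q + 1) {N M K : Submodule F V}
    (hN : Full X N) (hM : Full X M) (hK : Full X K) (hNM : N ≠ M) (hNK : N ≠ K) (hMK : M ≠ K) :
    ¬ K ≤ N ⊔ M := by
  intro hc
  have rL := rk_line hN.1 hM.1 hNM
  have h0 := h.full_line hN hM hNM
  have h1 := h.sum_planes (N ⊔ M)
  have hq := h.two_lt
  have h2 : ∀ U ∈ cov (N ⊔ M) ⊤, nd X (N ⊔ M) U ≤ q - 1 := by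
    intro U hU
    rw [mem_cov, rL] at hU
    have a := nn_add (X := X) hU.1
    rcases Nat.eq_zero_or_pos (nn X U) with h0 | h0
    · omega
    have b := h.full_plane hF hU.2.2 h0
    have c : 2 < nn (FS X) U := by
      unfold nn
      refine Finset.two_lt_card.2 ⟨N, ?_, M, ?_, K, ?_, hNM, hNK, hMK⟩
      · exact mem_filter.2 ⟨mem_FS.2 hN, le_sup_left.trans hU.1⟩
      · exact mem_filter.2 ⟨mem_FS.2 hM, le_sup_right.trans hU.1⟩
      · exact mem_filter.2 ⟨mem_FS.2 hK, hc.trans hU.1⟩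
    omega
  have h4 := Finset.sum_le_sum h2
  rw [Finset.sum_const, h.planes_card rL, smul_eq_mul] at h4
  obtain ⟨p, rfl⟩ : ∃ p, q = p + 1 := ⟨q - 1, by omega⟩
  simp only [Nat.add_sub_cancel] at h4
  nlinarith

/-- external lines through a full point contain another full point -/
lemma IsCap.full_ext (h : IsCap q X) (hF : (FS X).card = q + 1) {N L : Submodule F V}
    (hN : Full X N) (rL : finrank F L = 2) (hNL : N ≤ L) (hL : nn X L = 0) :
    ∃ M, Full X M ∧ N ≠ M ∧ N ⊔ M = L := by
  have hNF := mem_FS.2 hN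
  -- count external lines
  have h1 : ((cov N ⊤).filter (fun L => nn X L = 0)).card = q := by
    have a := h.sum_lines hN.1 hN.2.1 le_top
    have b : ∀ L ∈ cov N ⊤, nn X L + (if nn X L = 0 then 1 else 0) = 1 := by
      intro L hL
      rw [mem_cov, hN.1] at hL
      split_ifs with e
      · omega
      · obtain ⟨x, hx, hxL⟩ := nn_pos.1 (Nat.pos_of_ne_zero e)
        rw [← h.join_eq hN.1 hN.2.1 hx hL.2.2 hL.1 hxL, hN.2.2 x hx]
    have c := Finset.sum_congr rfl b
    rw [Finset.sum_add_distrib, ← a, nn_top, h.cardX, ← Finset.card_filter,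
      ← Finset.card_eq_sum_ones, cov_three le_top (by rw [h.rkT, hN.1]), h.cardF] at c
    omega
  have inj : Set.InjOn (fun M => N ⊔ M) ((FS X).erase N : Finset _) := by
    intro M hM K hK e
    have hM := Finset.mem_erase.1 (Finset.mem_coe.1 hM)
    have hK := Finset.mem_erase.1 (Finset.mem_coe.1 hK)
    simp only at e
    by_contra hne
    exact h.full_three hF hN (mem_FS.1 hM.2) (mem_FS.1 hK.2) hM.1.symm hK.1.symm hne
      (e ▸ le_sup_right)
  have sub : ((FS X).erase N).image (fun M => N ⊔ M) ⊆ (cov N ⊤).filter (fun L => nn X L = 0) := by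
    intro K hK
    obtain ⟨M, hM, rfl⟩ := Finset.mem_image.1 hK
    rw [Finset.mem_erase, mem_FS] at hM
    refine mem_filter.2 ⟨mem_cov.2 ⟨le_sup_left, le_top, ?_⟩, h.full_line hN hM.2 hM.1.symm⟩
    rw [rk_line hN.1 hM.2.1 hM.1.symm, hN.1]
  have e := Finset.eq_of_subset_of_card_le sub (by
    rw [h1, Finset.card_image_of_injOn inj, Finset.card_erase_of_mem hNF, hF]; omega)
  have : L ∈ ((FS X).erase N).image (fun M => N ⊔ M) := by
    rw [e]
    exact mem_filter.2 ⟨mem_cov.2 ⟨hNL, le_top, by rw [rL, hN.1]⟩, hL⟩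
  obtain ⟨M, hM, rfl⟩ := Finset.mem_image.1 this
  rw [Finset.mem_erase, mem_FS] at hM
  exact ⟨M, hM.2, hM.1.symm, rfl⟩

lemma IsCap.full_zero (h : IsCap q X) (hF : (FS X).card = q + 1) {W : Submodule F V}
    (rW : finrank F W = 3) (hW : nn X W = 0) : nn (FS X) W = 0 := by
  by_contra hc
  obtain ⟨N, hN, hNW⟩ := nn_pos.1 (Nat.pos_of_ne_zero hc)
  have hN := mem_FS.1 hN
  obtain ⟨L, hL⟩ : (cov N W).Nonempty := by
    rw [← Finset.card_pos, cov_two hNW (by rw [rW, hN.1])]; omega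
  rw [mem_cov, hN.1] at hL
  have h0 := nn_mono (X := X) hL.2.1
  obtain ⟨M, hM, hne, rfl⟩ := h.full_ext hF hN hL.2.2 hL.1 (by omega)
  have := h.full_line_plane hF hN hM hne rW hL.2.1
  omega

lemma IsCap.no_hyper (h : IsCap q X) {W : Submodule F V} (rW : finrank F W = 3) :
    nn X W ≤ q + 1 := by
  by_contra hc
  have hW : nn X W = q + 2 := by have := h.le_q2 rW; omega
  have hF := h.full_card rW hW
  have hq := h.two_lt
  have fW := h.full_plane hF rW (by omega)
  obtain ⟨R, hRW, rR, hR⟩ := h.exists_off rW (by nlinarith)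
  obtain ⟨L, hRL, hLW, rL, hL⟩ : ∃ L : Submodule F V, R ≤ L ∧ L ≤ W ∧ finrank F L = 2 ∧
      nn X L = 0 := by
    by_contra hcc
    push Not at hcc
    have a := h.sum_lines rR hR hRW
    have b : ∀ L ∈ cov R W, 2 ≤ nn X L := by
      intro L hL
      rw [mem_cov, rR] at hL
      have := hcc L hL.1 hL.2.1 hL.2.2
      rcases h.hyper_line rW hW hL.2.2 hL.2.1 with e | e <;> omega
    have c := Finset.sum_le_sum b
    rw [← a, Finset.sum_const, cov_two hRW (by rw [rW, rR]), h.cardF, smul_eq_mul] at c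
    omega
  have hLF : nn (FS X) L = 0 := by have := nn_mono (X := FS X) hLW; omega
  have h1 := h.sum_planes L
  have h2 := sum_nd (X := FS X) (fun x hx => (mem_FS.1 hx).1) (le_top : L ≤ ⊤)
  have h3 := nn_add (X := FS X) (le_top : L ≤ ⊤)
  rw [nn_top, hF, hLF, h2] at h3
  have key : (q + 2) ∣ ∑ U ∈ cov L ⊤, (nd X L U + nd (FS X) L U) := by
    apply Finset.dvd_sum
    intro U hU
    rw [mem_cov, rL] at hU
    have a := nn_add (X := X) hU.1
    have b := nn_add (X := FS X) hU.1
    rcases Nat.eq_zero_or_pos (nn X U) with h0 | h0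
    · have c := h.full_zero hF hU.2.2 h0
      have : nd X L U + nd (FS X) L U = 0 := by omega
      rw [this]; exact dvd_zero _
    · have c := h.full_plane hF hU.2.2 h0
      have : nd X L U + nd (FS X) L U = q + 2 := by omega
      rw [this]
  rw [Finset.sum_add_distrib] at key
  have e : (∑ U ∈ cov L ⊤, nd X L U) + (∑ U ∈ cov L ⊤, nd (FS X) L U)
      = (q + 2) * (q - 1) + 4 := by
    obtain ⟨p, rfl⟩ : ∃ p, q = p + 1 := ⟨q - 1, by omega⟩
    simp only [Nat.add_sub_cancel]
    nlinarith
  rw [e] at key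
  have := Nat.le_of_dvd (by norm_num) ((Nat.dvd_add_right (Dvd.intro _ rfl)).1 key)
  omega

theorem IsCap.main (h : IsCap q X) {W : Submodule F V} (rW : finrank F W = 3) :
    nn X W = 1 ∨ nn X W = q + 1 := h.concl (fun _ r => h.no_hyper r) rW
end geom

section vectors

lemma span_inj {F V : Type} [Field F] [AddCommGroup V] [Module F V] {n : ℕ} (v : Fin n → V)
    (hprop : ∀ i j, i ≠ j → ∀ c : F, v j ≠ c • v i) :
    Function.Injective (fun i => Submodule.span F {v i}) := by
  intro i j e
  by_contra hne
  simp only at e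
  have : v j ∈ Submodule.span F {v i} := by
    rw [e]; exact Submodule.mem_span_singleton_self _
  obtain ⟨c, hc⟩ := Submodule.mem_span_singleton.1 this
  exact hprop i j hne c hc.symm

lemma isCap_of_vectors {q : ℕ} (F : Type) [Field F] [Fintype F] [D : DecidableEq F]
    (hF : Fintype.card F = q) (hq : 2 < q)
    (v : Fin (q ^ 2 + 1) → (Fin 4 → F))
    (hnz : ∀ i, v i ≠ 0)
    (hprop : ∀ i j, i ≠ j → ∀ c : F, v j ≠ c • v i)
    (hind : ∀ i j k, i ≠ j → i ≠ k → j ≠ k → LinearIndependent F ![v i, v j, v k]) :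
    IsCap q (Finset.univ.image (fun i => Submodule.span F {v i})) where
  cardF := hF
  two_lt := hq
  rkV := by simp
  pt := by
    intro x hx
    obtain ⟨i, -, rfl⟩ := Finset.mem_image.1 hx
    exact finrank_span_singleton (hnz i)
  cardX := by
    rw [Finset.card_image_of_injective _ (span_inj v hprop)]; simp
  line := by
    intro L rL
    by_contra hc
    obtain ⟨a, ha, b, hb, c, hc, hab, hac, hbc⟩ := Finset.two_lt_card.1 (not_le.1 hc)
    simp only [mem_filter, mem_image, mem_univ, true_and] at ha hb hc
    obtain ⟨⟨i, rfl⟩, hi⟩ := ha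
    obtain ⟨⟨j, rfl⟩, hj⟩ := hb
    obtain ⟨⟨k, rfl⟩, hk⟩ := hc
    have li := hind i j k (fun e => hab (by rw [e])) (fun e => hac (by rw [e]))
      (fun e => hbc (by rw [e]))
    have h1 := finrank_span_eq_card li
    have h2 : Submodule.span F (Set.range ![v i, v j, v k]) ≤ L := by
      rw [Submodule.span_le]
      rintro _ ⟨m, rfl⟩
      fin_cases m
      · simpa using hi
      · simpa using hj
      · simpa using hk
    have := Submodule.finrank_mono h2
    simp only [Fintype.card_fin] at h1
    omega

lemma weight_eq {m : ℕ} (F : Type) [Field F] [Fintype F] [D : DecidableEq F]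
    (v : Fin m → (Fin 4 → F))
    (hprop : ∀ i j, i ≠ j → ∀ c : F, v j ≠ c • v i) (u : Fin 4 → F) (hu : u ≠ 0) :
    ∃ W : Submodule F (Fin 4 → F), finrank F W = 3 ∧ (∀ x, x ∈ W ↔ ∑ k, u k * x k = 0) ∧
      hammingNorm (fun i => ∑ k, u k * v i k)
        + nn (Finset.univ.image (fun i => Submodule.span F {v i})) W = m := by
  let f : Module.Dual F (Fin 4 → F) := dotProductEquiv F (Fin 4) u
  have hf : f ≠ 0 := by simpa [f] using hu
  have hfx : ∀ x, f x = ∑ k, u k * x k := by intro x; rfl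
  have hmem : ∀ x, x ∈ LinearMap.ker f ↔ ∑ k, u k * x k = 0 := by
    intro x; rw [LinearMap.mem_ker, hfx]
  refine ⟨LinearMap.ker f, ?_, hmem, ?_⟩
  · have := Module.Dual.finrank_ker_add_one_of_ne_zero hf
    simp at this
    omega
  · have e : nn (Finset.univ.image (fun i => Submodule.span F {v i})) (LinearMap.ker f)
        = (Finset.univ.filter (fun i => ∑ k, u k * v i k = 0)).card := by
      unfold nn
      rw [Finset.filter_image, Finset.card_image_of_injective _ (span_inj v hprop)]
      congr 1
      ext i
      simp only [mem_filter, mem_univ, true_and, Submodule.span_singleton_le_iff_mem, hmem]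
    rw [e, hammingNorm, add_comm]
    have := Finset.card_filter_add_card_filter_not (s := (Finset.univ : Finset (Fin m)))
      (fun i => ∑ k, u k * v i k = 0)
    rw [Finset.card_univ, Fintype.card_fin] at this
    convert this using 2

lemma exists_secant {q : ℕ} (F : Type) [Field F] [Fintype F] [D : DecidableEq F] (hq : 2 < q)
    (v : Fin (q ^ 2 + 1) → (Fin 4 → F)) (hnz : ∀ i, v i ≠ 0)
    (hprop : ∀ i j, i ≠ j → ∀ c : F, v j ≠ c • v i) :
    ∃ u : Fin 4 → F, u ≠ 0 ∧ hammingNorm (fun i => ∑ k, u k * v i k) < q ^ 2 := by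
  let i : Fin (q ^ 2 + 1) := ⟨0, by positivity⟩
  let j : Fin (q ^ 2 + 1) := ⟨1, by nlinarith⟩
  have hij : i ≠ j := by simp [i, j]
  have hs := (span_inj v hprop).ne hij
  have rL := rk_line (finrank_span_singleton (K := F) (hnz i)) (finrank_span_singleton (hnz j)) hs
  have hlt : Submodule.span F {v i} ⊔ Submodule.span F {v j} < ⊤ := by
    rw [lt_top_iff_ne_top]
    intro e
    rw [e] at rL
    simp at rL
  obtain ⟨f, hf, hle⟩ := Submodule.exists_le_ker_of_lt_top _ hlt
  let u := (dotProductEquiv F (Fin 4)).symm f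
  have hfu : ∀ x, ∑ k, u k * x k = f x := by
    intro x
    change dotProductEquiv F (Fin 4) u x = f x
    simp [u]
  have hu : u ≠ 0 := by simpa [u] using hf
  refine ⟨u, hu, ?_⟩
  obtain ⟨W, rW, hW, hw⟩ := weight_eq F v hprop u hu
  have hxi : ∀ l, v l ∈ LinearMap.ker f → Submodule.span F {v l} ≤ W := by
    intro l hl
    rw [Submodule.span_singleton_le_iff_mem, hW, hfu]
    exact hl
  have := two_le_nn (X := Finset.univ.image (fun i => Submodule.span F {v i})) (W := W)
    (Finset.mem_image_of_mem _ (mem_univ i)) (Finset.mem_image_of_mem _ (mem_univ j)) hs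
    (hxi i (hle (Submodule.mem_sup_left (Submodule.mem_span_singleton_self _))))
    (hxi j (hle (Submodule.mem_sup_right (Submodule.mem_span_singleton_self _))))
  omega

end vectors
end OvoidAux


/-- Given nonzero vectors v₁, …, v_{q²+1} in GF(q)⁴ spanning the points of
an ovoid in PG(3,q) (pairwise non-proportional, no three linearly dependent), the code
C_V = { (u·v₁, …, u·v_{q²+1}) : u ∈ GF(q)⁴ } is a [q²+1, 4, q²−q] code over GF(q)
whose only nonzero weights are q²−q and q². -/
theorem ovoid_gives_ovoid_code {q : ℕ} (F : Type) [Field F] [Fintype F] [DecidableEq F]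
    (hF : Fintype.card F = q) (hq : 2 < q)
    (v : Fin (q ^ 2 + 1) → (Fin 4 → F))
    (hnz : ∀ i, v i ≠ 0)
    (hprop : ∀ i j, i ≠ j → ∀ c : F, v j ≠ c • v i)
    (hind : ∀ i j k, i ≠ j → i ≠ k → j ≠ k → LinearIndependent F ![v i, v j, v k]) :
    let CV : Set (Fin (q ^ 2 + 1) → F) :=
      Set.range (fun u : Fin 4 → F => fun i => ∑ k, u k * v i k)
    Module.finrank F (Submodule.span F CV) = 4 ∧
    (∀ c ∈ CV, c ≠ 0 → q ^ 2 - q ≤ hammingNorm c) ∧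
    (∃ c ∈ CV, c ≠ 0 ∧ hammingNorm c = q ^ 2 - q) ∧
    (∀ c ∈ CV, c ≠ 0 → hammingNorm c = q ^ 2 - q ∨ hammingNorm c = q ^ 2) := by
  intro CV
  let X : Finset (Submodule F (Fin 4 → F)) :=
    Finset.univ.image (fun i => Submodule.span F {v i})
  have hcap : OvoidAux.IsCap q X := OvoidAux.isCap_of_vectors F hF hq v hnz hprop hind
  have wt : ∀ u : Fin 4 → F, u ≠ 0 →
      hammingNorm (fun i => ∑ k, u k * v i k) = q ^ 2 - q ∨
      hammingNorm (fun i => ∑ k, u k * v i k) = q ^ 2 := by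
    intro u hu
    obtain ⟨W, rW, -, hW⟩ := OvoidAux.weight_eq F v hprop u hu
    rcases hcap.main rW with h | h
    · right; rw [h] at hW; omega
    · left; rw [h] at hW; omega
  have hpos : 0 < q ^ 2 - q := by
    have : q < q ^ 2 := by nlinarith
    omega
  have hpos2 : 0 < q ^ 2 := by positivity
  let T : (Fin 4 → F) →ₗ[F] (Fin (q ^ 2 + 1) → F) :=
    { toFun := fun u i => ∑ k, u k * v i k
      map_add' := by
        intro a b; ext i; simp [add_mul, Finset.sum_add_distrib]
      map_smul' := by
        intro a b; ext i; simp [Finset.mul_sum, mul_assoc] }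
  have hT : Function.Injective T := by
    rw [← LinearMap.ker_eq_bot, LinearMap.ker_eq_bot']
    intro u hu
    by_contra hne
    have hu' : (fun i => ∑ k, u k * v i k) = 0 := hu
    have := wt u hne
    rw [hu', hammingNorm_zero] at this
    omega
  have hCV : CV = (LinearMap.range T : Set _) := by
    ext c; simp [CV, T]
  have hall : ∀ c ∈ CV, c ≠ 0 → hammingNorm c = q ^ 2 - q ∨ hammingNorm c = q ^ 2 := by
    rintro c ⟨u, rfl⟩ hc
    apply wt u
    rintro rfl
    apply hc
    ext i
    simp
  refine ⟨?_, ?_, ?_, hall⟩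
  · rw [hCV, Submodule.span_eq, LinearMap.finrank_range_of_inj hT]
    simp
  · intro c hc h0
    rcases hall c hc h0 with h | h <;> omega
  · obtain ⟨u, hu, hw⟩ := OvoidAux.exists_secant F hq v hnz hprop
    refine ⟨_, ⟨u, rfl⟩, ?_, ?_⟩
    · intro h0
      have h0' : (fun i => ∑ k, u k * v i k) = 0 := h0
      have := wt u hu
      rw [h0', hammingNorm_zero] at this
      omega
    · rcases wt u hu with h | h
      · exact h
      · change hammingNorm (fun i => ∑ k, u k * v i k) = _
        rw [h] at hw
        omega
end

section
/- Let q > 2 be a prime power and let V be an ovoid in PG(3,q). Then every plane of PG(3,q) (i.e., every three-dimensional GF(q)-subspace of GF(q)^4, viewed as the set of points it contains) intersects V in either exactly 1 point or exactly q+1 points. -/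
open Module Finset

set_option linter.unusedSectionVars false

section OvoidHelpers

open Classical in
/-- Number of elements of `K` in the subspace `X`. -/
noncomputable def ovN {F E : Type} [Field F] [AddCommGroup E] [Module F E]
    (K : Finset E) (X : Submodule F E) : ℕ := (K.filter (· ∈ X)).card

open Classical in
/-- Subspaces between `A` and `B` of dimension one more than `A`. -/
noncomputable def ovI {F E : Type} [Field F] [AddCommGroup E] [Module F E] [Fintype E]
    (A B : Submodule F E) : Finset (Submodule F E) :=
  univ.filter (fun X => A ≤ X ∧ X ≤ B ∧ finrank F X = finrank F A + 1)

/-- Caps, as sets of vectors. -/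
structure OvCap {F E : Type} [Field F] [AddCommGroup E] [Module F E]
    (K : Finset E) : Prop where
  zero : ovN K (⊥ : Submodule F E) = 0
  one : ∀ x : Submodule F E, finrank F x = 1 → ovN K x ≤ 1
  two : ∀ L : Submodule F E, finrank F L = 2 → ovN K L ≤ 2

lemma ov_sum_one {α : Type} (s : Finset α) (f : α → ℕ) (m : ℕ) (h : ∀ i ∈ s, f i ≤ m)
    (i : α) (hi : i ∈ s) : ∑ x ∈ s, f x + m ≤ s.card * m + f i := by
  classical
  have h1 := Finset.sum_le_card_nsmul (s.erase i) f m (fun x hx => h x (Finset.mem_of_mem_erase hx))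
  rw [← Finset.add_sum_erase s f hi, ← Finset.card_erase_add_one hi]
  simp only [smul_eq_mul] at h1
  nlinarith

lemma ov_sum_two {α : Type} (s : Finset α) (f : α → ℕ) (m : ℕ) (h : ∀ i ∈ s, f i ≤ m)
    (i j : α) (hi : i ∈ s) (hj : j ∈ s) (hij : i ≠ j) :
    ∑ x ∈ s, f x + 2 * m ≤ s.card * m + f i + f j := by
  classical
  have h1 := ov_sum_one (s.erase i) f m (fun x hx => h x (Finset.mem_of_mem_erase hx)) j
    (Finset.mem_erase.2 ⟨hij.symm, hj⟩)
  rw [← Finset.add_sum_erase s f hi, ← Finset.card_erase_add_one hi]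
  nlinarith

lemma ov_sum_le {α : Type} (s : Finset α) (f : α → ℕ) (m : ℕ) (h : ∀ i ∈ s, f i ≤ m) :
    ∑ x ∈ s, f x ≤ s.card * m := by
  simpa using Finset.sum_le_card_nsmul s f m h

variable {F E : Type} [Field F] [Fintype F] [AddCommGroup E] [Module F E] [Fintype E]
  [FiniteDimensional F E]

lemma ovI_mem {A B X : Submodule F E} :
    X ∈ ovI A B ↔ A ≤ X ∧ X ≤ B ∧ finrank F X = finrank F A + 1 := by
  simp [ovI]

lemma ov_mono (K : Finset E) {X Y : Submodule F E} (h : X ≤ Y) : ovN K X ≤ ovN K Y := by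
  classical
  apply Finset.card_le_card
  intro v; simp only [Finset.mem_filter]; exact fun ⟨a, b⟩ => ⟨a, h b⟩

lemma ov_partition (K : Finset E) (A B : Submodule F E) (hAB : A ≤ B) :
    ovN K B = ovN K A + ∑ X ∈ ovI A B, (ovN K X - ovN K A) := by
  classical
  have key : ∀ X : Submodule F E, A ≤ X →
      ovN K X = ovN K A + (K.filter (fun v => v ∈ X ∧ v ∉ A)).card := by
    intro X hX
    unfold ovN
    rw [← Finset.card_union_of_disjoint]
    · congr 1
      ext v
      simp only [Finset.mem_filter, Finset.mem_union]
      constructor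
      · rintro ⟨a, b⟩
        by_cases h : v ∈ A
        · exact Or.inl ⟨a, h⟩
        · exact Or.inr ⟨a, b, h⟩
      · rintro (⟨a, b⟩ | ⟨a, b, c⟩)
        · exact ⟨a, hX b⟩
        · exact ⟨a, b⟩
    · rw [Finset.disjoint_left]
      intro v
      simp only [Finset.mem_filter]
      rintro ⟨_, b⟩ ⟨_, _, c⟩
      exact c b
  rw [key B hAB]
  congr 1
  have : ∀ X ∈ ovI A B, ovN K X - ovN K A = (K.filter (fun v => v ∈ X ∧ v ∉ A)).card := by
    intro X hX
    rw [key X (ovI_mem.1 hX).1]; omega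
  rw [Finset.sum_congr rfl this,
    Finset.card_eq_sum_card_fiberwise (f := fun v => A ⊔ Submodule.span F {v}) (t := ovI A B)]
  · apply Finset.sum_congr rfl
    intro X hX
    obtain ⟨h1, h2, h3⟩ := ovI_mem.1 hX
    congr 1
    ext v
    simp only [Finset.mem_filter]
    constructor
    · rintro ⟨⟨a, b, c⟩, d⟩
      refine ⟨a, ?_, c⟩
      rw [← d]
      exact Submodule.mem_sup_right (Submodule.mem_span_singleton_self v)
    · rintro ⟨a, b, c⟩
      refine ⟨⟨a, h2 b, c⟩, ?_⟩
      apply Submodule.eq_of_le_of_finrank_eq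
      · exact sup_le h1 ((Submodule.span_singleton_le_iff_mem v X).2 b)
      · rw [Submodule.finrank_sup_span_singleton c, h3]
  · intro v hv
    simp only [Finset.coe_filter, Set.mem_ofPred_eq] at hv
    obtain ⟨a, b, c⟩ := hv
    exact ovI_mem.2 ⟨le_sup_left, sup_le hAB ((Submodule.span_singleton_le_iff_mem v B).2 b),
      Submodule.finrank_sup_span_singleton c⟩

lemma ov_univ (X : Submodule F E) :
    ovN (Finset.univ : Finset E) X = Fintype.card F ^ finrank F X := by
  classical
  unfold ovN
  rw [← Module.card_eq_pow_finrank (K := F) (V := X), Fintype.card_subtype]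

lemma ovI_card (A B : Submodule F E) (hAB : A ≤ B) (h : finrank F B = finrank F A + 2) :
    (ovI A B).card = Fintype.card F + 1 := by
  have h1 := ov_partition Finset.univ A B hAB
  have h2 : ∀ X ∈ ovI A B, ovN (Finset.univ : Finset E) X - ovN (Finset.univ : Finset E) A
      = Fintype.card F ^ finrank F A * (Fintype.card F - 1) := by
    intro X hX
    rw [ov_univ, ov_univ, (ovI_mem.1 hX).2.2, pow_succ, Nat.mul_sub, mul_one]
  rw [Finset.sum_congr rfl h2, ov_univ, ov_univ, h, Finset.sum_const, smul_eq_mul] at h1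
  have hq : 2 ≤ Fintype.card F := Fintype.one_lt_card
  obtain ⟨r, hr⟩ : ∃ r, Fintype.card F = r + 1 := ⟨Fintype.card F - 1, by omega⟩
  rw [hr] at h1 ⊢
  simp only [Nat.add_sub_cancel] at h1
  have hpos : 0 < (r + 1) ^ finrank F A := by positivity
  have h3 : (r + 1) ^ finrank F A * (r * (r + 2)) = (r + 1) ^ finrank F A * (r * (ovI A B).card) := by
    have : (r + 1) ^ finrank F A * (r * (r + 2)) + (r + 1) ^ finrank F A
      = (r + 1) ^ (finrank F A + 2) := by ring
    rw [h1] at this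
    linarith
  have h4 := Nat.eq_of_mul_eq_mul_left hpos h3
  have h5 := Nat.eq_of_mul_eq_mul_left (by omega : 0 < r) h4
  omega

lemma ov_sum (K : Finset E) (A B : Submodule F E) (hAB : A ≤ B)
    (h : finrank F B = finrank F A + 2) :
    ∑ X ∈ ovI A B, ovN K X = ovN K B + Fintype.card F * ovN K A := by
  have h1 := ov_partition K A B hAB
  have h2 : ∑ X ∈ ovI A B, ovN K X = ∑ X ∈ ovI A B, ((ovN K X - ovN K A) + ovN K A) := by
    apply Finset.sum_congr rfl
    intro X hX
    have := ov_mono K (ovI_mem.1 hX).1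
    omega
  rw [h2, Finset.sum_add_distrib, Finset.sum_const, ovI_card A B hAB h, smul_eq_mul]
  rw [h1]; ring

/-- Two distinct hyperplanes of `C` meet in codimension two. -/
lemma ov_inf {A B C : Submodule F E} {m : ℕ} (hA : A ≤ C) (hB : B ≤ C)
    (fA : finrank F A = m + 1) (fB : finrank F B = m + 1) (fC : finrank F C = m + 2)
    (hne : A ≠ B) : finrank F (A ⊓ B : Submodule F E) = m := by
  have h := Submodule.finrank_sup_add_finrank_inf_eq A B
  have h1 : finrank F (A ⊔ B : Submodule F E) ≤ m + 2 := by
    rw [← fC]; exact Submodule.finrank_mono (sup_le hA hB)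
  have h2 : finrank F (A ⊓ B : Submodule F E) ≤ m := by
    by_contra hc
    have e1 : A ⊓ B = A := Submodule.eq_of_le_of_finrank_le inf_le_left (by omega)
    have e2 : A ⊓ B = B := Submodule.eq_of_le_of_finrank_le inf_le_right (by omega)
    exact hne (e1.symm.trans e2)
  omega

lemma ov_exists_point {K : Finset E} {X : Submodule F E} (hK : OvCap (F := F) K)
    (h : 1 ≤ ovN K X) : ∃ x : Submodule F E, x ≤ X ∧ finrank F x = 1 ∧ ovN K x = 1 := by
  classical
  obtain ⟨v, hv⟩ := Finset.card_pos.1 h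
  rw [Finset.mem_filter] at hv
  have hv0 : v ≠ 0 := by
    rintro rfl
    have := hK.zero
    unfold ovN at this
    rw [Finset.card_eq_zero] at this
    have h2 : (0 : E) ∈ K.filter (· ∈ (⊥ : Submodule F E)) := by simp [hv.1]
    rw [this] at h2
    simp at h2
  have f1 := finrank_span_singleton (K := F) hv0
  refine ⟨Submodule.span F {v}, (Submodule.span_singleton_le_iff_mem v X).2 hv.2, f1, ?_⟩
  apply le_antisymm (hK.one _ f1)
  apply Finset.card_pos.2
  exact ⟨v, by simp [hv.1, Submodule.mem_span_singleton_self]⟩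

/-- If `x` is a point of the cap in `X`, and so is `y`, and `X` has only one cap point,
they agree. -/
lemma ov_point_unique {K : Finset E} {x y X : Submodule F E}
    (hx : finrank F x = 1) (hy : finrank F y = 1) (nx : 1 ≤ ovN K x) (ny : 1 ≤ ovN K y)
    (hK : OvCap (F := F) K)
    (hxX : x ≤ X) (hyX : y ≤ X) (nX : ovN K X ≤ 1) : x = y := by
  classical
  obtain ⟨v, hv⟩ := Finset.card_pos.1 nx
  obtain ⟨w, hw⟩ := Finset.card_pos.1 ny
  rw [Finset.mem_filter] at hv hw
  have hvw : v = w := Finset.card_le_one.1 nX v (by simp [hv.1, hxX hv.2]) w (by simp [hw.1, hyX hw.2])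
  subst hvw
  by_contra hne
  have h0 : 1 ≤ ovN K (x ⊓ y) := Finset.card_pos.2 ⟨v, by simp [hv.1, hv.2, hw.2]⟩
  have h1 : finrank F (x ⊓ y : Submodule F E) = 0 := by
    by_contra hc
    have e1 : x ⊓ y = x := Submodule.eq_of_le_of_finrank_le inf_le_left (by omega)
    have e2 : x ⊓ y = y := Submodule.eq_of_le_of_finrank_le inf_le_right (by omega)
    exact hne (e1.symm.trans e2)
  rw [Submodule.finrank_eq_zero] at h1
  rw [h1, hK.zero] at h0
  omega

lemma ov_sum_pl {q : ℕ} (hF : Fintype.card F = q) (K : Finset E) {x τ : Submodule F E}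
    (hx : finrank F x = 1) (hτ : finrank F τ = 3) (h : x ≤ τ) :
    ∑ X ∈ ovI x τ, ovN K X = ovN K τ + q * ovN K x ∧ (ovI x τ).card = q + 1 := by
  subst hF
  exact ⟨ov_sum K x τ h (by omega), ovI_card x τ h (by omega)⟩

lemma ov_sum_top {q : ℕ} (hF : Fintype.card F = q) (hE : finrank F E = 4) (K : Finset E)
    {L : Submodule F E} (hL : finrank F L = 2) :
    ∑ X ∈ ovI L ⊤, ovN K X = K.card + q * ovN K L ∧ (ovI L ⊤).card = q + 1 := by
  subst hF
  have h : finrank F (⊤ : Submodule F E) = finrank F L + 2 := by rw [finrank_top]; omega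
  refine ⟨?_, ovI_card L ⊤ le_top h⟩
  rw [ov_sum K L ⊤ le_top h]
  simp [ovN]

lemma ov_sum_ln {q : ℕ} (hF : Fintype.card F = q) {K : Finset E} (hK : OvCap (F := F) K)
    {L : Submodule F E} (hL : finrank F L = 2) :
    ∑ X ∈ ovI ⊥ L, ovN K X = ovN K L ∧ (ovI ⊥ L).card = q + 1 := by
  subst hF
  have h : finrank F L = finrank F (⊥ : Submodule F E) + 2 := by simp [hL]
  refine ⟨?_, ovI_card ⊥ L bot_le h⟩
  rw [ov_sum K ⊥ L bot_le h, hK.zero]; simp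

/-- lines through `x` in `τ` -/
lemma ovI_mem1 {x τ X : Submodule F E} (hx : finrank F x = 1) :
    X ∈ ovI x τ ↔ x ≤ X ∧ X ≤ τ ∧ finrank F X = 2 := by
  rw [ovI_mem, hx]

/-- planes through `L` -/
lemma ovI_mem2 {L X : Submodule F E} (hL : finrank F L = 2) :
    X ∈ ovI L ⊤ ↔ L ≤ X ∧ finrank F X = 3 := by
  rw [ovI_mem, hL]; simp

/-- points on `L` -/
lemma ovI_mem0 {L X : Submodule F E} :
    X ∈ ovI ⊥ L ↔ X ≤ L ∧ finrank F X = 1 := by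
  rw [ovI_mem]; simp

lemma ov_le_two {K : Finset E} (hK : OvCap (F := F) K) {x τ : Submodule F E}
    (hx : finrank F x = 1) : ∀ X ∈ ovI x τ, ovN K X ≤ 2 :=
  fun X hX => hK.two X ((ovI_mem1 hx).1 hX).2.2

lemma ov_arc {q : ℕ} (hF : Fintype.card F = q) {K : Finset E} (hK : OvCap (F := F) K)
    {L τ : Submodule F E} (hL : finrank F L = 2) (hτ : finrank F τ = 3) (h : L ≤ τ)
    (nL : ovN K L = 1) : ovN K τ ≤ q + 1 := by
  obtain ⟨x, hxL, fx, nx⟩ := ov_exists_point (X := L) hK (by omega)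
  obtain ⟨h1, h2⟩ := ov_sum_pl hF K fx hτ (hxL.trans h)
  have h3 := ov_sum_one (ovI x τ) (ovN K) 2 (ov_le_two hK fx) L ((ovI_mem1 fx).2 ⟨hxL, h, hL⟩)
  rw [h1, h2, nx, nL] at h3
  omega

lemma ov_arc2 {q : ℕ} (hF : Fintype.card F = q) {K : Finset E} (hK : OvCap (F := F) K)
    {τ : Submodule F E} (hτ : finrank F τ = 3) : ovN K τ ≤ q + 2 := by
  by_contra hc
  obtain ⟨x, hx, fx, nx⟩ := ov_exists_point (X := τ) hK (by omega)
  obtain ⟨h1, h2⟩ := ov_sum_pl hF K fx hτ hx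
  have h3 := ov_sum_le (ovI x τ) (ovN K) 2 (ov_le_two hK fx)
  rw [h1, h2, nx] at h3
  omega

lemma ov_exists_tangent {q : ℕ} (hF : Fintype.card F = q) {K : Finset E}
    (hK : OvCap (F := F) K)
    {x τ : Submodule F E} (hx : finrank F x = 1) (hτ : finrank F τ = 3) (h : x ≤ τ)
    (nx : ovN K x = 1) (nτ : ovN K τ ≤ q + 1) :
    ∃ L, x ≤ L ∧ L ≤ τ ∧ finrank F L = 2 ∧ ovN K L = 1 := by
  by_contra hc
  push Not at hc
  obtain ⟨h1, h2⟩ := ov_sum_pl hF K hx hτ h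
  have h3 : ∀ X ∈ ovI x τ, ovN K X = 2 := by
    intro X hX
    have a := ov_le_two hK hx X hX
    obtain ⟨b, c, d⟩ := (ovI_mem1 hx).1 hX
    have e := hc X b c d
    have f := ov_mono K b
    omega
  rw [Finset.sum_congr rfl h3, Finset.sum_const, h2, nx, smul_eq_mul] at h1
  omega

lemma ov_unique_tangent {q : ℕ} (hF : Fintype.card F = q) {K : Finset E}
    (hK : OvCap (F := F) K)
    {x τ L L' : Submodule F E} (hx : finrank F x = 1) (hτ : finrank F τ = 3)
    (nx : ovN K x = 1) (nτ : ovN K τ = q + 1)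
    (hL : x ≤ L) (hLτ : L ≤ τ) (fL : finrank F L = 2) (nL : ovN K L = 1)
    (hL' : x ≤ L') (hLτ' : L' ≤ τ) (fL' : finrank F L' = 2) (nL' : ovN K L' = 1) :
    L = L' := by
  by_contra hne
  obtain ⟨h1, h2⟩ := ov_sum_pl hF K hx hτ (hL.trans hLτ)
  have h3 := ov_sum_two (ovI x τ) (ovN K) 2 (ov_le_two hK hx) L L'
    ((ovI_mem1 hx).2 ⟨hL, hLτ, fL⟩) ((ovI_mem1 hx).2 ⟨hL', hLτ', fL'⟩) hne
  rw [h1, h2, nx, nL, nL', nτ] at h3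
  omega

/-- a line contains a point off the cap -/
lemma ov_off_line {q : ℕ} (hF : Fintype.card F = q) (hq : 2 < q) {K : Finset E}
    (hK : OvCap (F := F) K) {L : Submodule F E} (hL : finrank F L = 2) :
    ∃ y, y ≤ L ∧ finrank F y = 1 ∧ ovN K y = 0 := by
  by_contra hc
  push Not at hc
  obtain ⟨h1, h2⟩ := ov_sum_ln hF hK hL
  have h3 : (ovI ⊥ L).card • 1 ≤ ∑ X ∈ ovI ⊥ L, ovN K X := by
    apply Finset.card_nsmul_le_sum
    intro X hX
    obtain ⟨a, b⟩ := ovI_mem0.1 hX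
    exact Nat.one_le_iff_ne_zero.2 (hc X a b)
  rw [h1, h2] at h3
  have := hK.two L hL
  simp at h3
  omega

lemma ov_exists_line {q : ℕ} (hF : Fintype.card F = q)
    {x τ : Submodule F E} (hx : finrank F x = 1) (hτ : finrank F τ = 3) (h : x ≤ τ) :
    ∃ L, x ≤ L ∧ L ≤ τ ∧ finrank F L = 2 := by
  obtain ⟨h1, h2⟩ := ov_sum_pl hF (∅ : Finset E) hx hτ h
  obtain ⟨L, hL⟩ := Finset.card_pos.1 (by omega : 0 < (ovI x τ).card)
  exact ⟨L, (ovI_mem1 hx).1 hL⟩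

lemma ov_even {q : ℕ} (hF : Fintype.card F = q) (hq : 2 < q) {K : Finset E}
    (hK : OvCap (F := F) K) {τ : Submodule F E} (hτ : finrank F τ = 3)
    (nτ : ovN K τ = q + 2) : Even q := by
  obtain ⟨x, hx, fx, nx⟩ := ov_exists_point (X := τ) hK (by omega)
  obtain ⟨L, _, hLτ, fL⟩ := ov_exists_line hF fx hτ hx
  obtain ⟨y, hy, fy, ny⟩ := ov_off_line hF hq hK fL
  obtain ⟨h1, h2⟩ := ov_sum_pl hF K fy hτ (hy.trans hLτ)
  have h3 : Even (∑ X ∈ ovI y τ, ovN K X) := by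
    apply Finset.even_sum
    intro X hX
    obtain ⟨a, b, c⟩ := (ovI_mem1 fy).1 hX
    have := hK.two X c
    have h4 : ovN K X ≠ 1 := fun h => by
      have := ov_arc hF hK c hτ b h
      omega
    interval_cases ovN K X
    · exact ⟨0, rfl⟩
    · omega
    · exact ⟨1, rfl⟩
  rw [h1, nτ, ny] at h3
  obtain ⟨r, hr⟩ := h3
  exact ⟨r - 1, by omega⟩

/-- In a `(q+1)`-plane every point off the cap lies on a tangent. -/
lemma ov_odd_tangent {q : ℕ} (hF : Fintype.card F = q) (he : Even q) {K : Finset E}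
    (hK : OvCap (F := F) K) {y τ : Submodule F E} (hτ : finrank F τ = 3)
    (nτ : ovN K τ = q + 1) (hy : y ≤ τ) (fy : finrank F y = 1) (ny : ovN K y = 0) :
    ∃ L, y ≤ L ∧ L ≤ τ ∧ finrank F L = 2 ∧ ovN K L = 1 := by
  by_contra hc
  push Not at hc
  obtain ⟨h1, h2⟩ := ov_sum_pl hF K fy hτ hy
  have h3 : Even (∑ X ∈ ovI y τ, ovN K X) := by
    apply Finset.even_sum
    intro X hX
    obtain ⟨a, b, c⟩ := (ovI_mem1 fy).1 hX
    have := hK.two X c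
    have h4 := hc X a b c
    interval_cases ovN K X
    · exact ⟨0, rfl⟩
    · omega
    · exact ⟨1, rfl⟩
  rw [h1, nτ, ny] at h3
  obtain ⟨r, hr⟩ := h3
  obtain ⟨p, hp⟩ := he
  omega

lemma ov_point_count {K : Finset E} (hK : OvCap (F := F) K) (τ : Submodule F E) :
    ((ovI ⊥ τ).filter (fun x => ovN K x = 1)).card = ovN K τ := by
  rw [ov_partition K ⊥ τ bot_le, hK.zero, Finset.card_filter, zero_add]
  apply Finset.sum_congr rfl
  intro x hx
  have := hK.one x (ovI_mem0.1 hx).2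
  split_ifs <;> omega

/-- In a `(q+1)`-plane, a point on a secant is on at most one tangent. -/
lemma ov_secant_point {q : ℕ} (hF : Fintype.card F = q) (he : Even q) {K : Finset E}
    (hK : OvCap (F := F) K) {y s τ L L' : Submodule F E} (hτ : finrank F τ = 3)
    (nτ : ovN K τ = q + 1) (hs : s ≤ τ) (fs : finrank F s = 2) (ns : ovN K s = 2)
    (hy : y ≤ s) (fy : finrank F y = 1)
    (hL : y ≤ L) (hLτ : L ≤ τ) (fL : finrank F L = 2) (nL : ovN K L = 1)
    (hL' : y ≤ L') (hLτ' : L' ≤ τ) (fL' : finrank F L' = 2) (nL' : ovN K L' = 1) :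
    L = L' := by
  classical
  set A := (ovI ⊥ τ).filter (fun x => ovN K x = 1) with hA
  have hAm : ∀ x, x ∈ A ↔ x ≤ τ ∧ finrank F x = 1 ∧ ovN K x = 1 := by
    intro x; rw [hA, Finset.mem_filter, ovI_mem0]; tauto
  have ht : ∀ x, ∃ t : Submodule F E, x ∈ A → x ≤ t ∧ t ≤ τ ∧ finrank F t = 2 ∧ ovN K t = 1 := by
    intro x
    by_cases hx : x ∈ A
    · obtain ⟨a, b, c⟩ := (hAm x).1 hx
      obtain ⟨t, ht⟩ := ov_exists_tangent hF hK b hτ a c nτ.le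
      exact ⟨t, fun _ => ht⟩
    · exact ⟨⊥, fun h => absurd h hx⟩
  choose t ht using ht
  have hts : ∀ M : Submodule F E, M ≤ τ → finrank F M = 2 → ovN K M = 1 →
      finrank F (M ⊓ s : Submodule F E) = 1 := by
    intro M a b c
    apply ov_inf a hs b fs hτ
    rintro rfl
    omega
  -- every tangent arises from a point
  have hrep : ∀ M : Submodule F E, M ≤ τ → finrank F M = 2 → ovN K M = 1 →
      ∃ x ∈ A, t x = M := by
    intro M a b c
    obtain ⟨x, hx, fx, nx⟩ := ov_exists_point (X := M) hK (by omega)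
    have hxA : x ∈ A := (hAm x).2 ⟨hx.trans a, fx, nx⟩
    obtain ⟨h1, h2, h3, h4⟩ := ht x hxA
    exact ⟨x, hxA, ov_unique_tangent hF hK fx hτ nx nτ h1 h2 h3 h4 hx a b c⟩
  have hmaps : Set.MapsTo (fun x => t x ⊓ s) (A : Set (Submodule F E)) (ovI ⊥ s : Finset _) := by
    intro x hx
    obtain ⟨h1, h2, h3, h4⟩ := ht x hx
    exact ovI_mem0.2 ⟨inf_le_right, hts _ h2 h3 h4⟩
  have hline : ∀ M z : Submodule F E, M ≤ τ → finrank F M = 2 → ovN K M = 1 → z ≤ M → z ≤ s →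
      finrank F z = 1 → M ⊓ s = z := by
    intro M z a b c d e f
    symm
    apply Submodule.eq_of_le_of_finrank_eq (le_inf d e)
    rw [hts M a b c, f]
  have hsurj : Set.SurjOn (fun x => t x ⊓ s) (A : Set (Submodule F E)) (ovI ⊥ s : Finset _) := by
    intro z hz
    obtain ⟨hz1, fz⟩ := ovI_mem0.1 hz
    have : ∃ M, z ≤ M ∧ M ≤ τ ∧ finrank F M = 2 ∧ ovN K M = 1 := by
      have := hK.one z fz
      rcases (by omega : ovN K z = 0 ∨ ovN K z = 1) with h | h
      · exact ov_odd_tangent hF he hK hτ nτ (hz1.trans hs) fz h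
      · exact ov_exists_tangent hF hK fz hτ (hz1.trans hs) h nτ.le
    obtain ⟨M, a, b, c, d⟩ := this
    obtain ⟨x, hx, rfl⟩ := hrep M b c d
    exact ⟨x, hx, hline _ z b c d a hz1 fz⟩
  have hinj := Finset.injOn_of_surjOn_of_card_le _ hmaps hsurj (by
    rw [(ov_sum_ln hF hK fs).2, hA, ov_point_count hK, nτ])
  obtain ⟨x, hx, rfl⟩ := hrep L hLτ fL nL
  obtain ⟨x', hx', rfl⟩ := hrep L' hLτ' fL' nL'
  have : x = x' := hinj hx hx' (by
    show t x ⊓ s = t x' ⊓ s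
    rw [hline _ y hLτ fL nL hL hy fy, hline _ y hLτ' fL' nL' hL' hy fy])
  rw [this]

lemma ov_nucleus {q : ℕ} (hF : Fintype.card F = q) (he : Even q) (hq : 2 < q) {K : Finset E}
    (hK : OvCap (F := F) K) {t σ : Submodule F E} (hσ : finrank F σ = 3)
    (nσ : ovN K σ = q + 1) (hts : t ≤ σ) (ft : finrank F t = 2) (nt : ovN K t = 1) :
    ∃ N, N ≤ t ∧ finrank F N = 1 ∧ ovN K N = 0 ∧
      ∀ L, N ≤ L → L ≤ σ → finrank F L = 2 → ovN K L = 1 := by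
  classical
  obtain ⟨z, hz, hzt⟩ : ∃ z ∈ (ovI ⊥ σ).filter (fun x => ovN K x = 1), ¬ z ≤ t := by
    by_contra hc
    push Not at hc
    have h1 := ov_point_count hK σ
    have h2 := ov_point_count hK t
    have : (ovI ⊥ σ).filter (fun x => ovN K x = 1) ⊆ (ovI ⊥ t).filter (fun x => ovN K x = 1) := by
      intro x hx
      have := hc x hx
      rw [Finset.mem_filter, ovI_mem0] at hx ⊢
      exact ⟨⟨this, hx.1.2⟩, hx.2⟩
    have := Finset.card_le_card this
    omega
  rw [Finset.mem_filter, ovI_mem0] at hz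
  obtain ⟨⟨hzσ, fz⟩, nz⟩ := hz
  obtain ⟨t', h1, h2, h3, h4⟩ := ov_exists_tangent hF hK fz hσ hzσ nz nσ.le
  have hne : t ≠ t' := by rintro rfl; exact hzt h1
  have fN := ov_inf hts h2 ft h3 hσ hne
  refine ⟨t ⊓ t', inf_le_left, fN, ?_, ?_⟩
  · by_contra hc
    have := ov_point_unique fN fz (Nat.one_le_iff_ne_zero.2 hc) nz.ge hK inf_le_right h1 h4.le
    exact hzt (this ▸ inf_le_left)
  · have hle : ∀ L ∈ ovI (t ⊓ t') σ, ovN K L ≤ 1 := by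
      intro L hL
      obtain ⟨a, b, c⟩ := (ovI_mem1 fN).1 hL
      by_contra hc
      have := hK.two L c
      exact hne (ov_secant_point hF he hK hσ nσ b c (by omega) a fN inf_le_left hts ft nt
        inf_le_right h2 h3 h4)
    intro L a b c
    have hL := (ovI_mem1 fN).2 ⟨a, b, c⟩
    obtain ⟨s1, s2⟩ := ov_sum_pl hF K fN hσ (inf_le_left.trans hts)
    have s3 := ov_sum_one _ (ovN K) 1 hle L hL
    rw [s1, s2, nσ] at s3
    have := hle L hL
    nlinarith [Nat.zero_le (q * ovN K (t ⊓ t'))]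

lemma ov_plane_inter (hE : finrank F E = 4) {σ τ : Submodule F E} (hσ : finrank F σ = 3)
    (hτ : finrank F τ = 3) (hne : τ ≠ σ) : finrank F (τ ⊓ σ : Submodule F E) = 2 :=
  ov_inf (C := ⊤) le_top le_top hτ hσ (by rw [finrank_top, hE]) hne

/-- planes through a nucleus have at most `q+1` points -/
lemma ov_nucleus_plane {q : ℕ} (hF : Fintype.card F = q) (hE : finrank F E = 4) {K : Finset E}
    (hK : OvCap (F := F) K) {N σ τ : Submodule F E} (hσ : finrank F σ = 3)
    (nσ : ovN K σ = q + 1) (hN : N ≤ σ)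
    (h : ∀ L, N ≤ L → L ≤ σ → finrank F L = 2 → ovN K L = 1)
    (hτ : finrank F τ = 3) (hNτ : N ≤ τ) : ovN K τ ≤ q + 1 := by
  by_cases hne : τ = σ
  · rw [hne, nσ]
  have f := ov_plane_inter hE hσ hτ hne
  exact ov_arc hF hK f hτ inf_le_left (h _ (le_inf hNτ hN) inf_le_right f)

/-- planes on a secant all of whose planes have at most `q+1` points -/
lemma ov_secant_bound {q : ℕ} (hF : Fintype.card F = q) (hE : finrank F E = 4) {K : Finset E}
    {s : Submodule F E} (fs : finrank F s = 2) (ns : ovN K s = 2)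
    (h : ∀ τ, s ≤ τ → finrank F τ = 3 → ovN K τ ≤ q + 1) :
    K.card ≤ q ^ 2 + 1 ∧
      (K.card = q ^ 2 + 1 → ∀ τ, s ≤ τ → finrank F τ = 3 → ovN K τ = q + 1) := by
  obtain ⟨s1, s2⟩ := ov_sum_top hF hE K fs
  have hb : ∀ τ ∈ ovI s ⊤, ovN K τ ≤ q + 1 := fun τ hτ =>
    h τ ((ovI_mem2 fs).1 hτ).1 ((ovI_mem2 fs).1 hτ).2
  constructor
  · have := ov_sum_le _ (ovN K) (q + 1) hb
    rw [s1, s2, ns] at this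
    nlinarith
  · intro hk τ a b
    have := ov_sum_one _ (ovN K) (q + 1) hb τ ((ovI_mem2 fs).2 ⟨a, b⟩)
    rw [s1, s2, ns, hk] at this
    have := h τ a b
    nlinarith

/-- Extending a cap by a point on no secant. -/
lemma ov_extend {K : Finset E} (hK : OvCap (F := F) K) {N : Submodule F E}
    (fN : finrank F N = 1) (nN : ovN K N = 0)
    (h : ∀ L, N ≤ L → finrank F L = 2 → ovN K L ≠ 2) :
    ∃ K' : Finset E, OvCap (F := F) K' ∧ K'.card = K.card + 1 := by
  classical
  obtain ⟨v, hv0, hv⟩ := finrank_eq_one_iff'.1 fN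
  have hvN : (v : E) ∈ N := v.2
  have hv0' : (v : E) ≠ 0 := by simpa using hv0
  have hspan : ∀ X : Submodule F E, (v : E) ∈ X → N ≤ X := by
    intro X hX w hw
    obtain ⟨c, hc⟩ := hv ⟨w, hw⟩
    have : w = c • (v : E) := by simpa using (congrArg Subtype.val hc).symm
    rw [this]; exact X.smul_mem c hX
  have hvK : (v : E) ∉ K := by
    intro hvK
    unfold ovN at nN
    rw [Finset.card_eq_zero] at nN
    have : (v : E) ∈ K.filter (· ∈ N) := by simp [hvK]
    rw [nN] at this; simp at this
  have hn : ∀ X : Submodule F E, (v : E) ∉ X → ovN (insert (v : E) K) X = ovN K X := by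
    intro X hX; unfold ovN; rw [Finset.filter_insert, if_neg hX]
  have hn' : ∀ X : Submodule F E, ovN (insert (v : E) K) X ≤ ovN K X + 1 := by
    intro X; unfold ovN; rw [Finset.filter_insert]
    split_ifs
    · exact Finset.card_insert_le _ _
    · omega
  refine ⟨insert (v : E) K, ⟨?_, ?_, ?_⟩, Finset.card_insert_of_notMem hvK⟩
  · rw [hn _ (by simpa using hv0'), hK.zero]
  · intro x fx
    by_cases hx : (v : E) ∈ x
    · have : N = x := Submodule.eq_of_le_of_finrank_eq (hspan x hx) (by omega)
      have := hn' x
      subst_vars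
      omega
    · rw [hn x hx]; exact hK.one x fx
  · intro L fL
    by_cases hx : (v : E) ∈ L
    · have h1 := h L (hspan L hx) fL
      have h2 := hK.two L fL
      have := hn' L
      omega
    · rw [hn L hx]; exact hK.two L fL

/-- a tangent line lies on a `(q+1)`-plane -/
lemma ov_tangent_plane {q : ℕ} (hF : Fintype.card F = q) (hE : finrank F E = 4) {K : Finset E}
    (hK : OvCap (F := F) K) (hk : q ^ 2 + 1 ≤ K.card)
    {t : Submodule F E} (ft : finrank F t = 2) (nt : ovN K t = 1) :
    ∃ σ, t ≤ σ ∧ finrank F σ = 3 ∧ ovN K σ = q + 1 := by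
  by_contra hc
  push Not at hc
  obtain ⟨s1, s2⟩ := ov_sum_top hF hE K ft
  have := ov_sum_le (ovI t ⊤) (ovN K) q (by
    intro τ hτ
    obtain ⟨a, b⟩ := (ovI_mem2 ft).1 hτ
    have := hc τ a b
    have := ov_arc hF hK ft b a nt
    omega)
  rw [s1, s2, nt] at this
  nlinarith

/-- No caps with at least `q^2+2` points (`q > 2` even). -/
lemma ov_no_big_cap {q : ℕ} (hF : Fintype.card F = q) (he : Even q) (hq : 2 < q)
    (hE : finrank F E = 4) {K₀ : Finset E} (hK₀ : OvCap (F := F) K₀) : K₀.card ≤ q ^ 2 + 1 := by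
  classical
  by_contra hk₀
  obtain ⟨K, hKm, hmax⟩ := Finset.exists_max_image
    (Finset.univ.filter (fun K : Finset E => OvCap (F := F) K)) Finset.card
    ⟨K₀, by simp [hK₀]⟩
  have hK : OvCap (F := F) K := by simpa using hKm
  have hk : q ^ 2 + 2 ≤ K.card := by
    have := hmax K₀ (by simp [hK₀])
    omega
  by_cases htan : ∃ t : Submodule F E, finrank F t = 2 ∧ ovN K t = 1
  · obtain ⟨t, ft, nt⟩ := htan
    obtain ⟨σ, htσ, fσ, nσ⟩ := ov_tangent_plane hF hE hK (by omega) ft nt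
    obtain ⟨N, hNt, fN, nN, hN⟩ := ov_nucleus hF he hq hK fσ nσ htσ ft nt
    obtain ⟨K', hK', hc⟩ := ov_extend hK fN nN (by
      intro s hs fs ns
      have := (ov_secant_bound hF hE fs ns (fun τ a b =>
        ov_nucleus_plane hF hE hK fσ nσ (hNt.trans htσ) hN b (hs.trans a))).1
      omega)
    have := hmax K' (by simp [hK'])
    omega
  · push Not at htan
    have hpl : ∀ τ : Submodule F E, finrank F τ = 3 → ovN K τ = 0 ∨ ovN K τ = q + 2 := by
      intro τ fτ
      by_cases h0 : ovN K τ = 0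
      · exact Or.inl h0
      right
      obtain ⟨x, hx, fx, nx⟩ := ov_exists_point (X := τ) hK (by omega)
      have h1 := ov_arc2 hF hK fτ
      by_contra hc
      obtain ⟨L, a, b, c, d⟩ := ov_exists_tangent hF hK fx fτ hx nx (by omega)
      exact htan L c d
    have hdvd : ∀ L : Submodule F E, finrank F L = 2 → q + 2 ∣ K.card + q * ovN K L := by
      intro L fL
      rw [← (ov_sum_top hF hE K fL).1]
      apply Finset.dvd_sum
      intro τ hτ
      rcases hpl τ ((ovI_mem2 fL).1 hτ).2 with h | h <;> simp [h]
    -- a secant line exists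
    obtain ⟨x, -, fx, nx⟩ := ov_exists_point (X := (⊤ : Submodule F E)) hK (by
      have : ovN K (⊤ : Submodule F E) = K.card := by simp [ovN]
      omega)
    obtain ⟨L, hL⟩ : (ovI x (⊤ : Submodule F E)).Nonempty := by
      by_contra hc
      rw [Finset.not_nonempty_iff_eq_empty] at hc
      have := ov_partition K x ⊤ le_top
      rw [hc, Finset.sum_empty, nx] at this
      have h2 : ovN K (⊤ : Submodule F E) = K.card := by simp [ovN]
      omega
    obtain ⟨hxL, -, fL⟩ := (ovI_mem1 fx).1 hL
    have nL : ovN K L = 2 := by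
      have := hK.two L fL
      have := htan L fL
      have := ov_mono K hxL
      omega
    obtain ⟨s1, s2⟩ := ov_sum_top hF hE K fL
    have hall : ∀ τ ∈ ovI L ⊤, ovN K τ = q + 2 := by
      intro τ hτ
      obtain ⟨a, b⟩ := (ovI_mem2 fL).1 hτ
      have := ov_mono K a
      have := hpl τ b
      omega
    rw [Finset.sum_congr rfl hall, Finset.sum_const, s2, nL, smul_eq_mul] at s1
    obtain ⟨τ, hτ⟩ := Finset.card_pos.1 (by omega : 0 < (ovI L ⊤).card)
    obtain ⟨hLτ, fτ⟩ := (ovI_mem2 fL).1 hτ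
    have nτ := hall τ hτ
    obtain ⟨y, hyL, fy, ny⟩ := ov_off_line hF hq hK fL
    obtain ⟨p1, p2⟩ := ov_sum_pl hF K fy fτ (hyL.trans hLτ)
    obtain ⟨M, hM, hM2⟩ : ∃ M ∈ ovI y τ, ovN K M ≠ 2 := by
      by_contra hc
      push Not at hc
      rw [Finset.sum_congr rfl hc, Finset.sum_const, p2, ny, nτ, smul_eq_mul] at p1
      omega
    obtain ⟨-, -, fM⟩ := (ovI_mem1 fy).1 hM
    have nM : ovN K M = 0 := by
      have := hK.two M fM
      have := htan M fM
      omega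
    have hd := hdvd M fM
    rw [nM, mul_zero, add_zero] at hd
    have hd2 : q + 2 ∣ 4 := by
      have e : K.card + 2 * (q + 2) = (q + 2) * (q + 1) + 4 := by nlinarith
      have : q + 2 ∣ (q + 2) * (q + 1) + 4 := by
        rw [← e]; exact Dvd.dvd.add hd (Dvd.intro_left 2 rfl)
      exact (Nat.dvd_add_right (Dvd.intro _ rfl)).1 this
    have := Nat.le_of_dvd (by norm_num) hd2
    omega

/-- No plane meets an ovoid in `q+2` points. -/
lemma ov_no_hyperoval {q : ℕ} (hF : Fintype.card F = q) (hq : 2 < q)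
    (hE : finrank F E = 4) {K : Finset E} (hK : OvCap (F := F) K) (hk : K.card = q ^ 2 + 1)
    {π : Submodule F E} (fπ : finrank F π = 3) : ovN K π ≤ q + 1 := by
  classical
  by_contra hc
  have nπ : ovN K π = q + 2 := by
    have := ov_arc2 hF hK fπ
    omega
  have he := ov_even hF hq hK fπ nπ
  obtain ⟨x, hxπ, fx, nx⟩ := ov_exists_point (X := π) hK (by omega)
  obtain ⟨s₀, hxs, hsπ, fs₀⟩ := ov_exists_line hF fx fπ hxπ
  have hnotan : ∀ L, L ≤ π → finrank F L = 2 → ovN K L ≠ 1 := by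
    intro L a b c
    have := ov_arc hF hK b fπ a c
    omega
  have ns₀ : ovN K s₀ = 2 := by
    have := hK.two s₀ fs₀
    have := hnotan s₀ hsπ fs₀
    have := ov_mono K hxs
    omega
  -- a tangent at x
  obtain ⟨τ₀, hsτ, fτ₀, nτ₀⟩ : ∃ τ, s₀ ≤ τ ∧ finrank F τ = 3 ∧ ovN K τ ≤ q + 1 := by
    by_contra hcc
    push Not at hcc
    obtain ⟨s1, s2⟩ := ov_sum_top hF hE K fs₀
    have : (ovI s₀ ⊤).card • (q + 2) ≤ ∑ τ ∈ ovI s₀ ⊤, ovN K τ := by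
      apply Finset.card_nsmul_le_sum
      intro τ hτ
      obtain ⟨a, b⟩ := (ovI_mem2 fs₀).1 hτ
      exact hcc τ a b
    rw [s1, s2, ns₀, hk, smul_eq_mul] at this
    nlinarith
  obtain ⟨t, hxt, htτ, ft, nt⟩ := ov_exists_tangent hF hK fx fτ₀ (hxs.trans hsτ) nx nτ₀
  obtain ⟨σ, htσ, fσ, nσ⟩ := ov_tangent_plane hF hE hK hk.ge ft nt
  obtain ⟨N, hNt, fN, nN, hN⟩ := ov_nucleus hF he hq hK fσ nσ htσ ft nt
  have hNpl : ∀ τ, N ≤ τ → finrank F τ = 3 → ovN K τ ≤ q + 1 := fun τ a b =>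
    ov_nucleus_plane hF hE hK fσ nσ (hNt.trans htσ) hN b a
  have hsec : ∀ s, N ≤ s → finrank F s = 2 → ovN K s = 2 →
      ∀ τ, s ≤ τ → finrank F τ = 3 → ovN K τ = q + 1 := fun s a b c =>
    (ov_secant_bound hF hE b c (fun τ d e => hNpl τ (a.trans d) e)).2 hk
  obtain ⟨s, hNs, fs, ns⟩ : ∃ s, N ≤ s ∧ finrank F s = 2 ∧ ovN K s = 2 := by
    by_contra hcc
    push Not at hcc
    obtain ⟨K', hK', hc'⟩ := ov_extend hK fN nN hcc
    have := ov_no_big_cap hF he hq hE hK'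
    omega
  -- tangents through N lie in σ
  have htan : ∀ L, N ≤ L → finrank F L = 2 → ovN K L = 1 → L ≤ σ := by
    intro L hNL fL nL
    have hne : L ≠ s := by rintro rfl; omega
    have fi : finrank F (L ⊓ s : Submodule F E) = 1 := by
      have h1 : finrank F N ≤ finrank F (L ⊓ s : Submodule F E) :=
        Submodule.finrank_mono (le_inf hNL hNs)
      have h2 : finrank F (L ⊓ s : Submodule F E) ≤ 2 := by
        rw [← fs]; exact Submodule.finrank_mono inf_le_right
      by_contra hcc
      have e1 : L ⊓ s = L := Submodule.eq_of_le_of_finrank_le inf_le_left (by omega)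
      have e2 : L ⊓ s = s := Submodule.eq_of_le_of_finrank_le inf_le_right (by omega)
      exact hne (e1.symm.trans e2)
    have fρ : finrank F (L ⊔ s : Submodule F E) = 3 := by
      have := Submodule.finrank_sup_add_finrank_inf_eq L s
      omega
    have nρ := hsec s hNs fs ns (L ⊔ s) le_sup_right fρ
    have hρσ : L ⊔ s ≠ σ := by
      intro h
      have := hN s hNs (h ▸ le_sup_right) fs
      omega
    have fM := ov_plane_inter hE fσ fρ hρσ
    have hNM : N ≤ (L ⊔ s) ⊓ σ := le_inf (hNL.trans le_sup_left) (hNt.trans htσ)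
    have nM := hN _ hNM inf_le_right fM
    have := ov_secant_point hF he hK fρ nρ le_sup_right fs ns hNs fN hNL le_sup_left fL nL
      hNM inf_le_left fM nM
    rw [this]; exact inf_le_right
  obtain ⟨s1, s2⟩ := ov_sum_top hF hE K ft
  obtain ⟨τ, hτ, hτn⟩ : ∃ τ ∈ ovI t ⊤, ovN K τ ≠ q + 1 := by
    by_contra hcc
    push Not at hcc
    rw [Finset.sum_congr rfl hcc, Finset.sum_const, s2, nt, hk, smul_eq_mul] at s1
    nlinarith
  obtain ⟨htτ', fτ⟩ := (ovI_mem2 ft).1 hτ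
  have hτσ : τ ≠ σ := by rintro rfl; exact hτn nσ
  have hinter : τ ⊓ σ = t := by
    symm
    apply Submodule.eq_of_le_of_finrank_eq (le_inf htτ' htσ)
    rw [ft, ov_plane_inter hE fσ fτ hτσ]
  have nτ : ovN K τ ≤ 1 := by
    obtain ⟨p1, p2⟩ := ov_sum_pl hF K fN fτ (hNt.trans htτ')
    have hz : ∀ L ∈ ovI N τ, L ≠ t → ovN K L = 0 := by
      intro L hL hLt
      obtain ⟨a, b, c⟩ := (ovI_mem1 fN).1 hL
      have h1 := hK.two L c
      have h2 : ovN K L ≠ 2 := fun h => hτn (hsec L a c h τ b fτ)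
      have h3 : ovN K L ≠ 1 := by
        intro h
        have h4 : L ≤ t := hinter ▸ le_inf b (htan L a c h)
        exact hLt (Submodule.eq_of_le_of_finrank_eq h4 (by omega))
      omega
    rw [Finset.sum_eq_single_of_mem t ((ovI_mem1 fN).2 ⟨hNt, htτ', ft⟩) hz, nN, nt] at p1
    omega
  have hπτ : π ≠ τ := by rintro rfl; omega
  have fM := ov_plane_inter hE fτ fπ hπτ
  have h1 := ov_mono K (inf_le_right : π ⊓ τ ≤ τ)
  have h2 := ov_mono K (le_inf hxπ (hxt.trans htτ') : x ≤ π ⊓ τ)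
  exact hnotan _ inf_le_left fM (by omega)

lemma ov_main {q : ℕ} (hF : Fintype.card F = q) (hq : 2 < q)
    (hE : finrank F E = 4) {K : Finset E} (hK : OvCap (F := F) K) (hk : K.card = q ^ 2 + 1)
    {W : Submodule F E} (fW : finrank F W = 3) : ovN K W = 1 ∨ ovN K W = q + 1 := by
  classical
  have hle : ∀ τ : Submodule F E, finrank F τ = 3 → ovN K τ ≤ q + 1 := fun τ h =>
    ov_no_hyperoval hF hq hE hK hk h
  have htri : ∀ τ : Submodule F E, finrank F τ = 3 →
      ovN K τ = 0 ∨ ovN K τ = 1 ∨ ovN K τ = q + 1 := by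
    intro τ fτ
    by_contra hc
    push Not at hc
    obtain ⟨h0, h1, h2⟩ := hc
    obtain ⟨x, hx, fx, nx⟩ := ov_exists_point (X := τ) hK (by omega)
    obtain ⟨p1, p2⟩ := ov_sum_pl hF K fx fτ hx
    obtain ⟨L, hL, nL⟩ : ∃ L ∈ ovI x τ, ovN K L = 2 := by
      by_contra hcc
      push Not at hcc
      have := ov_sum_le (ovI x τ) (ovN K) 1 (by
        intro L hL
        have := ov_le_two hK fx L hL
        have := hcc L hL
        omega)
      rw [p1, p2, nx] at this
      omega
    obtain ⟨a, b, c⟩ := (ovI_mem1 fx).1 hL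
    exact h2 ((ov_secant_bound hF hE c nL (fun ρ _ h => hle ρ h)).2 hk τ b fτ)
  rcases htri W fW with h0 | h | h
  · exfalso
    -- a line in W
    obtain ⟨x, hx, fx⟩ : ∃ x, x ≤ W ∧ finrank F x = 1 := by
      have hne : W ≠ ⊥ := by rintro rfl; simp at fW
      obtain ⟨v, hv, hv0⟩ := W.ne_bot_iff.1 hne
      exact ⟨Submodule.span F {v}, (Submodule.span_singleton_le_iff_mem v W).2 hv,
        finrank_span_singleton hv0⟩
    obtain ⟨L, -, hLW, fL⟩ := ov_exists_line hF fx fW hx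
    have nL : ovN K L = 0 := by have := ov_mono K hLW; omega
    obtain ⟨s1, s2⟩ := ov_sum_top hF hE K fL
    have hWI : W ∈ ovI L ⊤ := (ovI_mem2 fL).2 ⟨hLW, fW⟩
    have hval : ∀ τ ∈ ovI L ⊤, ovN K τ =
        (if ovN K τ = 0 then 0 else 1) + q * (if ovN K τ = q + 1 then 1 else 0) := by
      intro τ hτ
      rcases htri τ ((ovI_mem2 fL).1 hτ).2 with h | h | h <;> rw [h] <;> simp
      all_goals omega
    rw [Finset.sum_congr rfl hval, Finset.sum_add_distrib, ← Finset.mul_sum, nL, hk] at s1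
    have b1 := ov_sum_one (ovI L ⊤) (fun τ => if ovN K τ = 0 then 0 else 1) 1
      (by intro i _; split_ifs <;> omega) W hWI
    have b2 : ∑ τ ∈ ovI L ⊤, (if ovN K τ = q + 1 then 1 else 0) ≤
        ∑ τ ∈ ovI L ⊤, (if ovN K τ = 0 then 0 else 1) := by
      apply Finset.sum_le_sum
      intro τ _
      split_ifs <;> omega
    rw [s2] at b1
    simp only [h0, if_true] at b1
    generalize (∑ τ ∈ ovI L ⊤, (if ovN K τ = 0 then 0 else 1)) = z at s1 b1 b2
    generalize (∑ τ ∈ ovI L ⊤, (if ovN K τ = q + 1 then 1 else 0)) = y at s1 b2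
    have hz : z ≤ q := by omega
    have hy : q ≤ y + 1 := by
      by_contra hcc
      have : y + 2 ≤ q := by omega
      nlinarith
    have hy2 : y < q := by
      by_contra hcc
      have : q ≤ y := by omega
      nlinarith
    have : y + 1 = q := by omega
    have : q * (y + 1) = q * q := by rw [this]
    nlinarith
  · exact Or.inl h
  · exact Or.inr h

end OvoidHelpers

/-- Every plane of PG(3,q) (three-dimensional GF(q)-subspace of GF(q)⁴)
meets an ovoid V in either exactly 1 point or exactly q+1 points.  The ovoid is given
by a set V of q²+1 nonzero, pairwise non-proportional spanning vectors (one per point),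
no three of which are linearly dependent. -/
theorem plane_meets_ovoid_in_one_or_q_add_one_points {q : ℕ}
    (F : Type) [Field F] [Fintype F]
    (hF : Fintype.card F = q) (hq : 2 < q)
    (V : Set (Fin 4 → F))
    (hcard : V.ncard = q ^ 2 + 1)
    (hnz : ∀ v ∈ V, v ≠ 0)
    (hprop : ∀ u ∈ V, ∀ v ∈ V, u ≠ v → ∀ c : F, v ≠ c • u)
    (hind : ∀ u ∈ V, ∀ v ∈ V, ∀ w ∈ V, u ≠ v → u ≠ w → v ≠ w →
      LinearIndependent F ![u, v, w])
    (W : Submodule F (Fin 4 → F)) (hW : Module.finrank F W = 3) :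
    {v ∈ V | v ∈ W}.ncard = 1 ∨ {v ∈ V | v ∈ W}.ncard = q + 1 := by
  classical
  have hfin : V.Finite := Set.toFinite V
  set K := hfin.toFinset with hKdef
  have hmem : ∀ v, v ∈ K ↔ v ∈ V := fun v => hfin.mem_toFinset
  have hk : K.card = q ^ 2 + 1 := by rw [← hcard, Set.ncard_eq_toFinset_card V hfin]
  have hN : ∀ X : Submodule F (Fin 4 → F), {v ∈ V | v ∈ X}.ncard = ovN K X := by
    intro X
    unfold ovN
    rw [← Set.ncard_coe_finset]
    congr 1
    ext v
    simp [hmem]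
  have hK : OvCap (F := F) K := by
    refine ⟨?_, ?_, ?_⟩
    · unfold ovN
      rw [Finset.card_eq_zero, Finset.filter_eq_empty_iff]
      intro v hv h
      exact hnz v ((hmem v).1 hv) (by simpa using h)
    · intro x fx
      apply Finset.card_le_one.2
      intro u hu v hv
      rw [Finset.mem_filter, hmem] at hu hv
      by_contra hne
      have hu0 : (⟨u, hu.2⟩ : x) ≠ 0 := by
        intro h
        exact hnz u hu.1 (by simpa using congrArg Subtype.val h)
      obtain ⟨c, hc⟩ := (finrank_eq_one_iff_of_nonzero' _ hu0).1 fx ⟨v, hv.2⟩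
      exact hprop u hu.1 v hv.1 hne c (by simpa using (congrArg Subtype.val hc).symm)
    · intro L fL
      by_contra hc
      obtain ⟨u, hu, v, hv, w, hw, huv, huw, hvw⟩ := Finset.two_lt_card.1 (not_le.1 hc)
      rw [Finset.mem_filter, hmem] at hu hv hw
      have hli := hind u hu.1 v hv.1 w hw.1 huv huw hvw
      have h1 := finrank_span_eq_card hli
      have h2 : Submodule.span F (Set.range ![u, v, w]) ≤ L := by
        rw [Submodule.span_le]
        rintro _ ⟨i, rfl⟩
        fin_cases i
        · exact hu.2
        · exact hv.2
        · exact hw.2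
      have := Submodule.finrank_mono h2
      rw [h1, fL] at this
      simp at this
  rw [hN W]
  exact ov_main hF hq (by simp) hK hk hW
end

section
/- Let q be a prime power, r a power of q, α a primitive element of GF(r), and e₁ a positive divisor of r−1. Put d = gcd((r−1)/(q−1), e₁) and fix an integer i with 0 ≤ i < e₁. Then for every x ∈ C_i^{(e₁,r)} and y ∈ GF(q)^*, the product xy lies in C_i^{(d,r)}, and for every z ∈ C_i^{(d,r)} the number of pairs (x, y) with x ∈ C_i^{(e₁,r)}, y ∈ GF(q)^* and xy = z equals (q−1)·d/e₁. -/
theorem aux_mem_Ci {E : Type} [Field E] [Fintype E] (α : Eˣ) (i N : ℕ) (x : E) :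
    (∃ j : ℕ, x = (α : E) ^ i * ((α : E) ^ N) ^ j) ↔
      ∃ h ∈ Subgroup.zpowers (α ^ N), x = ((α ^ i * h : Eˣ) : E) := by
  constructor
  · rintro ⟨j, rfl⟩
    exact ⟨(α ^ N) ^ j, Subgroup.npow_mem_zpowers _ _, by push_cast; rfl⟩
  · rintro ⟨h, hh, rfl⟩
    rw [← mem_powers_iff_mem_zpowers] at hh
    obtain ⟨j, rfl⟩ := hh
    exact ⟨j, by push_cast; rfl⟩

theorem aux_fiber {A B : Type} [Group A] [Group B] (f : A →* B) (w : B) (hw : w ∈ f.range) :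
    {a | f a = w}.ncard = Nat.card f.ker := by
  obtain ⟨a, rfl⟩ := hw
  have : {b | f b = f a} = (fun k => a * k) '' (f.ker : Set A) := by
    ext b
    simp only [Set.mem_setOf_eq, Set.mem_image, SetLike.mem_coe, MonoidHom.mem_ker]
    constructor
    · intro h
      exact ⟨a⁻¹ * b, by simp [h], by simp⟩
    · rintro ⟨k, hk, rfl⟩
      simp [hk]
  rw [this, Set.ncard_image_of_injective _ (mul_right_injective a)]
  rfl

/-- Lemma 2 of the paper: Let q be a prime power, r a power of q,
α a primitive element of GF(r), e₁ a positive divisor of r−1,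
d = gcd((r−1)/(q−1), e₁), and 0 ≤ i < e₁.  Then products xy with x ∈ C_i^{(e₁,r)} and
y ∈ GF(q)^* lie in C_i^{(d,r)}, and every z ∈ C_i^{(d,r)} arises from exactly
(q−1)·d/e₁ pairs (x, y). -/
theorem cyclotomic_class_multiset_lemma {q r : ℕ}
    (F E : Type) [Field F] [Fintype F] [Field E] [Fintype E] [Algebra F E]
    (hF : Fintype.card F = q) (hE : Fintype.card E = r)
    (hr : ∃ t : ℕ, 0 < t ∧ r = q ^ t)
    (α : Eˣ) (hα : ∀ x : Eˣ, x ∈ Subgroup.zpowers α)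
    (e₁ : ℕ) (he₁ : 0 < e₁) (hdvd : e₁ ∣ r - 1)
    (i : ℕ) (hi : i < e₁) :
    let Ci : ℕ → Set E := fun N => {x : E | ∃ j : ℕ, x = (α : E) ^ i * ((α : E) ^ N) ^ j}
    let d : ℕ := Nat.gcd ((r - 1) / (q - 1)) e₁
    (∀ x ∈ Ci e₁, ∀ y : F, y ≠ 0 → x * algebraMap F E y ∈ Ci d) ∧
    (∀ z ∈ Ci d,
      {p : E × F | p.1 ∈ Ci e₁ ∧ p.2 ≠ 0 ∧ p.1 * algebraMap F E p.2 = z}.ncard * e₁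
        = (q - 1) * d) := by
  intro Ci d
  have hq : 1 < q := hF ▸ Fintype.one_lt_card
  have hr1 : 1 < r := hE ▸ Fintype.one_lt_card
  obtain ⟨t, ht, hrt⟩ := hr
  have hqr : (q - 1) ∣ (r - 1) := by
    rw [hrt]; simpa using Nat.sub_dvd_pow_sub_pow q 1 t
  obtain ⟨m, hm⟩ := hqr
  have hmdiv : (r - 1) / (q - 1) = m := by
    rw [hm]; exact Nat.mul_div_cancel_left _ (by omega)
  have hd : d = Nat.gcd m e₁ := by simp only [d, hmdiv]
  clear_value d
  have hcE : Nat.card Eˣ = r - 1 := by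
    rw [Nat.card_units, Nat.card_eq_fintype_card, hE]
  have hcF : Nat.card Fˣ = q - 1 := by
    rw [Nat.card_units, Nat.card_eq_fintype_card, hF]
  have hord : orderOf α = r - 1 := by
    rw [← hcE]; exact orderOf_eq_card_of_forall_mem_zpowers hα
  have hm0 : 0 < m := by
    rcases Nat.eq_zero_or_pos m with h | h
    · subst h; omega
    · exact h
  have hmr : m ∣ r - 1 := ⟨q - 1, by rw [hm, mul_comm]⟩
  have hdm : d ∣ m := hd ▸ Nat.gcd_dvd_left _ _
  have hde : d ∣ e₁ := hd ▸ Nat.gcd_dvd_right _ _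
  have hd0 : 0 < d := Nat.pos_of_dvd_of_pos hde he₁
  have hcard : ∀ N, 0 < N → N ∣ r - 1 → Nat.card (Subgroup.zpowers (α ^ N)) * N = r - 1 := by
    intro N hN hNd
    rw [Nat.card_zpowers, orderOf_pow_of_dvd hN.ne' (hord ▸ hNd), hord]
    exact Nat.div_mul_cancel hNd
  let ι : Fˣ →* Eˣ := Units.map (algebraMap F E).toMonoidHom
  have hι : Function.Injective ι := Units.map_injective (algebraMap F E).injective
  have hle : ι.range ≤ Subgroup.zpowers (α ^ m) := by
    rintro _ ⟨y, rfl⟩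
    obtain ⟨k, hk⟩ := Subgroup.mem_zpowers_iff.mp (hα (ι y))
    have h1 : (ι y) ^ (q - 1) = 1 := by
      rw [← map_pow, ← hcF, pow_card_eq_one', map_one]
    rw [← hk, ← zpow_natCast, ← zpow_mul, ← orderOf_dvd_iff_zpow_eq_one, hord, hm, Nat.cast_mul,
      mul_comm k] at h1
    obtain ⟨c, rfl⟩ := Int.dvd_of_mul_dvd_mul_left (by omega) h1
    rw [← hk]
    exact ⟨c, by simp [zpow_mul]⟩
  have hrange : ι.range = Subgroup.zpowers (α ^ m) := by
    apply Subgroup.eq_of_le_of_card_ge hle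
    have h1 := hcard m hm0 hmr
    rw [hm] at h1
    have h2 : Nat.card ι.range = q - 1 := by
      rw [← hcF]; exact (Nat.card_congr (MonoidHom.ofInjective hι).toEquiv).symm
    rw [h2]
    exact (Nat.eq_of_mul_eq_mul_right hm0 h1).le
  have hsub : ∀ N, d ∣ N → Subgroup.zpowers (α ^ N) ≤ Subgroup.zpowers (α ^ d) := by
    rintro _ ⟨c, rfl⟩
    rw [Subgroup.zpowers_le, pow_mul]
    exact Subgroup.npow_mem_zpowers _ _
  let H := Subgroup.zpowers (α ^ e₁)
  let f : H × Fˣ →* Eˣ := MonoidHom.coprod H.subtype ι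
  have hf : ∀ p, f p = p.1 * ι p.2 := fun p => rfl
  have hfr : f.range = Subgroup.zpowers (α ^ d) := by
    apply le_antisymm
    · rintro _ ⟨p, rfl⟩
      rw [hf]
      exact mul_mem (hsub _ hde p.1.2) (hsub _ hdm (hle ⟨p.2, rfl⟩))
    · rw [Subgroup.zpowers_le]
      have h1 : (α ^ m) ^ (Nat.gcdA m e₁) ∈ ι.range := by
        rw [hrange]; exact Subgroup.zpow_mem_zpowers _ _
      obtain ⟨y, hy⟩ := h1
      refine ⟨(⟨(α ^ e₁) ^ (Nat.gcdB m e₁), Subgroup.zpow_mem_zpowers _ _⟩, y), ?_⟩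
      rw [hf]
      simp only [hy]
      have := Nat.gcd_eq_gcd_ab m e₁
      rw [← hd] at this
      rw [← zpow_natCast α d, this, zpow_add, zpow_mul, zpow_mul, zpow_natCast, zpow_natCast,
        mul_comm]
  refine ⟨?_, ?_⟩
  · intro x hx y hy
    obtain ⟨h, hh, rfl⟩ := (aux_mem_Ci α i e₁ x).mp hx
    refine (aux_mem_Ci α i d _).mpr ⟨h * ι (Units.mk0 y hy), ?_, ?_⟩
    · exact mul_mem (hsub _ hde hh) (hsub _ hdm (hle ⟨_, rfl⟩))
    · simp [ι, mul_assoc]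
  · intro z hz
    obtain ⟨w, hw, rfl⟩ := (aux_mem_Ci α i d z).mp hz
    rw [← hfr] at hw
    have himg : {p : E × F | p.1 ∈ Ci e₁ ∧ p.2 ≠ 0 ∧
        p.1 * algebraMap F E p.2 = ((α ^ i * w : Eˣ) : E)} =
        (fun p : H × Fˣ => (((α ^ i * p.1 : Eˣ) : E), (p.2 : F))) '' {p | f p = w} := by
      ext ⟨x, y⟩
      simp only [Set.mem_setOf_eq, Set.mem_image, Prod.mk.injEq]
      constructor
      · rintro ⟨hx, hy, hxy⟩
        obtain ⟨h, hh, rfl⟩ := (aux_mem_Ci α i e₁ x).mp hx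
        refine ⟨(⟨h, hh⟩, Units.mk0 y hy), ?_, rfl, rfl⟩
        rw [hf]
        apply mul_left_cancel (a := α ^ i)
        apply Units.ext
        rw [← hxy]
        simp [ι, mul_assoc]
      · rintro ⟨p, hp, rfl, rfl⟩
        refine ⟨(aux_mem_Ci α i e₁ _).mpr ⟨p.1, p.1.2, rfl⟩, p.2.ne_zero, ?_⟩
        rw [← hp, hf]
        simp [ι, mul_assoc]
    rw [himg, Set.ncard_image_of_injective, aux_fiber f w hw]
    · have h1 := Subgroup.card_mul_index f.ker
      rw [Subgroup.index_ker, hfr, Nat.card_prod, hcF] at h1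
      have h2 := hcard d hd0 (hde.trans hdvd)
      have h3 := hcard e₁ he₁ hdvd
      change Nat.card H * e₁ = r - 1 at h3
      have hr0 : 0 < r - 1 := by omega
      apply Nat.eq_of_mul_eq_mul_right hr0
      calc Nat.card f.ker * e₁ * (r - 1)
          = (Nat.card f.ker * Nat.card (Subgroup.zpowers (α ^ d))) * (e₁ * d) := by
            rw [← h2]; ring
        _ = (q - 1) * d * (Nat.card H * e₁) := by rw [h1]; ring
        _ = (q - 1) * d * (r - 1) := by rw [h3]
    · rintro ⟨a, b⟩ ⟨a', b'⟩ hab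
      simp only [Prod.mk.injEq] at hab
      obtain ⟨h1, h2⟩ := hab
      have h3 := mul_left_cancel (Units.ext h1)
      exact Prod.ext (Subtype.ext h3) (Units.ext h2)
end

section
/- Let p be a prime, q a power of p, r a power of q, and let χ : GF(r) → ℂ be the canonical additive character χ(x) = exp(2π√(−1)·Tr_{r/p}(x)/p), where Tr_{r/p} is the trace from GF(r) to GF(p). Let N > 1 divide r−1, put d = gcd((r−1)/(q−1), N), and fix a primitive element α of GF(r). For a ∈ GF(r), let Z(r,a) be the number of x ∈ GF(r) with Tr_{r/q}(a x^N) = 0. Then q · Z(r,a) = q + r − 1 + (q−1)·d·∑_{z ∈ C_0^{(d,r)}} χ(a z). -/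
open scoped Classical

lemma aux_sum_hom {G H : Type} [Group G] [Fintype G] [Group H] [DecidableEq H] (f : G →* H) (g : H → ℂ) :
    ((Finset.univ.image f).card : ℂ) * ∑ u, g (f u)
      = (Fintype.card G : ℂ) * ∑ z ∈ Finset.univ.image f, g z := by
  have hf : ∀ z ∈ Finset.univ.image f,
      (Finset.univ.filter (fun u => f u = z)).card
        = (Finset.univ.filter (fun u => f u = 1)).card := by
    intro z hz
    apply MonoidHom.card_fiber_eq_of_mem_range f
    · simpa using hz
    · exact ⟨1, f.map_one⟩
  have h1 : ∑ u, g (f u) = ((Finset.univ.filter (fun u => f u = 1)).card : ℂ) *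
      ∑ z ∈ Finset.univ.image f, g z := by
    rw [Finset.sum_comp g f, Finset.mul_sum]
    refine Finset.sum_congr rfl fun z hz => ?_
    rw [hf z hz, nsmul_eq_mul]
  have h2 : Fintype.card G = (Finset.univ.image f).card *
      (Finset.univ.filter (fun u => f u = 1)).card := by
    rw [← Finset.card_univ, Finset.card_eq_sum_card_image f, Finset.sum_congr rfl hf,
      Finset.sum_const, smul_eq_mul]
  rw [h1, h2]; push_cast; ring

lemma aux_char {p : ℕ} [Fact p.Prime] (F E : Type) [Field F] [Fintype F] [Field E] [Fintype E]
    [Algebra F E] [Algebra (ZMod p) E] (b : E) :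
    ∑ y : F, ZMod.stdAddChar (Algebra.trace (ZMod p) E (algebraMap F E y * b))
      = if Algebra.trace F E b = 0 then (Fintype.card F : ℂ) else 0 := by
  have : CharP E p := charP_of_injective_algebraMap (algebraMap (ZMod p) E).injective p
  have : CharP F p := (algebraMap F E).charP (algebraMap F E).injective p
  let _ : Algebra (ZMod p) F := ZMod.algebra F p
  have : IsScalarTower (ZMod p) F E := IsScalarTower.of_algebraMap_eq' (Subsingleton.elim _ _)
  let ψ : AddChar F ℂ :=
    (ZMod.stdAddChar (N := p)).compAddMonoidHom (Algebra.trace (ZMod p) F).toAddMonoidHom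
  have hψ : ψ.IsPrimitive := by
    apply AddChar.IsPrimitive.of_ne_one
    intro h
    obtain ⟨y, hy⟩ := Algebra.trace_surjective (ZMod p) F 1
    have h1 : ZMod.stdAddChar (Algebra.trace (ZMod p) F y) = (1 : ℂ) := DFunLike.congr_fun h y
    rw [hy, ← (ZMod.stdAddChar (N := p)).map_zero_eq_one] at h1
    exact one_ne_zero (ZMod.injective_stdAddChar h1)
  have := AddChar.sum_mulShift (Algebra.trace F E b) hψ
  push_cast at this
  rw [← this]
  refine Finset.sum_congr rfl fun y _ => ?_
  change _ = ZMod.stdAddChar (Algebra.trace (ZMod p) F _)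
  rw [← Algebra.smul_def, ← Algebra.trace_trace (R := ZMod p) (S := F), map_smul, smul_eq_mul]

def auxHom (F E : Type) [Field F] [Field E] [Algebra F E] (N : ℕ) : Fˣ × Eˣ →* Eˣ :=
  (Units.map (algebraMap F E : F →* E)).coprod (powMonoidHom N)

lemma aux_range {N : ℕ} (F E : Type) [Field F] [Fintype F] [Field E] [Fintype E] [Algebra F E]
    (α : Eˣ) (hα : ∀ x : Eˣ, x ∈ Subgroup.zpowers α) (hm : Fintype.card F - 1 ∣ Fintype.card E - 1) :
    (auxHom F E N).range =
      Subgroup.zpowers (α ^ Nat.gcd ((Fintype.card E - 1) / (Fintype.card F - 1)) N) := by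
  have hF1 : 1 < Fintype.card F := Fintype.one_lt_card
  have hE1 : 1 < Fintype.card E := Fintype.one_lt_card
  have hord : orderOf α = Fintype.card E - 1 := by
    rw [orderOf_eq_card_of_forall_mem_zpowers hα, Nat.card_eq_fintype_card, Fintype.card_units]
  set m := (Fintype.card E - 1) / (Fintype.card F - 1) with hmdef
  have hmm : m * (Fintype.card F - 1) = Fintype.card E - 1 := Nat.div_mul_cancel hm
  have hm0 : m ≠ 0 := by rintro h; rw [h] at hmm; omega
  have hA : (Units.map (algebraMap F E : F →* E)).range = Subgroup.zpowers (α ^ m) := by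
    apply Subgroup.eq_of_le_of_card_ge
    · rintro _ ⟨y, rfl⟩
      obtain ⟨k, hk⟩ := Subgroup.mem_zpowers_iff.1 (hα (Units.map (algebraMap F E : F →* E) y))
      have h1 : (α ^ k) ^ (Fintype.card F - 1) = 1 := by
        rw [hk, ← map_pow, ← Fintype.card_units, pow_card_eq_one, map_one]
      rw [← zpow_natCast, ← zpow_mul, ← orderOf_dvd_iff_zpow_eq_one, hord, ← hmm] at h1
      push_cast at h1
      have h2 : (m : ℤ) ∣ k := Int.dvd_of_mul_dvd_mul_right (by omega) h1
      obtain ⟨l, rfl⟩ := h2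
      rw [← hk]
      exact Subgroup.mem_zpowers_iff.2 ⟨l, by rw [zpow_mul, zpow_natCast]⟩
    · rw [Nat.card_zpowers, orderOf_pow_of_dvd hm0 (by rw [hord, ← hmm]; exact dvd_mul_right _ _),
        hord, ← hmm, Nat.mul_div_cancel_left _ (Nat.pos_of_ne_zero hm0),
        Nat.card_congr (MonoidHom.ofInjective (Units.map_injective (f := (algebraMap F E : F →* E)) (algebraMap F E).injective)).symm.toEquiv,
        Nat.card_eq_fintype_card, Fintype.card_units]
  apply le_antisymm
  · rintro _ ⟨⟨y, x⟩, rfl⟩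
    simp only [auxHom, MonoidHom.coprod_apply]
    apply Subgroup.mul_mem
    · have : Units.map (algebraMap F E : F →* E) y ∈ Subgroup.zpowers (α ^ m) := hA ▸ ⟨y, rfl⟩
      refine (Subgroup.zpowers_le.2 ?_) this
      obtain ⟨c, hc⟩ := Nat.gcd_dvd_left m N
      exact Subgroup.mem_zpowers_iff.2 ⟨c, by rw [zpow_natCast, ← pow_mul, ← hc]⟩
    · obtain ⟨k, rfl⟩ := Subgroup.mem_zpowers_iff.1 (hα x)
      obtain ⟨c, hc⟩ := Nat.gcd_dvd_right m N
      refine Subgroup.mem_zpowers_iff.2 ⟨c * k, ?_⟩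
      rw [powMonoidHom_apply, ← zpow_natCast, ← zpow_natCast, ← zpow_mul, ← zpow_mul]
      congr 1
      conv_rhs => rw [hc]
      push_cast; ring
  · rw [Subgroup.zpowers_le]
    have h1 : (α ^ m) ^ (Nat.gcdA m N) ∈ (Units.map (algebraMap F E : F →* E)).range := by
      rw [hA]; exact Subgroup.mem_zpowers_iff.2 ⟨_, rfl⟩
    obtain ⟨y, hy⟩ := h1
    refine ⟨(y, α ^ (Nat.gcdB m N)), ?_⟩
    simp only [auxHom, MonoidHom.coprod_apply, powMonoidHom_apply]
    rw [hy, ← zpow_natCast, ← zpow_natCast, ← zpow_natCast, ← zpow_mul, ← zpow_mul, ← zpow_add,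
      Nat.gcd_eq_gcd_ab]
    congr 1; ring

lemma aux_sum_units {K : Type} [Field K] [Fintype K] (f : K → ℂ) :
    ∑ x, f x = f 0 + ∑ u : Kˣ, f u := by
  rw [Fintype.sum_eq_add_sum_compl (0 : K) f]
  congr 1
  symm
  refine Finset.sum_bij (fun u _ => (u : K)) (by simp) (fun a _ b _ h => Units.ext h) ?_ (by simp)
  intro b hb
  exact ⟨Units.mk0 b (by simpa using hb), by simp, rfl⟩

/-- With χ the canonical additive character of GF(r), N > 1 dividing r−1,
d = gcd((r−1)/(q−1), N), and Z(r,a) = #{x : Tr_{r/q}(ax^N) = 0}, one has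
q·Z(r,a) = q + r − 1 + (q−1)·d·∑_{z ∈ C₀^{(d,r)}} χ(az). -/
theorem character_sum_formula_for_Z {p q r N : ℕ} [Fact p.Prime]
    (F E : Type) [Field F] [Fintype F] [Field E] [Fintype E]
    [Algebra F E] [Algebra (ZMod p) E]
    (hF : Fintype.card F = q) (hE : Fintype.card E = r)
    (hq : ∃ a : ℕ, 0 < a ∧ q = p ^ a) (hr : ∃ t : ℕ, 0 < t ∧ r = q ^ t)
    (α : Eˣ) (hα : ∀ x : Eˣ, x ∈ Subgroup.zpowers α)
    (hN : 1 < N) (hdvd : N ∣ r - 1)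
    (a : E) :
    let χ : E → ℂ := fun x =>
      Complex.exp (2 * Real.pi * Complex.I * ((Algebra.trace (ZMod p) E x).val : ℂ) / p)
    let d : ℕ := Nat.gcd ((r - 1) / (q - 1)) N
    (q : ℂ) * {x : E | Algebra.trace F E (a * x ^ N) = 0}.ncard
      = q + r - 1 + (q - 1) * d *
          ∑ z ∈ {z : E | ∃ j : ℕ, z = ((α : E) ^ d) ^ j}.toFinset, χ (a * z) := by
  intro χ d
  have hF1 : 1 < Fintype.card F := Fintype.one_lt_card
  have hE1 : 1 < Fintype.card E := Fintype.one_lt_card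
  subst hF hE
  have hm : Fintype.card F - 1 ∣ Fintype.card E - 1 := by
    obtain ⟨t, -, ht⟩ := hr
    rw [ht]
    simpa using Nat.sub_dvd_pow_sub_pow (Fintype.card F) 1 t
  have hord : orderOf α = Fintype.card E - 1 := by
    rw [orderOf_eq_card_of_forall_mem_zpowers hα, Nat.card_eq_fintype_card, Fintype.card_units]
  have hχ : ∀ x, χ x = ZMod.stdAddChar (Algebra.trace (ZMod p) E x) := fun x => by
    rw [ZMod.stdAddChar_apply, ZMod.toCircle_apply]
  have hχ0 : χ 0 = 1 := by rw [hχ, map_zero, AddChar.map_zero_eq_one]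
  have hrange := aux_range (N := N) F E α hα hm
  change _ = Subgroup.zpowers (α ^ d) at hrange
  have hdN : d ∣ N := Nat.gcd_dvd_right _ _
  have hd0 : d ≠ 0 := fun h => by rw [h] at hdN; have := Nat.eq_zero_of_zero_dvd hdN; omega
  have hdr : d ∣ Fintype.card E - 1 := hdN.trans hdvd
  set S := Finset.univ.image (auxHom F E N) with hS
  have hSmem : ∀ z, z ∈ S ↔ z ∈ Subgroup.zpowers (α ^ d) := fun z => by
    rw [← hrange]; simp [hS, MonoidHom.mem_range]
  have hScard : d * S.card = Fintype.card E - 1 := by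
    have : S.card = orderOf (α ^ d) := by
      rw [← Nat.card_zpowers, ← hrange, ← SetLike.coe_sort_coe, MonoidHom.coe_range,
        Nat.card_coe_set_eq, ← Set.ncard_coe_finset]
      simp [hS]
    rw [this, orderOf_pow_of_dvd hd0 (hord ▸ hdr), hord, Nat.mul_div_cancel' hdr]
  have hsum : ∑ z ∈ {z : E | ∃ j : ℕ, z = ((α : E) ^ d) ^ j}.toFinset, χ (a * z)
      = ∑ z ∈ S, χ (a * (z : E)) := by
    symm
    refine Finset.sum_bij (fun u _ => (u : E)) ?_ (fun a _ b _ h => Units.ext h) ?_ (by simp)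
    · intro u hu
      rw [hSmem, ← mem_powers_iff_mem_zpowers] at hu
      obtain ⟨j, rfl⟩ := hu
      simp only [Set.mem_toFinset, Set.mem_ofPred_eq]
      exact ⟨j, by push_cast; rfl⟩
    · intro z hz
      simp only [Set.mem_toFinset, Set.mem_ofPred_eq] at hz
      obtain ⟨j, rfl⟩ := hz
      exact ⟨(α ^ d) ^ j, (hSmem _).2 (Subgroup.pow_mem _ (Subgroup.mem_zpowers _) _), by push_cast; rfl⟩
  rw [hsum]
  have key := aux_sum_hom (auxHom F E N) (fun z => χ (a * (z : E)))
  rw [← hS, Fintype.card_prod, Fintype.card_units, Fintype.card_units, Fintype.sum_prod_type] at key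
  have hqZ : (Fintype.card F : ℂ) * {x : E | Algebra.trace F E (a * x ^ N) = 0}.ncard
      = ∑ x : E, ∑ y : F, χ (algebraMap F E y * (a * x ^ N)) := by
    simp only [hχ, aux_char]
    rw [← Finset.sum_filter, Finset.sum_const, nsmul_eq_mul, mul_comm, ← Set.ncard_coe_finset]
    congr 3
    ext; simp
  have h2 : ∑ x : E, ∑ y : F, χ (algebraMap F E y * (a * x ^ N))
      = Fintype.card F + ((Fintype.card E : ℂ) - 1
        + ∑ y : Fˣ, ∑ x : Eˣ, χ (a * (auxHom F E N (y, x) : Eˣ))) := by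
    rw [aux_sum_units]
    congr 1
    · rw [zero_pow (by omega)]; simp [hχ0]
    · simp_rw [aux_sum_units (K := F)]
      rw [Finset.sum_add_distrib]
      congr 1
      · simp [hχ0, Fintype.card_units, Nat.cast_sub hE1.le]
      · rw [Finset.sum_comm]
        refine Finset.sum_congr rfl fun y _ => Finset.sum_congr rfl fun x _ => ?_
        congr 1
        simp [auxHom]; ring
  have hS0 : (S.card : ℂ) ≠ 0 := by
    have : S.card ≠ 0 := fun h => by rw [h] at hScard; omega
    exact_mod_cast this
  rw [hqZ, h2]
  have hc : ((Fintype.card E : ℂ) - 1) = d * S.card := by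
    rw [← Nat.cast_one, ← Nat.cast_sub hE1.le, ← hScard]; push_cast; ring
  rw [Nat.cast_mul, Nat.cast_sub hE1.le, Nat.cast_sub hF1.le, Nat.cast_one, hc] at key
  have key2 := mul_left_cancel₀ hS0 (key.trans (show _ = (S.card : ℂ) *
    (((Fintype.card F : ℂ) - 1) * d * ∑ z ∈ S, χ (a * (z : E))) by ring))
  rw [key2]
  ring
end

section
/- Let q = 2^s with s ≥ 2, let r = q⁴, and let α be a primitive element of GF(r). Define the Gaussian periods of order q+1 by η_i = ∑_{x ∈ C_i^{(q+1,r)}} (−1)^{Tr_{r/2}(x)} ∈ ℤ, where Tr_{r/2} is the trace from GF(r) to GF(2), for 0 ≤ i ≤ q. Then η_0 = −(q² − q + 1) and η_i = q − 1 for every i with 1 ≤ i ≤ q. -/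
open scoped Classical

namespace GP

lemma sum_range_mul_aux (a b : ℕ) (g : ℕ → ℤ) :
    ∑ n ∈ Finset.range (a * b), g n
      = ∑ i ∈ Finset.range a, ∑ j ∈ Finset.range b, g (i + a * j) := by
  induction b with
  | zero => simp
  | succ b ih =>
    rw [Nat.mul_succ, Finset.sum_range_add, ih, ← Finset.sum_add_distrib]
    refine Finset.sum_congr rfl fun i _ => ?_
    rw [Finset.sum_range_succ, add_comm i (a * b)]

section
variable {E : Type} [Field E] [Fintype E] [Algebra (ZMod 2) E]

noncomputable def chi (x : E) : ℤ := (-1 : ℤ) ^ (Algebra.trace (ZMod 2) E x).val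

lemma zmod_pow (a b : ZMod 2) : (-1 : ℤ) ^ (a + b).val = (-1) ^ a.val * (-1) ^ b.val := by
  revert a b; decide

lemma chi_add (x y : E) : chi (x + y) = chi x * chi y := by
  simp [chi, zmod_pow]

lemma chi_zero : chi (0 : E) = 1 := by simp [chi]

lemma chi_sq (x : E) : chi (x ^ 2) = chi x := by
  have h := Algebra.trace_eq_of_algEquiv (FiniteField.frobeniusAlgEquivOfAlgebraic (ZMod 2) E) x
  simp at h
  simp [chi, h]

lemma chi_pow (s : ℕ) (x : E) : chi (x ^ (2 ^ s)) = chi x := by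
  induction s with
  | zero => simp
  | succ s ih => rw [pow_succ, pow_mul, chi_sq, ih]

lemma exists_chi : ∃ x : E, chi x = -1 := by
  have := Algebra.trace_surjective (ZMod 2) E
  obtain ⟨x, hx⟩ := this 1
  exact ⟨x, by simp [chi, hx, ZMod.val_one]⟩

lemma sum_chi (b : E) (hb : b ≠ 0) : ∑ x : E, chi (b * x) = 0 := by
  obtain ⟨y, hy⟩ := exists_chi (E := E)
  have h : ∑ x : E, chi (b * x) = ∑ x : E, chi (b * (x + b⁻¹ * y)) :=
    (Equiv.sum_comp (Equiv.addRight (b⁻¹ * y)) (fun x => chi (b * x))).symm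
  have h2 : ∀ x, chi (b * (x + b⁻¹ * y)) = - chi (b * x) := by
    intro x
    rw [mul_add, mul_inv_cancel_left₀ hb, chi_add, hy]; ring
  simp only [h2, Finset.sum_neg_distrib] at h
  linarith

/-- square of the sum -/
lemma S_sq (s q : ℕ) (hq : q = 2 ^ s) (hE : Fintype.card E = q ^ 4) (a : E)
    (ha : ∀ u : E, u ≠ 0 → a * u + a ^ q * u ^ (q ^ 2) ≠ 0) :
    (∑ x : E, chi (a * x ^ (q + 1))) ^ 2 = (q : ℤ) ^ 4 := by
  have : CharP E 2 := charP_of_injective_algebraMap (algebraMap (ZMod 2) E).injective 2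
  have hadd : ∀ x y : E, (x + y) ^ q = x ^ q + y ^ q := by
    intro x y; rw [hq]; exact add_pow_char_pow x y 2 s
  have key : ∀ u x : E, chi (a * x ^ (q + 1)) * chi (a * (x + u) ^ (q + 1))
      = chi (a * u ^ (q + 1)) * chi ((a * u + a ^ q * u ^ (q ^ 2)) * x ^ q) := by
    intro u x
    have e1 : chi (a * u ^ q * x) = chi (a ^ q * u ^ (q ^ 2) * x ^ q) := by
      rw [← chi_pow s (a * u ^ q * x), ← hq]
      congr 1; ring
    rw [add_mul, chi_add (a * u * x ^ q), ← e1, ← chi_add, ← chi_add, ← chi_add]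
    congr 1
    rw [pow_succ (x + u), hadd]
    have h2 : a * x ^ (q + 1) + a * x ^ (q + 1) = 0 := CharTwo.add_self_eq_zero _
    linear_combination h2
  have hbij : Function.Bijective (fun x : E => x ^ q) := by
    have := bijective_iterateFrobenius E 2 s
    rw [hq]; exact this
  rw [sq, Finset.sum_mul_sum]
  have h1 : ∀ x : E, ∑ y : E, chi (a * x ^ (q + 1)) * chi (a * y ^ (q + 1))
      = ∑ u : E, chi (a * u ^ (q + 1)) * chi ((a * u + a ^ q * u ^ (q ^ 2)) * x ^ q) := by
    intro x
    rw [← Equiv.sum_comp (Equiv.addLeft x)]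
    exact Finset.sum_congr rfl fun u _ => key u x
  rw [Finset.sum_congr rfl fun x _ => h1 x, Finset.sum_comm]
  have hq0 : q ≠ 0 := by rw [hq]; positivity
  rw [Finset.sum_eq_single 0]
  · simp [chi_zero, hq0, hE]
  · intro u _ hu
    rw [← Finset.mul_sum, hbij.sum_comp (fun y => chi ((a * u + a ^ q * u ^ (q ^ 2)) * y)),
      sum_chi _ (ha u hu), mul_zero]
  · simp

end

end GP

open GP in
/-- For q = 2^s (s ≥ 2) and r = q⁴, the Gaussian periods of order q+1 on
GF(r), η_i = ∑_{x ∈ C_i^{(q+1,r)}} (−1)^{Tr_{r/2}(x)}, satisfy η₀ = −(q²−q+1) and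
η_i = q−1 for 1 ≤ i ≤ q. -/
theorem gaussian_periods_of_order_q_add_one {q s : ℕ} (hs : 2 ≤ s) (hq : q = 2 ^ s)
    (E : Type) [Field E] [Fintype E] [Algebra (ZMod 2) E]
    (hE : Fintype.card E = q ^ 4)
    (α : Eˣ) (hα : ∀ x : Eˣ, x ∈ Subgroup.zpowers α) :
    let Ci : ℕ → Set E := fun i => {x : E | ∃ j : ℕ, x = (α : E) ^ i * ((α : E) ^ (q + 1)) ^ j}
    let η : ℕ → ℤ := fun i =>
      ∑ x ∈ (Ci i).toFinset, (-1 : ℤ) ^ (Algebra.trace (ZMod 2) E x).val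
    η 0 = -((q : ℤ) ^ 2 - q + 1) ∧ ∀ i, 1 ≤ i → i ≤ q → η i = (q : ℤ) - 1 := by
  intro Ci η
  have : CharP E 2 := charP_of_injective_algebraMap (algebraMap (ZMod 2) E).injective 2
  have hq4 : 4 ≤ q := by
    rw [hq]; calc 4 = 2 ^ 2 := rfl
      _ ≤ 2 ^ s := Nat.pow_le_pow_right (by norm_num) hs
  obtain ⟨p, hp⟩ : ∃ p, q = p + 1 := ⟨q - 1, by omega⟩
  obtain ⟨M, hM⟩ : ∃ M, M = p * (q ^ 2 + 1) := ⟨_, rfl⟩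
  have hT : q ^ 4 = (q + 1) * M + 1 := by rw [hM, hp]; ring
  have hord : orderOf α = (q + 1) * M := by
    rw [orderOf_eq_card_of_forall_mem_zpowers hα, Nat.card_eq_fintype_card, Fintype.card_units, hE]
    omega
  have hMpos : 0 < M := by rw [hM]; have : 0 < p := by omega
                           positivity
  have hpow : ∀ m n : ℕ, (α : E) ^ m = (α : E) ^ n ↔ m ≡ n [MOD ((q + 1) * M)] := by
    intro m n
    rw [← hord, ← pow_eq_pow_iff_modEq, ← Units.val_pow_eq_pow_val, ← Units.val_pow_eq_pow_val,
      Units.val_inj]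
  have hex : ∀ x : E, x ≠ 0 → ∃ k, k < (q + 1) * M ∧ (α : E) ^ k = x := by
    intro x hx
    have h := hα (Units.mk0 x hx)
    rw [mem_zpowers_iff_mem_range_orderOf, hord] at h
    simp only [Finset.mem_image, Finset.mem_range] at h
    obtain ⟨k, hk, hk'⟩ := h
    exact ⟨k, hk, by rw [← Units.val_pow_eq_pow_val, hk']; rfl⟩
  have hsum : ∀ g : E → ℤ, ∑ x : E, g x = g 0 + ∑ n ∈ Finset.range ((q + 1) * M), g ((α : E) ^ n) := by
    intro g
    rw [← Finset.add_sum_erase _ _ (Finset.mem_univ (0 : E))]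
    congr 1
    symm
    refine Finset.sum_bij (fun n _ => (α : E) ^ n) ?_ ?_ ?_ ?_
    · intro n _; simp
    · intro m hm n hn h
      exact Nat.ModEq.eq_of_lt_of_lt ((hpow m n).1 h) (Finset.mem_range.1 hm) (Finset.mem_range.1 hn)
    · intro x hx
      obtain ⟨k, hk, hk'⟩ := hex x (Finset.ne_of_mem_erase hx)
      exact ⟨k, Finset.mem_range.2 hk, hk'⟩
    · intros; rfl
  have hη : ∀ i, η i = ∑ j ∈ Finset.range M, chi ((α : E) ^ (i + (q + 1) * j)) := by
    intro i
    symm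
    refine Finset.sum_bij (fun j _ => (α : E) ^ (i + (q + 1) * j)) ?_ ?_ ?_ ?_
    · intro j _
      simp only [Ci, Set.mem_toFinset, Set.mem_setOf_eq]
      exact ⟨j, by rw [pow_add, pow_mul]⟩
    · intro m hm n hn h
      have h := (hpow _ _).1 h
      have h := Nat.ModEq.add_left_cancel' i h
      have h := Nat.ModEq.mul_left_cancel' (by omega) h
      exact Nat.ModEq.eq_of_lt_of_lt h (Finset.mem_range.1 hm) (Finset.mem_range.1 hn)
    · intro x hx
      simp only [Ci, Set.mem_toFinset, Set.mem_setOf_eq] at hx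
      obtain ⟨j, rfl⟩ := hx
      refine ⟨j % M, Finset.mem_range.2 (Nat.mod_lt _ hMpos), ?_⟩
      rw [← pow_mul, ← pow_add, hpow]
      exact Nat.ModEq.add_left i (Nat.ModEq.mul_left' _ (Nat.mod_modEq j M))
    · intros; rfl
  have hS : ∀ i, ∑ x : E, chi ((α : E) ^ i * x ^ (q + 1)) = 1 + (q + 1) * η i := by
    intro i
    rw [hsum, hη, mul_comm (q + 1) M, sum_range_mul_aux, Finset.mul_sum]
    congr 1
    · simp [chi_zero]
    · refine Finset.sum_congr rfl fun j _ => ?_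
      have : ∀ k, chi ((α : E) ^ i * ((α : E) ^ (j + M * k)) ^ (q + 1))
          = chi ((α : E) ^ (i + (q + 1) * j)) := by
        intro k
        rw [← pow_mul, ← pow_add]
        congr 1
        rw [hpow]
        have : i + (j + M * k) * (q + 1) = i + (q + 1) * j + (q + 1) * M * k := by ring
        rw [this]
        simp [Nat.ModEq]
      simp [this]
  have hmain : ∀ i, 1 ≤ i → i ≤ q → η i = (q : ℤ) - 1 := by
    intro i hi1 hiq
    have h := S_sq s q hq hE ((α : E) ^ i) (by
      intro u hu h0
      obtain ⟨k, _, rfl⟩ := hex u hu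
      have h1 := CharTwo.add_eq_zero.1 h0
      rw [← pow_add, ← pow_mul, ← pow_mul, ← pow_add, hpow] at h1
      have e : i * q + k * q ^ 2 = (i + k) + p * (i + k * (q + 1)) := by rw [hp]; ring
      rw [e] at h1
      have h2 : (q + 1) * M ∣ p * (i + k * (q + 1)) := by
        have := (Nat.modEq_iff_dvd' (by omega)).1 h1
        simpa using this
      have e2 : (q + 1) * M = p * ((q + 1) * (q ^ 2 + 1)) := by rw [hM]; ring
      rw [e2] at h2
      have h3 := Nat.dvd_of_mul_dvd_mul_left (by omega) h2
      have h4 : q + 1 ∣ i + k * (q + 1) := (Dvd.intro _ rfl).trans h3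
      have h5 : q + 1 ∣ i := (Nat.dvd_add_left (Dvd.intro_left _ rfl)).1 h4
      have := Nat.le_of_dvd (by omega) h5
      omega)
    rw [hS] at h
    have hq4' : (4 : ℤ) ≤ q := by exact_mod_cast hq4
    have h' : ((q : ℤ) + 1) * ((η i - (q - 1)) * (1 + (q + 1) * η i + q ^ 2)) = 0 := by
      linear_combination h
    rcases mul_eq_zero.1 h' with h' | h'
    · omega
    rcases mul_eq_zero.1 h' with h' | h'
    · linarith
    · exfalso
      have : ((q : ℤ) + 1) * (η i + q - 1) = -2 := by linear_combination h'
      have hd : (q : ℤ) + 1 ∣ 2 := ⟨-(η i + q - 1), by linear_combination this⟩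
      have := Int.le_of_dvd (by norm_num) hd
      omega
  refine ⟨?_, hmain⟩
  have ht := sum_chi (E := E) 1 one_ne_zero
  simp only [one_mul] at ht
  rw [hsum, chi_zero, sum_range_mul_aux, Finset.sum_congr rfl fun i _ => (hη i).symm,
    Finset.sum_range_succ', Finset.sum_congr rfl fun i hi =>
      hmain (i + 1) (by omega) (by have := Finset.mem_range.1 hi; omega)] at ht
  simp only [Finset.sum_const, Finset.card_range, nsmul_eq_mul] at ht
  linear_combination ht
end
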